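/- There exist positive numerical constants ρ_r ≤ 1/10, ρ_s, and c such that the following holds. Under the observation model with incoherence parameter ν, if r ≤ ρ_r · n2 · ν⁻¹ · (log n1)⁻² and m ≤ ρ_s · n1 · n2, then with probability at least 1 − c·n1^{−10} over the random support Ω and the random signs, there exist matrices W, F, H ∈ ℝ^{n1×n2} such that, with λ = 1/√n1: UVᵀ + W = λ(sign(S0) + F + P_Ω H), W ∈ T⊥, ‖W‖ ≤ 1/2, P_Ω F = 0, ‖F‖_∞ ≤ 1/2, and ‖P_Ω H‖_F ≤ 1/(260√2). -/

import Mathlib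

open Matrix
open scoped BigOperators

/-- Frobenius norm of a real matrix. -/
noncomputable def frob {n1 n2 : ℕ} (A : Matrix (Fin n1) (Fin n2) ℝ) : ℝ :=
  Real.sqrt (∑ i, ∑ j, A i j ^ 2)

/-- Entrywise ℓ¹ norm. -/
noncomputable def l1norm {n1 n2 : ℕ} (A : Matrix (Fin n1) (Fin n2) ℝ) : ℝ :=
  ∑ i, ∑ j, |A i j|

/-- Trace inner product ⟨A,B⟩ = trace(AᵀB). -/
noncomputable def minner {n1 n2 : ℕ} (A B : Matrix (Fin n1) (Fin n2) ℝ) : ℝ :=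
  ∑ i, ∑ j, A i j * B i j

/-- Spectral norm (largest singular value), as the ℓ²→ℓ² operator norm. -/
noncomputable def spec {n1 n2 : ℕ} (A : Matrix (Fin n1) (Fin n2) ℝ) : ℝ :=
  sSup {c : ℝ | ∃ x : Fin n2 → ℝ, (∑ j, x j ^ 2) ≤ 1 ∧
    c = Real.sqrt (∑ i, (∑ j, A i j * x j) ^ 2)}

/-- Nuclear norm (sum of singular values), via duality with the spectral norm. -/
noncomputable def nuc {n1 n2 : ℕ} (A : Matrix (Fin n1) (Fin n2) ℝ) : ℝ :=
  sSup {c : ℝ | ∃ B : Matrix (Fin n1) (Fin n2) ℝ, spec B ≤ 1 ∧ c = minner A B}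

/-- P_Ω: the matrix agreeing with `M` on `Ω` and zero off `Ω`. -/
noncomputable def projS {n1 n2 : ℕ} (Ω : Finset (Fin n1 × Fin n2))
    (M : Matrix (Fin n1) (Fin n2) ℝ) : Matrix (Fin n1) (Fin n2) ℝ :=
  Matrix.of fun i j => if (i, j) ∈ Ω then M i j else 0

/-- Entrywise sign matrix. -/
noncomputable def signM {n1 n2 : ℕ} (A : Matrix (Fin n1) (Fin n2) ℝ) :
    Matrix (Fin n1) (Fin n2) ℝ :=
  Matrix.of fun i j => Real.sign (A i j)

/-- The tangent space T = {UQᵀ + RVᵀ}. -/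
def memT {n1 n2 r : ℕ} (U : Matrix (Fin n1) (Fin r) ℝ) (V : Matrix (Fin n2) (Fin r) ℝ)
    (M : Matrix (Fin n1) (Fin n2) ℝ) : Prop :=
  ∃ (Q : Matrix (Fin n2) (Fin r) ℝ) (R : Matrix (Fin n1) (Fin r) ℝ), M = U * Qᵀ + R * Vᵀ

/-- Membership in T⊥, the orthogonal complement of the tangent space. -/
def memTperp {n1 n2 r : ℕ} (U : Matrix (Fin n1) (Fin r) ℝ) (V : Matrix (Fin n2) (Fin r) ℝ)
    (W : Matrix (Fin n1) (Fin n2) ℝ) : Prop :=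
  ∀ M, memT U V M → minner W M = 0

/-- (L̂, Ŝ) is a global minimizer of the √PCP objective
`‖L‖_* + λ‖S‖₁ + μ‖L + S − D‖_F`. -/
def IsRootPCPMin {n1 n2 : ℕ} (D : Matrix (Fin n1) (Fin n2) ℝ) (lam mu : ℝ)
    (Lh Sh : Matrix (Fin n1) (Fin n2) ℝ) : Prop :=
  ∀ L S : Matrix (Fin n1) (Fin n2) ℝ,
    nuc Lh + lam * l1norm Sh + mu * frob (Lh + Sh - D) ≤
      nuc L + lam * l1norm S + mu * frob (L + S - D)

/-- (L̂, Ŝ) is a minimizer of StablePCP_c(δ):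
minimize `‖L‖_* + λ‖S‖₁` subject to `‖L + S − D‖_F ≤ δ`. -/
def IsStablePCPMin {n1 n2 : ℕ} (D : Matrix (Fin n1) (Fin n2) ℝ) (lam δ : ℝ)
    (Lh Sh : Matrix (Fin n1) (Fin n2) ℝ) : Prop :=
  frob (Lh + Sh - D) ≤ δ ∧
    ∀ L S : Matrix (Fin n1) (Fin n2) ℝ, frob (L + S - D) ≤ δ →
      nuc Lh + lam * l1norm Sh ≤ nuc L + lam * l1norm S

/-- Frobenius distance between pairs: ‖(L,S) − (L',S')‖_F. -/
noncomputable def pairDist {n1 n2 : ℕ} (L S L' S' : Matrix (Fin n1) (Fin n2) ℝ) : ℝ :=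
  Real.sqrt (frob (L - L') ^ 2 + frob (S - S') ^ 2)

/-- Sample space of the random sparsity model: a uniformly random support of
cardinality m together with iid uniform random signs. -/
abbrev SampleSpace (n1 n2 m : ℕ) : Type :=
  {Ω : Finset (Fin n1 × Fin n2) // Ω.card = m} × ((Fin n1 × Fin n2) → Bool)

/-- The sparse matrix S0 built from fixed magnitudes `a` and a random sample:
S0 vanishes off Ω and equals ±a on Ω according to the random signs. -/
noncomputable def sparseOf {n1 n2 m : ℕ} (a : Fin n1 × Fin n2 → ℝ) (ω : SampleSpace n1 n2 m) :
    Matrix (Fin n1) (Fin n2) ℝ :=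
  Matrix.of fun i j =>
    if (i, j) ∈ ω.1.1 then (if ω.2 (i, j) then a (i, j) else -a (i, j)) else 0

open Classical in
/-- Uniform probability of an event on a finite sample space. -/
noncomputable def unifProb {α : Type*} [Fintype α] (E : α → Prop) : ℝ :=
  ((Finset.univ.filter fun a => E a).card : ℝ) / (Fintype.card α : ℝ)

section FiniteProbability

variable {α β : Type*} [Fintype α] [Fintype β]

/-- Average of a real function over a finite type. -/
noncomputable def unifExp {α : Type*} [Fintype α] (f : α → ℝ) : ℝ :=
  (∑ a, f a) / (Fintype.card α : ℝ)

theorem unifProb_eq_unifExp (E : α → Prop) [DecidablePred E] :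
    unifProb E = unifExp (fun a => if E a then (1 : ℝ) else 0) := by
  classical
  unfold unifProb unifExp
  congr 1
  rw [Finset.sum_boole]
  congr!

theorem unifExp_mono {f g : α → ℝ} (h : ∀ a, f a ≤ g a) : unifExp f ≤ unifExp g :=
  div_le_div_of_nonneg_right (Finset.sum_le_sum fun a _ => h a) (Nat.cast_nonneg _)

theorem unifExp_const_le {c : ℝ} (hc : 0 ≤ c) : unifExp (fun _ : α => c) ≤ c := by
  unfold unifExp
  rw [Finset.sum_const, nsmul_eq_mul, Finset.card_univ]
  rcases Nat.eq_zero_or_pos (Fintype.card α) with h | h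
  · simp [h, hc]
  · have : (0 : ℝ) < Fintype.card α := by exact_mod_cast h
    rw [mul_div_cancel_left₀ _ this.ne']

theorem unifExp_const [Nonempty α] (c : ℝ) : unifExp (fun _ : α => c) = c := by
  unfold unifExp
  rw [Finset.sum_const, nsmul_eq_mul, Finset.card_univ]
  have : (0 : ℝ) < Fintype.card α := by exact_mod_cast Fintype.card_pos
  rw [mul_div_cancel_left₀ _ this.ne']

theorem unifExp_add (f g : α → ℝ) : unifExp (fun a => f a + g a) = unifExp f + unifExp g := by
  unfold unifExp
  rw [Finset.sum_add_distrib, add_div]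

theorem unifExp_const_mul (c : ℝ) (f : α → ℝ) :
    unifExp (fun a => c * f a) = c * unifExp f := by
  unfold unifExp
  rw [← Finset.mul_sum, mul_div_assoc]

theorem unifExp_sum {ι : Type*} (s : Finset ι) (f : ι → α → ℝ) :
    unifExp (fun a => ∑ i ∈ s, f i a) = ∑ i ∈ s, unifExp (f i) := by
  unfold unifExp
  rw [Finset.sum_comm, Finset.sum_div]

theorem unifExp_equiv (e : α ≃ β) (f : β → ℝ) : unifExp (fun a => f (e a)) = unifExp f := by
  unfold unifExp
  rw [Equiv.sum_comp e f, Fintype.card_congr e]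

theorem unifExp_prod (f : α × β → ℝ) :
    unifExp f = unifExp fun a => unifExp fun b => f (a, b) := by
  unfold unifExp
  rw [Fintype.sum_prod_type, Fintype.card_prod, Nat.cast_mul, ← Finset.sum_div, div_div, mul_comm]

theorem unifExp_pi {ι : Type*} [Fintype ι] [DecidableEq ι] (f : ι → α → ℝ) :
    unifExp (fun x : ι → α => ∏ i, f i (x i)) = ∏ i, unifExp (f i) := by
  unfold unifExp
  rw [Finset.prod_div_distrib, Finset.prod_univ_sum, Fintype.piFinset_univ]
  simp

theorem unifProb_nonneg (E : α → Prop) : 0 ≤ unifProb E := by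
  unfold unifProb; positivity

theorem unifProb_le_unifExp {E : α → Prop} {f : α → ℝ} (h0 : ∀ a, 0 ≤ f a)
    (h1 : ∀ a, E a → 1 ≤ f a) : unifProb E ≤ unifExp f := by
  classical
  rw [unifProb_eq_unifExp]
  refine unifExp_mono fun a => ?_
  split_ifs with h
  · exact h1 a h
  · exact h0 a

theorem unifProb_mono {E F : α → Prop} (h : ∀ a, E a → F a) : unifProb E ≤ unifProb F := by
  classical
  rw [unifProb_eq_unifExp F]
  refine unifProb_le_unifExp (fun a => by positivity) fun a ha => by simp [h a ha]

theorem unifProb_or_le (E F : α → Prop) :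
    unifProb (fun a => E a ∨ F a) ≤ unifProb E + unifProb F := by
  classical
  rw [unifProb_eq_unifExp E, unifProb_eq_unifExp F, ← unifExp_add]
  refine unifProb_le_unifExp (fun a => by positivity) fun a ha => ?_
  by_cases hE : E a <;> by_cases hF : F a <;> simp_all

theorem unifProb_exists_le {ι : Type*} (s : Finset ι) (E : ι → α → Prop) :
    unifProb (fun a => ∃ i ∈ s, E i a) ≤ ∑ i ∈ s, unifProb (E i) := by
  classical
  simp_rw [fun i => unifProb_eq_unifExp (E i)]
  rw [← unifExp_sum]
  refine unifProb_le_unifExp (fun a => Finset.sum_nonneg fun i _ => by positivity) ?_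
  rintro a ⟨i, hi, hE⟩
  refine le_trans ?_ (Finset.single_le_sum (f := fun i => if E i a then (1 : ℝ) else 0)
    (fun i _ => by positivity) hi)
  simp [hE]

theorem unifProb_exists_le_card_mul {ι : Type*} (s : Finset ι) (E : ι → α → Prop) {δ : ℝ}
    (h : ∀ i ∈ s, unifProb (E i) ≤ δ) :
    unifProb (fun a => ∃ i ∈ s, E i a) ≤ s.card * δ := by
  refine (unifProb_exists_le s E).trans ((Finset.sum_le_sum h).trans ?_)
  rw [Finset.sum_const, nsmul_eq_mul]

theorem unifProb_not [Nonempty α] (E : α → Prop) :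
    unifProb E = 1 - unifProb (fun a => ¬ E a) := by
  classical
  have : unifProb E + unifProb (fun a => ¬ E a) = 1 := by
    rw [unifProb_eq_unifExp E, unifProb_eq_unifExp (fun a => ¬ E a), ← unifExp_add]
    refine Eq.trans ?_ (unifExp_const (α := α) 1)
    congr 1
    funext a
    by_cases h : E a <;> simp [h]
  linarith

theorem unifProb_equiv (e : α ≃ β) (E : β → Prop) :
    unifProb (fun a => E (e a)) = unifProb E := by
  classical
  rw [unifProb_eq_unifExp, unifProb_eq_unifExp, unifExp_equiv e fun b => if E b then (1 : ℝ) else 0]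

theorem unifProb_prod (E : α × β → Prop) :
    unifProb E = unifExp fun a => unifProb fun b => E (a, b) := by
  classical
  simp_rw [unifProb_eq_unifExp]
  rw [unifExp_prod]

/-- An event on a product, split according to whether the first coordinate is exceptional. -/
theorem unifProb_prod_le {E : α × β → Prop} {B : α → Prop} {δ : ℝ} (hδ : 0 ≤ δ)
    (h : ∀ a, ¬ B a → unifProb (fun b => E (a, b)) ≤ δ) :
    unifProb E ≤ unifProb B + δ := by
  classical
  rw [unifProb_prod, unifProb_eq_unifExp B]
  refine le_trans (unifExp_mono (g := fun a => (if B a then (1 : ℝ) else 0) + δ) fun a => ?_) ?_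
  · by_cases hB : B a
    · simp only [hB, if_true]
      have : unifProb (fun b => E (a, b)) ≤ 1 := by
        refine (unifProb_le_unifExp (f := fun _ => 1) (fun _ => zero_le_one) fun _ _ => le_rfl).trans
          (unifExp_const_le zero_le_one)
      linarith
    · simpa [hB] using h a hB
  · rw [unifExp_add]
    have := unifExp_const_le (α := α) hδ
    linarith

/-- Exponential Markov inequality. -/
theorem unifProb_ge_le_exp (X : α → ℝ) {s θ b : ℝ} (hθ : 0 ≤ θ)
    (h : unifExp (fun a => Real.exp (θ * X a)) ≤ Real.exp b) :
    unifProb (fun a => s ≤ X a) ≤ Real.exp (b - θ * s) := by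
  have h1 : unifProb (fun a => s ≤ X a) ≤
      unifExp fun a => Real.exp (-(θ * s)) * Real.exp (θ * X a) := by
    refine unifProb_le_unifExp (fun a => by positivity) fun a ha => ?_
    rw [← Real.exp_add]
    refine Real.one_le_exp ?_
    nlinarith [mul_le_mul_of_nonneg_left ha hθ]
  refine h1.trans ?_
  rw [unifExp_const_mul, sub_eq_add_neg, Real.exp_add, mul_comm]
  gcongr

end FiniteProbability

section MomentGeneratingFunctions

variable {ι : Type*} [Fintype ι] [DecidableEq ι]

/-- The sign `±1` encoded by a boolean. -/
def boolSign (b : Bool) : ℝ := if b then 1 else -1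

theorem unifExp_exp_boolSign (c : ℝ) :
    unifExp (fun b => Real.exp (boolSign b * c)) = Real.cosh c := by
  unfold unifExp boolSign
  rw [Real.cosh_eq]
  simp

theorem unifExp_exp_rademacher (c : ι → ℝ) :
    unifExp (fun ε : ι → Bool => Real.exp (∑ i, boolSign (ε i) * c i)) = ∏ i, Real.cosh (c i) := by
  simp_rw [Real.exp_sum]
  rw [unifExp_pi fun i b => Real.exp (boolSign b * c i)]
  simp_rw [unifExp_exp_boolSign]

/-- Hoeffding's inequality for Rademacher sums. -/
theorem rademacher_tail (c : ι → ℝ) {s v : ℝ} (hv : 0 < v) (hs : 0 ≤ s)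
    (hc : ∑ i, c i ^ 2 ≤ v) :
    unifProb (fun ε : ι → Bool => s ≤ ∑ i, boolSign (ε i) * c i) ≤
      Real.exp (-(s ^ 2 / (2 * v))) := by
  have key := unifProb_ge_le_exp (fun ε : ι → Bool => ∑ i, boolSign (ε i) * c i)
    (s := s) (θ := s / v) (b := (s / v) ^ 2 * v / 2) (by positivity) ?_
  · refine key.trans (Real.exp_le_exp.mpr (le_of_eq ?_))
    field_simp
    ring
  · simp_rw [Finset.mul_sum, mul_left_comm (s / v)]
    rw [unifExp_exp_rademacher]
    refine (Finset.prod_le_prod (fun i _ => (Real.cosh_pos _).le)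
      fun i _ => Real.cosh_le_exp_half_sq _).trans ?_
    rw [← Real.exp_sum, Real.exp_le_exp]
    simp_rw [mul_pow]
    rw [← Finset.sum_div, ← Finset.mul_sum]
    gcongr

/-- The centred selector: `Q - 1` with probability `1 / Q` and `-1` otherwise. -/
def selector (Q : ℕ) (x : Fin Q) : ℝ := (if x.val = 0 then (Q : ℝ) else 0) - 1

theorem abs_selector_le {Q : ℕ} (x : Fin Q) : |selector Q x| ≤ Q := by
  have hQ : (1 : ℝ) ≤ Q := by exact_mod_cast (Nat.succ_le_of_lt (Fin.pos x))
  unfold selector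
  split_ifs <;> rw [abs_le] <;> constructor <;> linarith

theorem sum_ite_val_eq_zero {Q : ℕ} (hQ : 0 < Q) (c : ℝ) :
    ∑ x : Fin Q, (if x.val = 0 then c else 0) = c := by
  rw [Finset.sum_eq_single (⟨0, hQ⟩ : Fin Q)]
  · simp
  · intro b _ hb
    rw [if_neg]
    intro h
    exact hb (Fin.ext h)
  · simp

theorem unifExp_selector {Q : ℕ} (hQ : 0 < Q) : unifExp (selector Q) = 0 := by
  unfold unifExp selector
  rw [Finset.sum_sub_distrib, sum_ite_val_eq_zero hQ]
  simp

theorem unifExp_selector_sq_le {Q : ℕ} (hQ : 0 < Q) :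
    unifExp (fun x => selector Q x ^ 2) ≤ Q := by
  have hQ' : (1 : ℝ) ≤ Q := by exact_mod_cast hQ
  have h : ∀ x : Fin Q, selector Q x ^ 2 = (if x.val = 0 then (Q : ℝ) ^ 2 - 2 * Q else 0) + 1 := by
    intro x
    unfold selector
    split_ifs <;> ring
  unfold unifExp
  simp_rw [h]
  rw [Finset.sum_add_distrib, sum_ite_val_eq_zero hQ]
  simp only [Finset.sum_const, Finset.card_univ, Fintype.card_fin, nsmul_eq_mul, mul_one]
  rw [div_le_iff₀ (by linarith)]
  nlinarith

theorem unifExp_exp_selector_le {Q : ℕ} (hQ : 0 < Q) (c : ℝ) :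
    unifExp (fun x => Real.exp (selector Q x * c)) ≤ Real.exp (Q ^ 2 * c ^ 2 / 2) := by
  have hQ' : (0 : ℝ) < Q := by exact_mod_cast hQ
  have : Nonempty (Fin Q) := ⟨⟨0, hQ⟩⟩
  refine le_trans (unifExp_mono (g := fun x => Real.cosh (Q * c) +
    (Real.sinh (Q * c) / Q) * selector Q x) fun x => ?_) ?_
  · have h := Real.exp_mul_le_cosh_add_mul_sinh (t := selector Q x / Q) ?_ (Q * c)
    · refine le_of_eq_of_le ?_ (h.trans (le_of_eq ?_))
      · congr 1; field_simp
      · ring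
    · rw [abs_div, abs_of_pos hQ', div_le_one hQ']
      exact abs_selector_le x
  · rw [unifExp_add, unifExp_const_mul, unifExp_selector hQ, unifExp_const, mul_zero, add_zero]
    refine (Real.cosh_le_exp_half_sq _).trans (le_of_eq ?_)
    rw [mul_pow]

theorem unifExp_exp_selector_le_of_small {Q : ℕ} (hQ : 0 < Q) {c : ℝ} (hc : Q * |c| ≤ 1) :
    unifExp (fun x => Real.exp (selector Q x * c)) ≤ Real.exp (Q * c ^ 2) := by
  have : Nonempty (Fin Q) := ⟨⟨0, hQ⟩⟩
  refine le_trans (unifExp_mono (g := fun x => (1 + c * selector Q x) +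
    c ^ 2 * selector Q x ^ 2) fun x => ?_) ?_
  · have h1 : |selector Q x * c| ≤ 1 := by
      rw [abs_mul]
      exact (mul_le_mul_of_nonneg_right (abs_selector_le x) (abs_nonneg _)).trans hc
    have h2 := (abs_le.mp (Real.abs_exp_sub_one_sub_id_le h1)).2
    nlinarith
  · rw [unifExp_add, unifExp_add, unifExp_const_mul, unifExp_const_mul, unifExp_selector hQ,
      unifExp_const, mul_zero, add_zero]
    have := mul_le_mul_of_nonneg_left (unifExp_selector_sq_le hQ) (sq_nonneg c)
    have := Real.add_one_le_exp (Q * c ^ 2)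
    linarith

theorem selector_tail {Q : ℕ} (hQ : 0 < Q) (c : ι → ℝ) {s v : ℝ} (hv : 0 < v) (hs : 0 ≤ s)
    (hc : ∑ i, c i ^ 2 ≤ v) :
    unifProb (fun γ : ι → Fin Q => s ≤ ∑ i, selector Q (γ i) * c i) ≤
      Real.exp (-(s ^ 2 / (2 * (Q ^ 2 * v)))) := by
  have hQ' : (0 : ℝ) < Q := by exact_mod_cast hQ
  set θ := s / (Q ^ 2 * v) with hθ
  have key := unifProb_ge_le_exp (fun γ : ι → Fin Q => ∑ i, selector Q (γ i) * c i)
    (s := s) (θ := θ) (b := θ ^ 2 * (Q ^ 2 * v) / 2) (by positivity) ?_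
  · refine key.trans (Real.exp_le_exp.mpr (le_of_eq ?_))
    rw [hθ]
    field_simp
    ring
  · simp_rw [Finset.mul_sum, mul_left_comm θ, Real.exp_sum]
    rw [unifExp_pi fun i x => Real.exp (selector Q x * (θ * c i))]
    refine (Finset.prod_le_prod (fun i _ => ?_) fun i _ => unifExp_exp_selector_le hQ _).trans ?_
    · exact div_nonneg (Finset.sum_nonneg fun _ _ => (Real.exp_pos _).le) (Nat.cast_nonneg _)
    rw [← Real.exp_sum, Real.exp_le_exp]
    have : ∑ i, (Q : ℝ) ^ 2 * (θ * c i) ^ 2 / 2 = θ ^ 2 * (Q ^ 2 * ∑ i, c i ^ 2) / 2 := by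
      rw [Finset.mul_sum, Finset.mul_sum, Finset.sum_div]
      exact Finset.sum_congr rfl fun i _ => by ring
    rw [this]
    gcongr

/-- Bernstein-type bound for centred selectors with small coefficients. -/
theorem selector_tail_of_small {Q : ℕ} (hQ : 0 < Q) (c : ι → ℝ) {b s : ℝ} (hb : 0 < b)
    (hs : 0 ≤ s) (hs1 : s ≤ 1) (hc : ∑ i, c i ^ 2 ≤ b) (hc' : ∀ i, |c i| ≤ b) :
    unifProb (fun γ : ι → Fin Q => s ≤ ∑ i, selector Q (γ i) * c i) ≤
      Real.exp (-(s ^ 2 / (4 * (Q * b)))) := by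
  have hQ' : (0 : ℝ) < Q := by exact_mod_cast hQ
  set θ := s / (2 * (Q * b)) with hθ
  have hθ0 : 0 ≤ θ := by positivity
  have key := unifProb_ge_le_exp (fun γ : ι → Fin Q => ∑ i, selector Q (γ i) * c i)
    (s := s) (θ := θ) (b := θ ^ 2 * (Q * b)) (by positivity) ?_
  · refine key.trans (Real.exp_le_exp.mpr (le_of_eq ?_))
    rw [hθ]
    field_simp
    ring
  · simp_rw [Finset.mul_sum, mul_left_comm θ, Real.exp_sum]
    rw [unifExp_pi fun i x => Real.exp (selector Q x * (θ * c i))]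
    refine (Finset.prod_le_prod (fun i _ => ?_) fun i _ =>
      unifExp_exp_selector_le_of_small hQ ?_).trans ?_
    · exact div_nonneg (Finset.sum_nonneg fun _ _ => (Real.exp_pos _).le) (Nat.cast_nonneg _)
    · rw [abs_mul, abs_of_nonneg hθ0]
      calc Q * (θ * |c i|) ≤ Q * (θ * b) := by gcongr; exact hc' i
        _ = s / 2 := by rw [hθ]; field_simp
        _ ≤ 1 := by linarith
    rw [← Real.exp_sum, Real.exp_le_exp]
    have : ∑ i, (Q : ℝ) * (θ * c i) ^ 2 = θ ^ 2 * (Q * ∑ i, c i ^ 2) := by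
      rw [Finset.mul_sum, Finset.mul_sum]
      exact Finset.sum_congr rfl fun i _ => by ring
    rw [this]
    gcongr

end MomentGeneratingFunctions

section RandomSubsets

variable {ι : Type*} [Fintype ι] [DecidableEq ι]

theorem descFactorial_mul_pow_le {m N : ℕ} (h : m ≤ N) (a : ℕ) :
    m.descFactorial a * N ^ a ≤ N.descFactorial a * m ^ a := by
  induction a with
  | zero => simp
  | succ k ih =>
    rw [Nat.descFactorial_succ, Nat.descFactorial_succ, pow_succ, pow_succ]
    have h1 : (m - k) * N ≤ (N - k) * m := by
      rw [Nat.sub_mul, Nat.sub_mul, mul_comm m N]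
      exact Nat.sub_le_sub_left (Nat.mul_le_mul_left k h) _
    calc (m - k) * m.descFactorial k * (N ^ k * N)
        = ((m - k) * N) * (m.descFactorial k * N ^ k) := by ring
      _ ≤ ((N - k) * m) * (N.descFactorial k * m ^ k) := Nat.mul_le_mul h1 ih
      _ = _ := by ring

theorem card_filter_superset_le (A : Finset ι) (m : ℕ) :
    (Finset.univ.filter fun Ω : {Ω : Finset ι // Ω.card = m} => A ⊆ Ω.1).card ≤
      (Fintype.card ι - A.card).choose (m - A.card) := by
  have : (Finset.powersetCard (m - A.card) (Finset.univ \ A)).card =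
      (Fintype.card ι - A.card).choose (m - A.card) := by
    rw [Finset.card_powersetCard, Finset.card_sdiff_of_subset (Finset.subset_univ A),
      Finset.card_univ]
  rw [← this]
  refine Finset.card_le_card_of_injOn (fun Ω => Ω.1 \ A) ?_ ?_
  · intro Ω hΩ
    simp only [Finset.coe_filter, Finset.mem_univ, true_and, Set.mem_ofPred_eq] at hΩ
    rw [Finset.mem_coe]
    refine Finset.mem_powersetCard.mpr ⟨Finset.sdiff_subset_sdiff (Finset.subset_univ _) le_rfl, ?_⟩
    rw [Finset.card_sdiff_of_subset hΩ, Ω.2]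
  · intro Ω hΩ Ω' hΩ' h
    simp only [Finset.coe_filter, Finset.mem_univ, true_and, Set.mem_ofPred_eq] at hΩ hΩ'
    apply Subtype.ext
    have h' : Ω.1 \ A = Ω'.1 \ A := h
    rw [← Finset.sdiff_union_of_subset hΩ, h', Finset.sdiff_union_of_subset hΩ']

theorem unifProb_subset_le (A : Finset ι) {m : ℕ} {ρ : ℝ} (hρ : 0 ≤ ρ)
    (hN : m ≤ Fintype.card ι) (hm : (m : ℝ) ≤ ρ * Fintype.card ι) :
    unifProb (fun Ω : {Ω : Finset ι // Ω.card = m} => A ⊆ Ω.1) ≤ ρ ^ A.card := by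
  classical
  rcases lt_or_ge m A.card with hlt | hA
  · have : unifProb (fun Ω : {Ω : Finset ι // Ω.card = m} => A ⊆ Ω.1) = 0 := by
      refine le_antisymm ?_ (unifProb_nonneg _)
      refine (unifProb_le_unifExp (f := fun _ => 0) (fun _ => le_rfl) fun Ω h => ?_).trans
        (unifExp_const_le le_rfl)
      have := Finset.card_le_card h
      rw [Ω.2] at this
      omega
    rw [this]; positivity
  unfold unifProb
  have hcard : Fintype.card {Ω : Finset ι // Ω.card = m} = (Fintype.card ι).choose m := by
    rw [Fintype.card_finset_len]
  rw [hcard]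
  set N := Fintype.card ι with hNdef
  have hpos : (0 : ℝ) < N.choose m := by exact_mod_cast Nat.choose_pos hN
  rw [div_le_iff₀ hpos]
  have h0 : ((Finset.univ.filter fun Ω : {Ω : Finset ι // Ω.card = m} => A ⊆ Ω.1).card : ℝ) ≤
      (N - A.card).choose (m - A.card) := by
    have := card_filter_superset_le A m
    exact_mod_cast this
  refine le_trans (le_of_eq (by congr!)) (h0.trans ?_)
  set a := A.card with ha
  have h1 : N.choose m * m.choose a = N.choose a * (N - a).choose (m - a) :=
    Nat.choose_mul hA
  have h2 := descFactorial_mul_pow_le hN a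
  rw [Nat.descFactorial_eq_factorial_mul_choose, Nat.descFactorial_eq_factorial_mul_choose] at h2
  have h3 : m.choose a * N ^ a ≤ N.choose a * m ^ a := by
    have : a.factorial * (m.choose a * N ^ a) ≤ a.factorial * (N.choose a * m ^ a) := by
      nlinarith
    exact Nat.le_of_mul_le_mul_left this (Nat.factorial_pos a)
  have h1' : (N.choose m : ℝ) * m.choose a = N.choose a * (N - a).choose (m - a) := by
    exact_mod_cast h1
  have h3' : (m.choose a : ℝ) * N ^ a ≤ N.choose a * m ^ a := by exact_mod_cast h3
  have hNa : (0 : ℝ) < N.choose a := by exact_mod_cast Nat.choose_pos (hA.trans hN)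
  rcases Nat.eq_zero_or_pos N with hN0 | hN0
  · have hm0 : m = 0 := by omega
    have ha0 : a = 0 := by omega
    simp [hm0, ha0]
  have hNpos : (0 : ℝ) < (N : ℝ) ^ a := by positivity
  have h4 : (m : ℝ) ^ a ≤ ρ ^ a * (N : ℝ) ^ a := by
    rw [← mul_pow]
    gcongr
  have h5 : (m.choose a : ℝ) ≤ ρ ^ a * N.choose a := by
    refine le_of_mul_le_mul_right ?_ hNpos
    nlinarith
  refine le_of_mul_le_mul_left ?_ hNa
  rw [← h1']
  nlinarith

/-- Products over a uniformly random `m`-subset are dominated by the independent model. -/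
theorem unifExp_prod_subset_le (c : ι → ℝ) (hc : ∀ i, 1 ≤ c i) {m : ℕ} {ρ : ℝ} (hρ : 0 ≤ ρ)
    (hN : m ≤ Fintype.card ι) (hm : (m : ℝ) ≤ ρ * Fintype.card ι) :
    unifExp (fun Ω : {Ω : Finset ι // Ω.card = m} => ∏ i ∈ Ω.1, c i) ≤
      ∏ i, (1 + ρ * (c i - 1)) := by
  classical
  have h : ∀ Ω : {Ω : Finset ι // Ω.card = m}, ∏ i ∈ Ω.1, c i =
      ∑ A : Finset ι, (∏ i ∈ A, (c i - 1)) * (if A ⊆ Ω.1 then 1 else 0) := by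
    intro Ω
    have : ∏ i ∈ Ω.1, c i = ∏ i ∈ Ω.1, (1 + (c i - 1)) :=
      Finset.prod_congr rfl fun i _ => by ring
    rw [this, Finset.prod_one_add]
    simp_rw [mul_ite, mul_one, mul_zero]
    rw [← Finset.sum_filter]
    refine Finset.sum_congr ?_ fun _ _ => rfl
    ext A; simp
  simp_rw [h]
  rw [unifExp_sum, Finset.prod_one_add, Finset.powerset_univ]
  refine Finset.sum_le_sum fun A _ => ?_
  rw [unifExp_const_mul, ← unifProb_eq_unifExp, Finset.prod_mul_distrib, Finset.prod_const,
    mul_comm]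
  exact mul_le_mul_of_nonneg_right (unifProb_subset_le A hρ hN hm)
    (Finset.prod_nonneg fun i _ => by linarith [hc i])

theorem one_add_mul_cosh_sub_one_le {κ ρ : ℝ} (hκ : 0 < κ) (hρ1 : ρ ≤ 1)
    (hρ : ρ ≤ κ * Real.exp (-(1 / (2 * κ ^ 2)))) (t : ℝ) :
    1 + ρ * (Real.cosh t - 1) ≤ Real.exp (κ * t ^ 2) := by
  have hcosh := Real.one_le_cosh t
  rcases le_or_gt (κ * |t|) 1 with h | h
  · have ht : t ^ 2 / 2 ≤ 1 / (2 * κ ^ 2) := by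
      rw [div_le_div_iff₀ (by norm_num) (by positivity)]
      have : (κ * |t|) ^ 2 ≤ 1 := pow_le_one₀ (by positivity) h
      rw [mul_pow, sq_abs] at this
      nlinarith
    have h1 : Real.cosh t - 1 ≤ t ^ 2 / 2 * Real.exp (1 / (2 * κ ^ 2)) := by
      have e1 := Real.cosh_le_exp_half_sq t
      have e2 := Real.add_one_le_exp (-(t ^ 2 / 2))
      have e3 : Real.exp (-(t ^ 2 / 2)) * Real.exp (t ^ 2 / 2) = 1 := by
        rw [← Real.exp_add]; simp
      have e4 := Real.exp_le_exp.mpr ht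
      have e5 := Real.exp_pos (t ^ 2 / 2)
      have : Real.cosh t - 1 ≤ t ^ 2 / 2 * Real.exp (t ^ 2 / 2) := by nlinarith
      exact this.trans (by gcongr)
    have h2 : ρ * (Real.cosh t - 1) ≤ κ * t ^ 2 := by
      calc ρ * (Real.cosh t - 1)
          ≤ (κ * Real.exp (-(1 / (2 * κ ^ 2)))) * (t ^ 2 / 2 * Real.exp (1 / (2 * κ ^ 2))) := by
            apply mul_le_mul hρ h1 (by linarith) (by positivity)
        _ = κ * (t ^ 2 / 2) * (Real.exp (-(1 / (2 * κ ^ 2))) * Real.exp (1 / (2 * κ ^ 2))) := by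
            ring
        _ = κ * (t ^ 2 / 2) := by rw [← Real.exp_add]; simp
        _ ≤ κ * t ^ 2 := by gcongr; nlinarith [sq_nonneg t]
    linarith [Real.add_one_le_exp (κ * t ^ 2)]
  · have h1 : Real.cosh t ≤ Real.exp |t| := by
      rw [← Real.cosh_abs, Real.cosh_eq]
      have : Real.exp (-|t|) ≤ Real.exp |t| := Real.exp_le_exp.mpr (by linarith [abs_nonneg t])
      linarith
    have h2 : |t| ≤ κ * t ^ 2 := by
      rw [← sq_abs]
      nlinarith [abs_nonneg t]
    have h3 := Real.exp_le_exp.mpr h2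
    nlinarith

/-- Exponential moments of a Rademacher sum restricted to a uniformly random `m`-subset. -/
theorem unifExp_exp_sparse_rademacher_le (c : ι → ℝ) {m : ℕ} {κ ρ : ℝ} (hκ : 0 < κ)
    (hρ0 : 0 ≤ ρ) (hρ1 : ρ ≤ 1) (hρ : ρ ≤ κ * Real.exp (-(1 / (2 * κ ^ 2))))
    (hN : m ≤ Fintype.card ι) (hm : (m : ℝ) ≤ ρ * Fintype.card ι) :
    unifExp (fun ω : {Ω : Finset ι // Ω.card = m} × (ι → Bool) =>
      Real.exp (∑ i, boolSign (ω.2 i) * (if i ∈ ω.1.1 then c i else 0))) ≤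
      Real.exp (κ * ∑ i, c i ^ 2) := by
  rw [unifExp_prod]
  simp only
  have h : ∀ Ω : {Ω : Finset ι // Ω.card = m},
      unifExp (fun ε : ι → Bool => Real.exp (∑ i, boolSign (ε i) * (if i ∈ Ω.1 then c i else 0))) =
      ∏ i ∈ Ω.1, Real.cosh (c i) := by
    intro Ω
    rw [unifExp_exp_rademacher fun i => if i ∈ Ω.1 then c i else 0]
    rw [← Finset.prod_subset (Finset.subset_univ Ω.1)]
    · exact Finset.prod_congr rfl fun i hi => by rw [if_pos hi]
    · intro i _ hi
      rw [if_neg hi, Real.cosh_zero]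
  simp_rw [h]
  refine (unifExp_prod_subset_le (fun i => Real.cosh (c i)) (fun i => Real.one_le_cosh _) hρ0 hN
    hm).trans ?_
  rw [Finset.mul_sum, Real.exp_sum]
  refine Finset.prod_le_prod (fun i _ => ?_) fun i _ =>
    one_add_mul_cosh_sub_one_le hκ hρ1 hρ _
  have := Real.one_le_cosh (c i)
  nlinarith

end RandomSubsets

section SpectralNorm

variable {n1 n2 : ℕ}

/-- Euclidean norm of a plain vector. -/
noncomputable def l2 {n : ℕ} (v : Fin n → ℝ) : ℝ := Real.sqrt (∑ i, v i ^ 2)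

theorem l2_eq_norm {n : ℕ} (v : Fin n → ℝ) : l2 v = ‖WithLp.toLp 2 v‖ := by
  rw [EuclideanSpace.norm_eq]
  simp [l2]

theorem l2_add_le {n : ℕ} (v w : Fin n → ℝ) : l2 (v + w) ≤ l2 v + l2 w := by
  simp only [l2_eq_norm, WithLp.toLp_add]
  exact norm_add_le _ _

theorem l2_smul {n : ℕ} (c : ℝ) (v : Fin n → ℝ) : l2 (c • v) = |c| * l2 v := by
  simp only [l2_eq_norm, WithLp.toLp_smul, norm_smul, Real.norm_eq_abs]

theorem spec_set_eq (A : Matrix (Fin n1) (Fin n2) ℝ) :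
    spec A = sSup {c : ℝ | ∃ x : Fin n2 → ℝ, (∑ j, x j ^ 2) ≤ 1 ∧ c = l2 (A *ᵥ x)} := rfl

theorem spec_le {A : Matrix (Fin n1) (Fin n2) ℝ} {s : ℝ}
    (h : ∀ x : Fin n2 → ℝ, ∑ j, x j ^ 2 ≤ 1 → l2 (A *ᵥ x) ≤ s) : spec A ≤ s := by
  rw [spec_set_eq]
  refine csSup_le ⟨_, 0, by simp, rfl⟩ ?_
  rintro c ⟨x, hx, rfl⟩
  exact h x hx

theorem l2_mulVec_le_spec (A : Matrix (Fin n1) (Fin n2) ℝ) {x : Fin n2 → ℝ}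
    (hx : ∑ j, x j ^ 2 ≤ 1) : l2 (A *ᵥ x) ≤ spec A := by
  rw [spec_set_eq]
  refine le_csSup ⟨Real.sqrt (∑ i, ∑ j, A i j ^ 2), ?_⟩ ⟨x, hx, rfl⟩
  rintro c ⟨y, hy, rfl⟩
  refine Real.sqrt_le_sqrt (Finset.sum_le_sum fun i _ => ?_)
  refine (Finset.sum_mul_sq_le_sq_mul_sq Finset.univ (A i) y).trans ?_
  have : 0 ≤ ∑ j, A i j ^ 2 := Finset.sum_nonneg fun _ _ => sq_nonneg _
  nlinarith

theorem spec_add_le (A B : Matrix (Fin n1) (Fin n2) ℝ) : spec (A + B) ≤ spec A + spec B := by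
  refine spec_le fun x hx => ?_
  rw [Matrix.add_mulVec]
  exact (l2_add_le _ _).trans (add_le_add (l2_mulVec_le_spec A hx) (l2_mulVec_le_spec B hx))

theorem spec_smul_le (c : ℝ) (A : Matrix (Fin n1) (Fin n2) ℝ) : spec (c • A) ≤ |c| * spec A := by
  refine spec_le fun x hx => ?_
  rw [Matrix.smul_mulVec, l2_smul]
  exact mul_le_mul_of_nonneg_left (l2_mulVec_le_spec A hx) (abs_nonneg c)

theorem spec_zero_le : spec (0 : Matrix (Fin n1) (Fin n2) ℝ) ≤ 0 :=
  spec_le fun x _ => by simp [l2]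

theorem spec_mul_mul_le (M : Matrix (Fin n1) (Fin n2) ℝ) {P : Matrix (Fin n1) (Fin n1) ℝ}
    {R : Matrix (Fin n2) (Fin n2) ℝ} (hP : ∀ v, ∑ i, (P *ᵥ v) i ^ 2 ≤ ∑ i, v i ^ 2)
    (hR : ∀ v, ∑ i, (R *ᵥ v) i ^ 2 ≤ ∑ i, v i ^ 2) : spec (P * M * R) ≤ spec M := by
  refine spec_le fun x hx => ?_
  rw [Matrix.mul_assoc, ← Matrix.mulVec_mulVec, ← Matrix.mulVec_mulVec]
  exact (Real.sqrt_le_sqrt (hP _)).trans (l2_mulVec_le_spec M ((hR x).trans hx))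

/-- Integer points of squared length at most `4 n`; scaled by `1 / √n` their convex hull contains
the Euclidean unit ball. -/
noncomputable def latticeNet (n : ℕ) : Finset (Fin n → ℤ) :=
  (Fintype.piFinset fun _ : Fin n => Finset.Icc (-(2 * n : ℤ)) (2 * n)).filter
    fun z => ∑ i, z i ^ 2 ≤ 4 * n

theorem mem_latticeNet {n : ℕ} {z : Fin n → ℤ} (hz : ∑ i, z i ^ 2 ≤ 4 * n) :
    z ∈ latticeNet n := by
  refine Finset.mem_filter.mpr ⟨Fintype.mem_piFinset.mpr fun i => ?_, hz⟩
  have h1 : z i ^ 2 ≤ 4 * n :=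
    (Finset.single_le_sum (f := fun i => z i ^ 2) (fun i _ => sq_nonneg _)
      (Finset.mem_univ i)).trans hz
  have hn : (1 : ℤ) ≤ n := by
    have := Fin.pos i
    exact_mod_cast this
  have h2 : z i ^ 2 ≤ (2 * n : ℤ) ^ 2 := by nlinarith
  have h3 := abs_le_of_sq_le_sq' h2 (by positivity)
  exact Finset.mem_Icc.mpr h3

theorem sum_exp_neg_sq_le (M : ℕ) :
    ∑ k ∈ Finset.Icc (-(M : ℤ)) M, Real.exp (-(k : ℝ) ^ 2) ≤ 4 := by
  have hsub : Finset.Icc (-(M : ℤ)) M ⊆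
      (Finset.range (M + 1)).image (fun k : ℕ => (k : ℤ)) ∪
        (Finset.range (M + 1)).image (fun k : ℕ => -(k : ℤ)) := by
    intro k hk
    rw [Finset.mem_Icc] at hk
    simp only [Finset.mem_union, Finset.mem_image, Finset.mem_range]
    rcases le_total 0 k with h | h
    · exact Or.inl ⟨k.toNat, by omega, by omega⟩
    · exact Or.inr ⟨(-k).toNat, by omega, by omega⟩
  have hgeo : ∑ k ∈ Finset.range (M + 1), Real.exp (-(k : ℝ) ^ 2) ≤ 2 := by
    refine le_trans (Finset.sum_le_sum (g := fun k : ℕ => (1 / 2 : ℝ) ^ k) fun k _ => ?_)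
      (sum_geometric_two_le _)
    have h1 : -(k : ℝ) ^ 2 ≤ (k : ℝ) * (-1) := by
      have : (k : ℝ) ≤ (k : ℝ) ^ 2 := by
        have : k ≤ k ^ 2 := Nat.le_self_pow (by norm_num) k
        exact_mod_cast this
      linarith
    refine (Real.exp_le_exp.mpr h1).trans ?_
    rw [Real.exp_nat_mul]
    gcongr
    rw [Real.exp_neg, one_div]
    have := Real.add_one_le_exp (1 : ℝ)
    exact inv_anti₀ (by norm_num) (by linarith)
  refine (Finset.sum_le_sum_of_subset_of_nonneg hsub fun _ _ _ => (Real.exp_pos _).le).trans ?_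
  have : 0 ≤ ∑ x ∈ (Finset.range (M + 1)).image (fun k : ℕ => (k : ℤ)) ∩
      (Finset.range (M + 1)).image (fun k : ℕ => -(k : ℤ)), Real.exp (-(x : ℝ) ^ 2) :=
    Finset.sum_nonneg fun _ _ => (Real.exp_pos _).le
  have hun := Finset.sum_union_inter (s₁ := (Finset.range (M + 1)).image (fun k : ℕ => (k : ℤ)))
    (s₂ := (Finset.range (M + 1)).image (fun k : ℕ => -(k : ℤ)))
    (f := fun k : ℤ => Real.exp (-(k : ℝ) ^ 2))
  rw [Finset.sum_image (by intro a _ b _ h; simpa using h),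
    Finset.sum_image (by intro a _ b _ h; simpa using h)] at hun
  push_cast at hun
  simp only [even_two, Even.neg_pow] at hun
  linarith

theorem card_latticeNet_le (n : ℕ) : ((latticeNet n).card : ℝ) ≤ Real.exp (11 / 2 * n) := by
  have h1 : ((latticeNet n).card : ℝ) ≤ ∑ z ∈ latticeNet n,
      Real.exp (4 * n) * ∏ i, Real.exp (-((z i : ℤ) : ℝ) ^ 2) := by
    rw [Finset.cast_card]
    refine Finset.sum_le_sum fun z hz => ?_
    rw [← Real.exp_sum, ← Real.exp_add]
    refine Real.one_le_exp ?_
    have h := (Finset.mem_filter.mp hz).2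
    have h' : ∑ i, ((z i : ℤ) : ℝ) ^ 2 ≤ 4 * n := by exact_mod_cast h
    rw [Finset.sum_neg_distrib]
    linarith
  have h2 : ∑ z ∈ latticeNet n, Real.exp (4 * n) * ∏ i, Real.exp (-((z i : ℤ) : ℝ) ^ 2) ≤
      ∑ z ∈ Fintype.piFinset fun _ : Fin n => Finset.Icc (-(2 * n : ℤ)) (2 * n),
        Real.exp (4 * n) * ∏ i, Real.exp (-((z i : ℤ) : ℝ) ^ 2) :=
    Finset.sum_le_sum_of_subset_of_nonneg (Finset.filter_subset _ _) fun _ _ _ => by positivity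
  refine h1.trans (h2.trans ?_)
  rw [← Finset.mul_sum, Finset.sum_prod_piFinset (Finset.Icc (-(2 * n : ℤ)) (2 * n))
    (fun _ (k : ℤ) => Real.exp (-(k : ℝ) ^ 2)), Finset.prod_const]
  have h3 := sum_exp_neg_sq_le (2 * n)
  push_cast at h3
  have h4 : (4 : ℝ) ≤ Real.exp (3 / 2) := by
    have h5 := Real.quadratic_le_exp_of_nonneg (x := 3 / 4) (by norm_num)
    have h6 : Real.exp (3 / 2) = Real.exp (3 / 4) * Real.exp (3 / 4) := by
      rw [← Real.exp_add]; norm_num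
    rw [h6]
    nlinarith
  calc Real.exp (4 * n) * (∑ k ∈ Finset.Icc (-(2 * n : ℤ)) (2 * n), Real.exp (-(k : ℝ) ^ 2)) ^
        (Finset.univ : Finset (Fin n)).card
      ≤ Real.exp (4 * n) * Real.exp (3 / 2) ^ n := by
        rw [Finset.card_univ, Fintype.card_fin]
        gcongr
        exact h3.trans h4
    _ = Real.exp (11 / 2 * n) := by
        rw [← Real.exp_nat_mul, ← Real.exp_add]
        congr 1
        ring

theorem exists_latticeNet_le {n : ℕ} (c x : Fin n → ℝ) (hx : ∑ i, x i ^ 2 ≤ 1) :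
    ∃ z ∈ latticeNet n, ∑ i, c i * x i ≤ ∑ i, c i * ((z i : ℝ) / Real.sqrt n) := by
  set R := Real.sqrt n with hR
  have hR2 : R ^ 2 = n := Real.sq_sqrt (Nat.cast_nonneg n)
  let z : Fin n → ℤ := fun i => if 0 ≤ c i then ⌈R * x i⌉ else ⌊R * x i⌋
  have hz : ∀ i, |(z i : ℝ) - R * x i| ≤ 1 := by
    intro i
    simp only [z]
    split_ifs
    · rw [abs_le]
      constructor <;> linarith [Int.le_ceil (R * x i), Int.ceil_lt_add_one (R * x i)]
    · rw [abs_le]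
      constructor <;> linarith [Int.floor_le (R * x i), Int.lt_floor_add_one (R * x i)]
  refine ⟨z, mem_latticeNet ?_, Finset.sum_le_sum fun i _ => ?_⟩
  · have h1 : ∑ i, (z i : ℝ) ^ 2 ≤ ∑ i, (2 * (R ^ 2 * x i ^ 2) + 2) := by
      refine Finset.sum_le_sum fun i _ => ?_
      have := sq_le_one_iff_abs_le_one ((z i : ℝ) - R * x i) |>.mpr (hz i)
      nlinarith [sq_nonneg ((z i : ℝ) - 2 * (R * x i))]
    rw [Finset.sum_add_distrib, ← Finset.mul_sum, ← Finset.mul_sum, hR2] at h1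
    simp only [Finset.sum_const, Finset.card_univ, Fintype.card_fin, nsmul_eq_mul] at h1
    have hn : (0 : ℝ) ≤ n := Nat.cast_nonneg n
    have h2 : ∑ i, (z i : ℝ) ^ 2 ≤ 4 * n := by nlinarith
    exact_mod_cast h2
  · have hRpos : 0 < R := by
      have : 0 < n := Fin.pos i
      exact Real.sqrt_pos.mpr (by exact_mod_cast this)
    have hx' : x i = (R * x i) / R := by field_simp
    rw [hx']
    simp only [z]
    split_ifs with h
    · have := Int.le_ceil (R * x i)
      gcongr
    · have h' : c i ≤ 0 := (not_le.mp h).le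
      refine mul_le_mul_of_nonpos_left ?_ h'
      have := Int.floor_le (R * x i)
      gcongr

/-- The scaled rank-one coefficients attached to a pair of lattice points. -/
noncomputable def netCoeff (w : Fin n1 → ℤ) (z : Fin n2 → ℤ) (p : Fin n1 × Fin n2) : ℝ :=
  ((w p.1 : ℝ) / Real.sqrt n1) * ((z p.2 : ℝ) / Real.sqrt n2)

theorem sum_latticeNet_sq_le {n : ℕ} {z : Fin n → ℤ} (hz : z ∈ latticeNet n) :
    ∑ i, ((z i : ℝ) / Real.sqrt n) ^ 2 ≤ 4 := by
  have h := (Finset.mem_filter.mp hz).2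
  have h' : ∑ i, ((z i : ℤ) : ℝ) ^ 2 ≤ 4 * n := by exact_mod_cast h
  simp_rw [div_pow, Real.sq_sqrt (Nat.cast_nonneg n)]
  rw [← Finset.sum_div]
  rcases Nat.eq_zero_or_pos n with h0 | h0
  · subst h0; simp
  · rwa [div_le_iff₀ (by exact_mod_cast h0)]

theorem sum_netCoeff_sq_le {w : Fin n1 → ℤ} {z : Fin n2 → ℤ} (hw : w ∈ latticeNet n1)
    (hz : z ∈ latticeNet n2) : ∑ p, netCoeff w z p ^ 2 ≤ 16 := by
  simp only [netCoeff, mul_pow]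
  rw [Fintype.sum_prod_type]
  simp only
  rw [← Finset.sum_mul_sum]
  have h1 := sum_latticeNet_sq_le hw
  have h2 := sum_latticeNet_sq_le hz
  have h3 : 0 ≤ ∑ i, ((z i : ℝ) / Real.sqrt n2) ^ 2 := Finset.sum_nonneg fun _ _ => sq_nonneg _
  nlinarith

theorem spec_le_of_net {M : Matrix (Fin n1) (Fin n2) ℝ} {s : ℝ}
    (h : ∀ w ∈ latticeNet n1, ∀ z ∈ latticeNet n2, ∑ p, M p.1 p.2 * netCoeff w z p ≤ s) :
    spec M ≤ s := by
  refine spec_le fun x hx => ?_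
  have hs : 0 ≤ s := by
    have := h 0 (mem_latticeNet (by simp)) 0 (mem_latticeNet (by simp))
    simpa [netCoeff] using this
  set b := M *ᵥ x with hb
  rcases eq_or_ne (l2 b) 0 with h0 | h0
  · rw [h0]; exact hs
  have hpos : 0 < l2 b := lt_of_le_of_ne (Real.sqrt_nonneg _) (Ne.symm h0)
  have hsq : l2 b ^ 2 = ∑ i, b i ^ 2 := Real.sq_sqrt (Finset.sum_nonneg fun _ _ => sq_nonneg _)
  have hy : ∑ i, (b i / l2 b) ^ 2 ≤ 1 := by
    simp_rw [div_pow]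
    rw [← Finset.sum_div, hsq]
    exact div_self_le_one _
  obtain ⟨w, hw, hw'⟩ := exists_latticeNet_le b (fun i => b i / l2 b) hy
  have h1 : ∑ i, b i * (b i / l2 b) = l2 b := by
    have : ∀ i, b i * (b i / l2 b) = b i ^ 2 / l2 b := fun i => by ring
    simp_rw [this]
    rw [← Finset.sum_div, ← hsq]
    field_simp
  obtain ⟨z, hz, hz'⟩ := exists_latticeNet_le
    (fun j => ∑ i, M i j * ((w i : ℝ) / Real.sqrt n1)) x hx
  have h2 : ∑ i, b i * ((w i : ℝ) / Real.sqrt n1) =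
      ∑ j, (∑ i, M i j * ((w i : ℝ) / Real.sqrt n1)) * x j := by
    simp only [hb, Matrix.mulVec, dotProduct, Finset.sum_mul]
    rw [Finset.sum_comm]
    exact Finset.sum_congr rfl fun j _ => Finset.sum_congr rfl fun i _ => by ring
  have h3 : ∑ j, (∑ i, M i j * ((w i : ℝ) / Real.sqrt n1)) * ((z j : ℝ) / Real.sqrt n2) =
      ∑ p, M p.1 p.2 * netCoeff w z p := by
    rw [Fintype.sum_prod_type_right]
    refine Finset.sum_congr rfl fun j _ => ?_
    rw [Finset.sum_mul]
    exact Finset.sum_congr rfl fun i _ => by simp only [netCoeff]; ring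
  linarith [h w hw z hz]

/-- Union bound over the net for a random matrix. -/
theorem unifProb_lt_spec_le {α : Type*} [Fintype α] (X : α → Matrix (Fin n1) (Fin n2) ℝ) {s δ : ℝ}
    (hn : n2 ≤ n1) (hδ : 0 ≤ δ)
    (h : ∀ w ∈ latticeNet n1, ∀ z ∈ latticeNet n2,
      unifProb (fun a => s ≤ ∑ p, X a p.1 p.2 * netCoeff w z p) ≤ δ) :
    unifProb (fun a => s < spec (X a)) ≤ Real.exp (11 * n1) * δ := by
  have h1 : unifProb (fun a => s < spec (X a)) ≤
      unifProb (fun a => ∃ q ∈ latticeNet n1 ×ˢ latticeNet n2,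
        s ≤ ∑ p, X a p.1 p.2 * netCoeff q.1 q.2 p) := by
    refine unifProb_mono fun a ha => ?_
    by_contra hcon
    push Not at hcon
    refine absurd (spec_le_of_net (M := X a) (s := s) fun w hw z hz => ?_) (not_le.mpr ha)
    exact (hcon (w, z) (Finset.mk_mem_product hw hz)).le
  refine h1.trans ((unifProb_exists_le_card_mul (δ := δ) _ _ fun q hq => ?_).trans ?_)
  · rw [Finset.mem_product] at hq
    exact h q.1 hq.1 q.2 hq.2
  · refine mul_le_mul_of_nonneg_right ?_ hδ
    rw [Finset.card_product, Nat.cast_mul]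
    calc ((latticeNet n1).card : ℝ) * (latticeNet n2).card
        ≤ Real.exp (11 / 2 * n1) * Real.exp (11 / 2 * n2) := by
          gcongr <;> exact card_latticeNet_le _
      _ ≤ Real.exp (11 * n1) := by
          rw [← Real.exp_add, Real.exp_le_exp]
          have : (n2 : ℝ) ≤ n1 := by exact_mod_cast hn
          linarith

end SpectralNorm

section TangentSpace

theorem sum_sq_eq_dotProduct {ι : Type*} [Fintype ι] (v : ι → ℝ) :
    ∑ i, v i ^ 2 = v ⬝ᵥ v := by
  simp [dotProduct, sq]

/-- A symmetric idempotent matrix is a contraction. -/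
theorem sum_sq_mulVec_le_of_proj {ι : Type*} [Fintype ι] [DecidableEq ι] {P : Matrix ι ι ℝ}
    (hs : Pᵀ = P) (hi : P * P = P) (v : ι → ℝ) : ∑ i, (P *ᵥ v) i ^ 2 ≤ ∑ i, v i ^ 2 := by
  have h1 : (P *ᵥ v) ⬝ᵥ (P *ᵥ v) = v ⬝ᵥ (P *ᵥ v) := by
    rw [Matrix.dotProduct_mulVec, Matrix.vecMul_mulVec, hs, hi, ← Matrix.mulVec_transpose, hs,
      dotProduct_comm]
  have h2 : 0 ≤ (v - P *ᵥ v) ⬝ᵥ (v - P *ᵥ v) := by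
    rw [← sum_sq_eq_dotProduct]; positivity
  rw [sub_dotProduct, dotProduct_sub, dotProduct_sub, dotProduct_comm (P *ᵥ v) v] at h2
  rw [sum_sq_eq_dotProduct, sum_sq_eq_dotProduct]
  linarith

/-- Sum of squared entries. -/
def fsq {ι κ : Type*} [Fintype ι] [Fintype κ] (M : Matrix ι κ ℝ) : ℝ := ∑ i, ∑ j, M i j ^ 2

theorem fsq_nonneg {ι κ : Type*} [Fintype ι] [Fintype κ] (M : Matrix ι κ ℝ) : 0 ≤ fsq M :=
  Finset.sum_nonneg fun _ _ => Finset.sum_nonneg fun _ _ => sq_nonneg _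

theorem fsq_transpose {ι κ : Type*} [Fintype ι] [Fintype κ] (M : Matrix ι κ ℝ) :
    fsq Mᵀ = fsq M := by
  unfold fsq
  rw [Finset.sum_comm]
  rfl

theorem fsq_mul_le {ι κ η : Type*} [Fintype ι] [Fintype κ] [Fintype η] {A : Matrix η ι ℝ}
    (hA : ∀ v, ∑ i, (A *ᵥ v) i ^ 2 ≤ ∑ i, v i ^ 2) (M : Matrix ι κ ℝ) : fsq (A * M) ≤ fsq M := by
  unfold fsq
  rw [Finset.sum_comm, Finset.sum_comm (f := fun i j => M i j ^ 2)]
  exact Finset.sum_le_sum fun j _ => hA fun i => M i j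

theorem fsq_add_le {ι κ : Type*} [Fintype ι] [Fintype κ] (M N : Matrix ι κ ℝ) :
    fsq (M + N) ≤ 2 * (fsq M + fsq N) := by
  unfold fsq
  rw [← Finset.sum_add_distrib, Finset.mul_sum]
  refine Finset.sum_le_sum fun i _ => ?_
  rw [← Finset.sum_add_distrib, Finset.mul_sum]
  refine Finset.sum_le_sum fun j _ => ?_
  rw [Matrix.add_apply]
  nlinarith [sq_nonneg (M i j - N i j)]

theorem range_proj_transpose {ι κ : Type*} [Fintype κ] (U : Matrix ι κ ℝ) :
    (U * Uᵀ)ᵀ = U * Uᵀ := by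
  rw [Matrix.transpose_mul, Matrix.transpose_transpose]

theorem range_proj_idem {ι κ : Type*} [Fintype ι] [Fintype κ] [DecidableEq κ] {U : Matrix ι κ ℝ}
    (hU : Uᵀ * U = 1) : U * Uᵀ * (U * Uᵀ) = U * Uᵀ := by
  rw [Matrix.mul_assoc, ← Matrix.mul_assoc Uᵀ, hU, Matrix.one_mul]

theorem sum_sq_transpose_mulVec_le {ι κ : Type*} [Fintype ι] [DecidableEq ι] [Fintype κ]
    [DecidableEq κ] {U : Matrix ι κ ℝ} (hU : Uᵀ * U = 1) (v : ι → ℝ) :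
    ∑ k, (Uᵀ *ᵥ v) k ^ 2 ≤ ∑ i, v i ^ 2 := by
  have h := sum_sq_mulVec_le_of_proj (range_proj_transpose U) (range_proj_idem hU) v
  have h2 : ∑ i, ((U * Uᵀ) *ᵥ v) i ^ 2 = ∑ k, (Uᵀ *ᵥ v) k ^ 2 := by
    rw [sum_sq_eq_dotProduct, sum_sq_eq_dotProduct, ← Matrix.mulVec_mulVec,
      Matrix.dotProduct_mulVec, Matrix.vecMul_mulVec, hU, Matrix.vecMul_one]
  rwa [h2] at h

variable {n1 n2 r : ℕ}

/-- Orthogonal projection onto the tangent space. -/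
def tangentProj (U : Matrix (Fin n1) (Fin r) ℝ) (V : Matrix (Fin n2) (Fin r) ℝ)
    (M : Matrix (Fin n1) (Fin n2) ℝ) : Matrix (Fin n1) (Fin n2) ℝ :=
  U * Uᵀ * M + (1 - U * Uᵀ) * M * (V * Vᵀ)

theorem minner_eq_trace (A B : Matrix (Fin n1) (Fin n2) ℝ) : minner A B = (Aᵀ * B).trace := by
  unfold minner Matrix.trace
  simp only [Matrix.diag_apply, Matrix.mul_apply, Matrix.transpose_apply]
  rw [Finset.sum_comm]

theorem minner_comm (A B : Matrix (Fin n1) (Fin n2) ℝ) : minner A B = minner B A := by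
  unfold minner
  simp_rw [mul_comm]

theorem minner_add_left (A B C : Matrix (Fin n1) (Fin n2) ℝ) :
    minner (A + B) C = minner A C + minner B C := by
  simp [minner_eq_trace, Matrix.add_mul]

theorem minner_add_right (A B C : Matrix (Fin n1) (Fin n2) ℝ) :
    minner A (B + C) = minner A B + minner A C := by
  simp [minner_eq_trace, Matrix.mul_add]

theorem minner_sub_left (A B C : Matrix (Fin n1) (Fin n2) ℝ) :
    minner (A - B) C = minner A C - minner B C := by
  simp [minner_eq_trace, Matrix.sub_mul]

theorem minner_self (A : Matrix (Fin n1) (Fin n2) ℝ) : minner A A = fsq A := by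
  simp [minner, fsq, sq]

theorem minner_mul_mul {P : Matrix (Fin n1) (Fin n1) ℝ} {R : Matrix (Fin n2) (Fin n2) ℝ}
    (hP : Pᵀ = P) (hR : Rᵀ = R) (A B : Matrix (Fin n1) (Fin n2) ℝ) :
    minner (P * A * R) B = minner A (P * B * R) := by
  rw [minner_eq_trace, minner_eq_trace, Matrix.transpose_mul, Matrix.transpose_mul, hP, hR,
    Matrix.mul_assoc R, Matrix.trace_mul_comm R]
  simp only [Matrix.mul_assoc]

theorem minner_single (A : Matrix (Fin n1) (Fin n2) ℝ) (i : Fin n1) (j : Fin n2) :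
    minner A (Matrix.single i j 1) = A i j := by
  unfold minner
  rw [Finset.sum_eq_single i, Finset.sum_eq_single j]
  · simp
  · intro b _ hb; simp [Matrix.single, hb.symm]
  · simp
  · intro b _ hb; simp [Matrix.single, hb.symm]
  · simp

theorem minner_sq_le (A B : Matrix (Fin n1) (Fin n2) ℝ) : minner A B ^ 2 ≤ fsq A * fsq B := by
  unfold minner fsq
  rw [← Fintype.sum_prod_type' (fun i j => A i j * B i j),
    ← Fintype.sum_prod_type' (fun i j => A i j ^ 2),
    ← Fintype.sum_prod_type' (fun i j => B i j ^ 2)]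
  exact Finset.sum_mul_sq_le_sq_mul_sq _ _ _

section

variable {U : Matrix (Fin n1) (Fin r) ℝ} {V : Matrix (Fin n2) (Fin r) ℝ}

theorem tangentProj_add (M N : Matrix (Fin n1) (Fin n2) ℝ) :
    tangentProj U V (M + N) = tangentProj U V M + tangentProj U V N := by
  simp only [tangentProj, Matrix.mul_add, Matrix.add_mul]
  abel

theorem tangentProj_smul (c : ℝ) (M : Matrix (Fin n1) (Fin n2) ℝ) :
    tangentProj U V (c • M) = c • tangentProj U V M := by
  simp [tangentProj]

theorem tangentProj_sub (M N : Matrix (Fin n1) (Fin n2) ℝ) :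
    tangentProj U V (M - N) = tangentProj U V M - tangentProj U V N := by
  simp only [tangentProj, Matrix.mul_sub, Matrix.sub_mul]
  abel

theorem sub_tangentProj (M : Matrix (Fin n1) (Fin n2) ℝ) :
    M - tangentProj U V M = (1 - U * Uᵀ) * M * (1 - V * Vᵀ) := by
  simp only [tangentProj, Matrix.mul_sub, Matrix.sub_mul, Matrix.mul_one, Matrix.one_mul]
  abel

theorem compl_proj_transpose {ι κ : Type*} [DecidableEq ι] [Fintype κ] (U : Matrix ι κ ℝ) :
    (1 - U * Uᵀ)ᵀ = 1 - U * Uᵀ := by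
  rw [Matrix.transpose_sub, range_proj_transpose, Matrix.transpose_one]

theorem compl_proj_idem {ι κ : Type*} [Fintype ι] [DecidableEq ι] [Fintype κ] [DecidableEq κ]
    {U : Matrix ι κ ℝ} (hU : Uᵀ * U = 1) : (1 - U * Uᵀ) * (1 - U * Uᵀ) = 1 - U * Uᵀ := by
  rw [Matrix.mul_sub, Matrix.mul_one, Matrix.sub_mul, Matrix.one_mul, range_proj_idem hU]
  simp

theorem compl_proj_mul {ι κ : Type*} [Fintype ι] [DecidableEq ι] [Fintype κ] [DecidableEq κ]
    {U : Matrix ι κ ℝ} (hU : Uᵀ * U = 1) : (1 - U * Uᵀ) * U = 0 := by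
  rw [Matrix.sub_mul, Matrix.one_mul, Matrix.mul_assoc, hU, Matrix.mul_one, sub_self]

theorem minner_tangentProj_left (M N : Matrix (Fin n1) (Fin n2) ℝ) :
    minner (tangentProj U V M) N = minner M (tangentProj U V N) := by
  have h := minner_mul_mul (compl_proj_transpose U) (compl_proj_transpose V) M N
  have e : ∀ A, (1 - U * Uᵀ) * A * (1 - V * Vᵀ) = A - tangentProj U V A :=
    fun A => (sub_tangentProj A).symm
  rw [e, e, minner_sub_left, minner_comm M (N - _), minner_sub_left, minner_comm N M,
    minner_comm (tangentProj U V N)] at h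
  linarith

theorem tangentProj_of_memT (hU : Uᵀ * U = 1) (hV : Vᵀ * V = 1) {M : Matrix (Fin n1) (Fin n2) ℝ}
    (hM : memT U V M) : tangentProj U V M = M := by
  obtain ⟨Q, R, rfl⟩ := hM
  have hV' : Vᵀ * (1 - V * Vᵀ) = 0 := by
    rw [Matrix.mul_sub, Matrix.mul_one, ← Matrix.mul_assoc, hV, Matrix.one_mul, sub_self]
  refine (sub_eq_zero.mp ?_).symm
  rw [sub_tangentProj, Matrix.mul_add, Matrix.add_mul, ← Matrix.mul_assoc, compl_proj_mul hU,
    Matrix.zero_mul, Matrix.zero_mul, Matrix.mul_assoc, Matrix.mul_assoc, hV']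
  simp

theorem memT_tangentProj (M : Matrix (Fin n1) (Fin n2) ℝ) : memT U V (tangentProj U V M) :=
  ⟨(Uᵀ * M)ᵀ, (1 - U * Uᵀ) * M * V, by
    simp only [tangentProj, Matrix.transpose_transpose, Matrix.mul_assoc]⟩

theorem tangentProj_idem (hU : Uᵀ * U = 1) (hV : Vᵀ * V = 1) (M : Matrix (Fin n1) (Fin n2) ℝ) :
    tangentProj U V (tangentProj U V M) = tangentProj U V M :=
  tangentProj_of_memT hU hV (memT_tangentProj M)

theorem memTperp_sub_tangentProj (hU : Uᵀ * U = 1) (hV : Vᵀ * V = 1)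
    (M : Matrix (Fin n1) (Fin n2) ℝ) : memTperp U V (M - tangentProj U V M) := by
  intro N hN
  rw [minner_sub_left, minner_tangentProj_left, tangentProj_of_memT hU hV hN, sub_self]

theorem spec_sub_tangentProj_le (hU : Uᵀ * U = 1) (hV : Vᵀ * V = 1)
    (M : Matrix (Fin n1) (Fin n2) ℝ) : spec (M - tangentProj U V M) ≤ spec M := by
  rw [sub_tangentProj]
  exact spec_mul_mul_le M
    (sum_sq_mulVec_le_of_proj (compl_proj_transpose U) (compl_proj_idem hU))
    (sum_sq_mulVec_le_of_proj (compl_proj_transpose V) (compl_proj_idem hV))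

theorem fsq_tangentProj_single_le (hU : Uᵀ * U = 1) (hV : Vᵀ * V = 1) {μ : ℝ}
    (hUi : ∀ i, ∑ k, U i k ^ 2 ≤ μ) (hVj : ∀ j, ∑ k, V j k ^ 2 ≤ μ) (i : Fin n1) (j : Fin n2) :
    fsq (tangentProj U V (Matrix.single i j 1)) ≤ 2 * μ := by
  rw [← minner_self, minner_tangentProj_left, tangentProj_idem hU hV, minner_comm, minner_single]
  have h1 : (U * Uᵀ) i i = ∑ k, U i k ^ 2 := by simp [Matrix.mul_apply, sq]
  have h2 : (V * Vᵀ) j j = ∑ k, V j k ^ 2 := by simp [Matrix.mul_apply, sq]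
  have h3 : tangentProj U V (Matrix.single i j 1) i j =
      (U * Uᵀ) i i + (1 - (U * Uᵀ) i i) * (V * Vᵀ) j j := by
    simp only [tangentProj, Matrix.add_apply]
    congr 1
    · rw [Matrix.mul_single_apply_same, mul_one]
    · rw [Matrix.mul_apply, Finset.sum_eq_single j]
      · rw [Matrix.mul_single_apply_same, mul_one, Matrix.sub_apply, Matrix.one_apply_eq]
      · intro b _ hb
        rw [Matrix.mul_single_apply_of_ne _ _ _ _ _ hb, zero_mul]
      · simp
  rw [h3, h1, h2]
  have h4 : 0 ≤ ∑ k, U i k ^ 2 := Finset.sum_nonneg fun _ _ => sq_nonneg _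
  have h5 : 0 ≤ ∑ k, V j k ^ 2 := Finset.sum_nonneg fun _ _ => sq_nonneg _
  nlinarith [hUi i, hVj j]

theorem abs_tangentProj_single_le (hU : Uᵀ * U = 1) (hV : Vᵀ * V = 1) {μ : ℝ} (hμ : 0 ≤ μ)
    (hUi : ∀ i, ∑ k, U i k ^ 2 ≤ μ) (hVj : ∀ j, ∑ k, V j k ^ 2 ≤ μ) (i a : Fin n1)
    (j b : Fin n2) : |tangentProj U V (Matrix.single i j 1) a b| ≤ 2 * μ := by
  have h := minner_sq_le (tangentProj U V (Matrix.single i j 1))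
    (tangentProj U V (Matrix.single a b 1))
  rw [← minner_tangentProj_left, tangentProj_idem hU hV, minner_single] at h
  have h1 := fsq_tangentProj_single_le hU hV hUi hVj i j
  have h2 := fsq_tangentProj_single_le hU hV hUi hVj a b
  have h3 : tangentProj U V (Matrix.single i j 1) a b ^ 2 ≤ (2 * μ) ^ 2 := by
    refine h.trans ?_
    rw [sq]
    exact mul_le_mul h1 h2 (fsq_nonneg _) (by positivity)
  exact abs_le_of_sq_le_sq h3 (by positivity)

theorem tangentProj_apply_eq_sum (M : Matrix (Fin n1) (Fin n2) ℝ) (i : Fin n1) (j : Fin n2) :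
    tangentProj U V M i j =
      ∑ p : Fin n1 × Fin n2, M p.1 p.2 * tangentProj U V (Matrix.single i j 1) p.1 p.2 := by
  rw [← minner_single (tangentProj U V M), minner_tangentProj_left, minner,
    Fintype.sum_prod_type]

/-- If every column of `Ω` restricts `U` and every row of `Ω` restricts `V` to a small operator,
then `P_Ω P_T` is small. -/
theorem fsq_projS_tangentProj_le (hU : Uᵀ * U = 1) (hV : Vᵀ * V = 1) {τ : ℝ} (hτ : 0 ≤ τ)
    (Ω : Finset (Fin n1 × Fin n2))
    (hcol : ∀ j, ∀ x : Fin r → ℝ,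
      ∑ i, (if (i, j) ∈ Ω then (∑ k, U i k * x k) ^ 2 else 0) ≤ τ * ∑ k, x k ^ 2)
    (hrow : ∀ i, ∀ x : Fin r → ℝ,
      ∑ j, (if (i, j) ∈ Ω then (∑ k, V j k * x k) ^ 2 else 0) ≤ τ * ∑ k, x k ^ 2)
    (M : Matrix (Fin n1) (Fin n2) ℝ) :
    fsq (projS Ω (tangentProj U V M)) ≤ 4 * τ * fsq M := by
  have hproj : projS Ω (tangentProj U V M) =
      projS Ω (U * (Uᵀ * M)) + projS Ω ((1 - U * Uᵀ) * M * V * Vᵀ) := by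
    ext i j
    simp only [projS, tangentProj, Matrix.of_apply, Matrix.add_apply, Matrix.mul_assoc]
    split_ifs <;> simp
  have h1 : fsq (projS Ω (U * (Uᵀ * M))) ≤ τ * fsq (Uᵀ * M) := by
    unfold fsq
    rw [Finset.sum_comm, Finset.sum_comm (f := fun i j => (Uᵀ * M) i j ^ 2), Finset.mul_sum]
    refine Finset.sum_le_sum fun j _ => le_trans (le_of_eq ?_) (hcol j fun k => (Uᵀ * M) k j)
    refine Finset.sum_congr rfl fun i _ => ?_
    simp only [projS, Matrix.of_apply]
    split_ifs
    · rw [Matrix.mul_apply]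
    · simp
  have h2 : fsq (projS Ω ((1 - U * Uᵀ) * M * V * Vᵀ)) ≤ τ * fsq ((1 - U * Uᵀ) * M * V) := by
    unfold fsq
    rw [Finset.mul_sum]
    refine Finset.sum_le_sum fun i _ => le_trans (le_of_eq ?_)
      (hrow i fun k => ((1 - U * Uᵀ) * M * V : Matrix (Fin n1) (Fin r) ℝ) i k)
    refine Finset.sum_congr rfl fun j _ => ?_
    simp only [projS, Matrix.of_apply]
    split_ifs
    · rw [Matrix.mul_apply]
      congr 1
      exact Finset.sum_congr rfl fun k _ => by rw [Matrix.transpose_apply, mul_comm]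
    · simp
  have h3 : fsq (Uᵀ * M) ≤ fsq M := fsq_mul_le (sum_sq_transpose_mulVec_le hU) M
  have h4 : fsq ((1 - U * Uᵀ) * M * V) ≤ fsq M := by
    rw [← fsq_transpose, Matrix.transpose_mul]
    refine (fsq_mul_le (sum_sq_transpose_mulVec_le hV) _).trans ?_
    rw [fsq_transpose]
    exact fsq_mul_le (sum_sq_mulVec_le_of_proj (compl_proj_transpose U) (compl_proj_idem hU)) M
  rw [hproj]
  refine (fsq_add_le _ _).trans ?_
  have h5 := mul_le_mul_of_nonneg_left h3 hτ
  have h6 := mul_le_mul_of_nonneg_left h4 hτ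
  linarith

end

end TangentSpace

section MatrixChernoff

variable {κ : Type*} [Fintype κ]

/-- Chebyshev's association inequality with weights. -/
theorem weighted_chebyshev {w f g : κ → ℝ} (hw : ∀ l, 0 ≤ w l)
    (hfg : ∀ k l, 0 ≤ (f k - f l) * (g k - g l)) :
    (∑ l, f l * w l) * (∑ l, g l * w l) ≤ (∑ l, w l) * ∑ l, f l * g l * w l := by
  have h : 0 ≤ ∑ k, ∑ l, w k * w l * ((f k - f l) * (g k - g l)) :=
    Finset.sum_nonneg fun k _ => Finset.sum_nonneg fun l _ =>
      mul_nonneg (mul_nonneg (hw k) (hw l)) (hfg k l)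
  have e : ∑ k, ∑ l, w k * w l * ((f k - f l) * (g k - g l)) =
      2 * ((∑ l, w l) * ∑ l, f l * g l * w l) -
        2 * ((∑ l, f l * w l) * (∑ l, g l * w l)) := by
    have e1 := Fintype.sum_mul_sum w (fun l => f l * g l * w l)
    have e2 := Fintype.sum_mul_sum (fun l => f l * g l * w l) w
    have e3 := Fintype.sum_mul_sum (fun l => f l * w l) (fun l => g l * w l)
    have e4 := Fintype.sum_mul_sum (fun l => g l * w l) (fun l => f l * w l)
    rw [two_mul, two_mul]
    nth_rewrite 2 [mul_comm (∑ l, w l)]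
    nth_rewrite 2 [mul_comm (∑ l, f l * w l)]
    rw [e1, e2, e3, e4]
    simp only [← Finset.sum_add_distrib, ← Finset.sum_sub_distrib]
    exact Finset.sum_congr rfl fun k _ => Finset.sum_congr rfl fun l _ => by ring
  linarith

theorem dotProduct_mul_vecMulVec_mul_mulVec (B A : Matrix κ κ ℝ) (v : κ → ℝ) :
    v ⬝ᵥ ((B * vecMulVec v v * A) *ᵥ v) = (v ⬝ᵥ (B *ᵥ v)) * (v ⬝ᵥ (A *ᵥ v)) := by
  rw [← Matrix.mulVec_mulVec, ← Matrix.mulVec_mulVec, Matrix.vecMulVec_mulVec,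
    Matrix.mulVec_smul, op_smul_eq_smul, dotProduct_smul, smul_eq_mul, mul_comm]

theorem posSemidef_vecMulVec_self (v : κ → ℝ) : (vecMulVec v v).PosSemidef := by
  simpa using Matrix.posSemidef_vecMulVec_self_star v

variable [DecidableEq κ]

theorem exists_orthogonal_diagonalization {A : Matrix κ κ ℝ} (hA : A.PosSemidef) :
    ∃ (P : Matrix κ κ ℝ) (d : κ → ℝ), Pᵀ * P = 1 ∧ P * Pᵀ = 1 ∧ (∀ l, 0 ≤ d l) ∧
      A = P * diagonal d * Pᵀ := by
  have h := hA.1.spectral_theorem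
  rw [Unitary.conjStarAlgAut_apply] at h
  have hu := hA.1.eigenvectorUnitary.2
  rw [Matrix.mem_unitaryGroup_iff] at hu
  refine ⟨hA.1.eigenvectorUnitary, hA.1.eigenvalues, ?_, ?_, hA.eigenvalues_nonneg, ?_⟩
  · rw [Matrix.star_eq_conjTranspose, Matrix.conjTranspose_eq_transpose_of_trivial] at hu
    exact mul_eq_one_comm.mp hu
  · rwa [Matrix.star_eq_conjTranspose, Matrix.conjTranspose_eq_transpose_of_trivial] at hu
  · rw [Matrix.star_eq_conjTranspose, Matrix.conjTranspose_eq_transpose_of_trivial] at h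
    exact h

theorem conj_diagonal_mul {P : Matrix κ κ ℝ} (hP : Pᵀ * P = 1) (f g : κ → ℝ) :
    P * diagonal f * Pᵀ * (P * diagonal g * Pᵀ) = P * diagonal (fun l => f l * g l) * Pᵀ := by
  calc P * diagonal f * Pᵀ * (P * diagonal g * Pᵀ)
      = P * diagonal f * (Pᵀ * P) * diagonal g * Pᵀ := by simp only [Matrix.mul_assoc]
    _ = _ := by rw [hP, Matrix.mul_one, Matrix.mul_assoc P, Matrix.diagonal_mul_diagonal]

theorem conj_diagonal_pow {P : Matrix κ κ ℝ} (hP : Pᵀ * P = 1) (hP' : P * Pᵀ = 1) (f : κ → ℝ)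
    (p : ℕ) : (P * diagonal f * Pᵀ) ^ p = P * diagonal (fun l => f l ^ p) * Pᵀ := by
  induction p with
  | zero => simp [hP']
  | succ p ih =>
    rw [pow_succ, ih, conj_diagonal_mul hP]
    simp only [pow_succ]

theorem trace_conj_diagonal {P : Matrix κ κ ℝ} (hP : Pᵀ * P = 1) (f : κ → ℝ) :
    (P * diagonal f * Pᵀ).trace = ∑ l, f l := by
  rw [Matrix.trace_mul_comm, ← Matrix.mul_assoc, hP, Matrix.one_mul, Matrix.trace_diagonal]

theorem dotProduct_conj_diagonal_mulVec (P : Matrix κ κ ℝ) (f v : κ → ℝ) :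
    v ⬝ᵥ ((P * diagonal f * Pᵀ) *ᵥ v) = ∑ l, f l * (Pᵀ *ᵥ v) l ^ 2 := by
  rw [← Matrix.mulVec_mulVec, ← Matrix.mulVec_mulVec, Matrix.dotProduct_mulVec,
    ← Matrix.mulVec_transpose]
  simp only [dotProduct, Matrix.mulVec_diagonal]
  exact Finset.sum_congr rfl fun l _ => by ring

theorem conj_diagonal_add_smul_one {P : Matrix κ κ ℝ} (hP' : P * Pᵀ = 1) (f : κ → ℝ) (μ : ℝ) :
    P * diagonal f * Pᵀ + μ • (1 : Matrix κ κ ℝ) = P * diagonal (fun l => f l + μ) * Pᵀ := by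
  have h : diagonal (fun l => f l + μ) = diagonal f + μ • (1 : Matrix κ κ ℝ) := by
    rw [← Matrix.diagonal_one, ← Matrix.diagonal_smul, Matrix.diagonal_add]
    congr 1
    ext l
    simp
  rw [h, Matrix.mul_add, Matrix.add_mul]
  simp [hP']

/-- Moments of a rank-one perturbation of a positive semidefinite matrix, compared with those of
a shift by a multiple of the identity. -/
theorem rankOne_moment_bounds {A : Matrix κ κ ℝ} (hA : A.PosSemidef) {v : κ → ℝ} {μ : ℝ}
    (hv : v ⬝ᵥ v ≤ μ) (j : ℕ) : ∀ i : ℕ,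
    0 ≤ v ⬝ᵥ (((A + vecMulVec v v) ^ j * A ^ i) *ᵥ v) ∧
    v ⬝ᵥ (((A + vecMulVec v v) ^ j * A ^ i) *ᵥ v) ≤
      v ⬝ᵥ (((A + μ • (1 : Matrix κ κ ℝ)) ^ j * A ^ i) *ᵥ v) := by
  have hμ : 0 ≤ μ := le_trans (by
    rw [dotProduct]; exact Finset.sum_nonneg fun i _ => mul_self_nonneg _) hv
  obtain ⟨P, d, hP, hP', hd, rfl⟩ := exists_orthogonal_diagonalization hA
  set A := P * diagonal d * Pᵀ with hAdef
  set w : κ → ℝ := fun l => (Pᵀ *ᵥ v) l ^ 2 with hw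
  have hw0 : ∀ l, 0 ≤ w l := fun l => sq_nonneg _
  have hpow : ∀ j i : ℕ, v ⬝ᵥ (((A + μ • (1 : Matrix κ κ ℝ)) ^ j * A ^ i) *ᵥ v) =
      ∑ l, (d l + μ) ^ j * d l ^ i * w l := by
    intro j i
    rw [hAdef, conj_diagonal_add_smul_one hP', conj_diagonal_pow hP hP', conj_diagonal_pow hP hP',
      conj_diagonal_mul hP, dotProduct_conj_diagonal_mulVec]
  have hwsum : ∑ l, w l ≤ μ := by
    have h := hpow 0 0
    simp only [pow_zero, one_mul, Matrix.one_mulVec] at h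
    rw [← h]
    exact hv
  have hApow : ∀ i : ℕ, v ⬝ᵥ ((A ^ i) *ᵥ v) = ∑ l, d l ^ i * w l := by
    intro i
    have h := hpow 0 i
    simpa using h
  have hA0 : ∀ i : ℕ, 0 ≤ v ⬝ᵥ ((A ^ i) *ᵥ v) := by
    intro i
    rw [hApow]
    exact Finset.sum_nonneg fun l _ => mul_nonneg (pow_nonneg (hd l) _) (hw0 l)
  induction j with
  | zero =>
    intro i
    simp only [pow_zero, one_mul]
    exact ⟨hA0 i, le_rfl⟩
  | succ j ih =>
    intro i
    have hrec : (A + vecMulVec v v) ^ (j + 1) * A ^ i = (A + vecMulVec v v) ^ j * A ^ (i + 1) +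
        (A + vecMulVec v v) ^ j * vecMulVec v v * A ^ i := by
      rw [pow_succ, pow_succ' A]
      noncomm_ring
    rw [hrec, Matrix.add_mulVec, dotProduct_add, dotProduct_mul_vecMulVec_mul_mulVec]
    have h0 := ih 0
    have h1 := ih (i + 1)
    simp only [pow_zero, mul_one] at h0
    refine ⟨add_nonneg h1.1 (mul_nonneg h0.1 (hA0 i)), ?_⟩
    have h2 := mul_le_mul_of_nonneg_right h0.2 (hA0 i)
    have h3 : v ⬝ᵥ (((A + μ • (1 : Matrix κ κ ℝ)) ^ j * 1) *ᵥ v) * v ⬝ᵥ ((A ^ i) *ᵥ v) ≤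
        μ * ∑ l, (d l + μ) ^ j * d l ^ i * w l := by
      have h4 := hpow j 0
      rw [pow_zero] at h4
      rw [h4, hApow]
      simp only [pow_zero, mul_one]
      refine (weighted_chebyshev hw0 ?_).trans (mul_le_mul_of_nonneg_right hwsum
        (Finset.sum_nonneg fun l _ => mul_nonneg
          (mul_nonneg (pow_nonneg (add_nonneg (hd l) hμ) _) (pow_nonneg (hd l) _)) (hw0 l)))
      intro k l
      rcases le_total (d k) (d l) with hkl | hkl
      · exact mul_nonneg_of_nonpos_of_nonpos
          (sub_nonpos.mpr (pow_le_pow_left₀ (add_nonneg (hd k) hμ) (by linarith) _))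
          (sub_nonpos.mpr (pow_le_pow_left₀ (hd k) hkl _))
      · exact mul_nonneg
          (sub_nonneg.mpr (pow_le_pow_left₀ (add_nonneg (hd l) hμ) (by linarith) _))
          (sub_nonneg.mpr (pow_le_pow_left₀ (hd l) hkl _))
    rw [mul_one] at h3
    have h5 : v ⬝ᵥ (((A + μ • (1 : Matrix κ κ ℝ)) ^ (j + 1) * A ^ i) *ᵥ v) =
        v ⬝ᵥ (((A + μ • (1 : Matrix κ κ ℝ)) ^ j * A ^ (i + 1)) *ᵥ v) +
          μ * ∑ l, (d l + μ) ^ j * d l ^ i * w l := by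
      rw [hpow, hpow, Finset.mul_sum, ← Finset.sum_add_distrib]
      exact Finset.sum_congr rfl fun l _ => by ring
    linarith [h1.2]

theorem pow_sub_pow_eq_sum {R : Type*} [Ring R] (x y : R) (p : ℕ) :
    x ^ p - y ^ p = ∑ i ∈ Finset.range p, y ^ i * (x - y) * x ^ (p - 1 - i) := by
  have h := Finset.sum_range_sub' (fun i => y ^ i * x ^ (p - i)) p
  simp only [pow_zero, one_mul, Nat.sub_zero, Nat.sub_self, mul_one] at h
  rw [← h]
  refine Finset.sum_congr rfl fun i hi => ?_
  have hi' := Finset.mem_range.mp hi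
  have e : p - i = (p - 1 - i) + 1 := by omega
  rw [e, show p - (i + 1) = p - 1 - i by omega, pow_succ' x, pow_succ y]
  noncomm_ring

theorem trace_rankOne_pow_sub (A : Matrix κ κ ℝ) (v : κ → ℝ) (p : ℕ) :
    ((A + vecMulVec v v) ^ p).trace - (A ^ p).trace = ∑ i ∈ Finset.range p,
      v ⬝ᵥ (((A + vecMulVec v v) ^ (p - 1 - i) * A ^ i) *ᵥ v) := by
  rw [← Matrix.trace_sub, pow_sub_pow_eq_sum, Matrix.trace_sum, add_sub_cancel_left]
  refine Finset.sum_congr rfl fun i _ => ?_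
  rw [Matrix.mul_assoc, Matrix.trace_mul_comm, Matrix.mul_assoc, Matrix.trace_mul_comm,
    Matrix.mul_vecMulVec, Matrix.trace_vecMulVec, dotProduct_comm]

/-- The trace of `exp (t A)`, as a power series. -/
noncomputable def traceExp (t : ℝ) (A : Matrix κ κ ℝ) : ℝ :=
  ∑' p : ℕ, t ^ p / p.factorial * (A ^ p).trace

theorem hasSum_traceExp_conj_diagonal {P : Matrix κ κ ℝ} (hP : Pᵀ * P = 1) (hP' : P * Pᵀ = 1)
    (d : κ → ℝ) (t : ℝ) :
    HasSum (fun p : ℕ => t ^ p / p.factorial * ((P * diagonal d * Pᵀ) ^ p).trace)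
      (∑ l, Real.exp (t * d l)) := by
  have h : ∀ l ∈ (Finset.univ : Finset κ),
      HasSum (fun p : ℕ => t ^ p / p.factorial * d l ^ p) (Real.exp (t * d l)) := by
    intro l _
    have h1 := NormedSpace.expSeries_div_hasSum_exp (t * d l)
    rw [← Real.exp_eq_exp_ℝ] at h1
    have e : (fun p : ℕ => t ^ p / p.factorial * d l ^ p) =
        fun p : ℕ => (t * d l) ^ p / p.factorial := by
      ext p
      rw [mul_pow]
      ring
    rw [e]
    exact h1
  convert hasSum_sum h using 1
  ext p
  rw [conj_diagonal_pow hP hP', trace_conj_diagonal hP, Finset.mul_sum]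

theorem hasSum_traceExp {A : Matrix κ κ ℝ} (hA : A.PosSemidef) (t : ℝ) :
    HasSum (fun p : ℕ => t ^ p / p.factorial * (A ^ p).trace) (traceExp t A) := by
  obtain ⟨P, d, hP, hP', _, rfl⟩ := exists_orthogonal_diagonalization hA
  exact (hasSum_traceExp_conj_diagonal hP hP' d t).summable.hasSum

theorem traceExp_nonneg {A : Matrix κ κ ℝ} (hA : A.PosSemidef) (t : ℝ) : 0 ≤ traceExp t A := by
  obtain ⟨P, d, hP, hP', _, rfl⟩ := exists_orthogonal_diagonalization hA
  rw [traceExp, (hasSum_traceExp_conj_diagonal hP hP' d t).tsum_eq]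
  exact Finset.sum_nonneg fun l _ => (Real.exp_pos _).le

theorem traceExp_zero (t : ℝ) : traceExp t (0 : Matrix κ κ ℝ) = Fintype.card κ := by
  have h := hasSum_traceExp_conj_diagonal (P := (1 : Matrix κ κ ℝ)) (by simp) (by simp)
    (fun _ => 0) t
  have e : (1 : Matrix κ κ ℝ) * diagonal (fun _ => 0) * 1ᵀ = 0 := by simp
  rw [e] at h
  rw [traceExp, h.tsum_eq]
  simp

theorem traceExp_add_smul_one {A : Matrix κ κ ℝ} (hA : A.PosSemidef) (t μ : ℝ) :
    HasSum (fun p : ℕ => t ^ p / p.factorial * ((A + μ • (1 : Matrix κ κ ℝ)) ^ p).trace)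
      (Real.exp (t * μ) * traceExp t A) := by
  obtain ⟨P, d, hP, hP', _, rfl⟩ := exists_orthogonal_diagonalization hA
  have h := hasSum_traceExp_conj_diagonal hP hP' (fun l => d l + μ) t
  rw [← conj_diagonal_add_smul_one hP'] at h
  rw [traceExp, (hasSum_traceExp_conj_diagonal hP hP' d t).tsum_eq, Finset.mul_sum]
  convert h using 1
  exact Finset.sum_congr rfl fun l _ => by rw [← Real.exp_add]; ring_nf

theorem exp_le_traceExp_of_lt {A : Matrix κ κ ℝ} (hA : A.PosSemidef) {t τ : ℝ} (ht : 0 ≤ t)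
    {x : κ → ℝ} (hx : τ * (x ⬝ᵥ x) < x ⬝ᵥ (A *ᵥ x)) : Real.exp (t * τ) ≤ traceExp t A := by
  obtain ⟨P, d, hP, hP', _, rfl⟩ := exists_orthogonal_diagonalization hA
  rw [traceExp, (hasSum_traceExp_conj_diagonal hP hP' d t).tsum_eq]
  have h1 : ∃ l, τ < d l := by
    by_contra hcon
    push Not at hcon
    have h2 := dotProduct_conj_diagonal_mulVec P (fun _ => 1) x
    rw [Matrix.diagonal_one, Matrix.mul_one, hP', Matrix.one_mulVec] at h2
    rw [dotProduct_conj_diagonal_mulVec, h2, Finset.mul_sum] at hx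
    refine absurd hx (not_lt.mpr (Finset.sum_le_sum fun l _ => ?_))
    rw [one_mul]
    exact mul_le_mul_of_nonneg_right (hcon l) (sq_nonneg _)
  obtain ⟨l, hl⟩ := h1
  refine le_trans (Real.exp_le_exp.mpr (mul_le_mul_of_nonneg_left hl.le ht)) ?_
  exact Finset.single_le_sum (f := fun l => Real.exp (t * d l))
    (fun l _ => (Real.exp_pos _).le) (Finset.mem_univ l)

theorem traceExp_le_add_rankOne {A : Matrix κ κ ℝ} (hA : A.PosSemidef) (v : κ → ℝ) {t : ℝ}
    (ht : 0 ≤ t) : traceExp t A ≤ traceExp t (A + vecMulVec v v) := by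
  refine hasSum_le (fun p => ?_) (hasSum_traceExp hA t)
    (hasSum_traceExp (hA.add (posSemidef_vecMulVec_self v)) t)
  refine mul_le_mul_of_nonneg_left ?_ (by positivity)
  rw [← sub_nonneg, trace_rankOne_pow_sub]
  exact Finset.sum_nonneg fun i _ => (rankOne_moment_bounds hA le_rfl _ _).1

theorem sum_dotProduct_mulVec {ι : Type*} [Fintype ι] {v : ι → κ → ℝ}
    (hv : ∑ e, vecMulVec (v e) (v e) = (1 : Matrix κ κ ℝ)) (M : Matrix κ κ ℝ) :
    ∑ e, v e ⬝ᵥ (M *ᵥ v e) = M.trace := by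
  have h : ∀ e, v e ⬝ᵥ (M *ᵥ v e) = (M * vecMulVec (v e) (v e)).trace := fun e => by
    rw [Matrix.mul_vecMulVec, Matrix.trace_vecMulVec, dotProduct_comm]
  simp only [h]
  rw [← Matrix.trace_sum, ← Matrix.mul_sum, hv, Matrix.mul_one]

theorem sum_traceExp_rankOne_sub_le {ι : Type*} [Fintype ι] {A : Matrix κ κ ℝ}
    (hA : A.PosSemidef) {v : ι → κ → ℝ} (hv : ∑ e, vecMulVec (v e) (v e) = (1 : Matrix κ κ ℝ))
    {μ t : ℝ} (hμ : 0 < μ) (ht : 0 ≤ t) (hvμ : ∀ e, v e ⬝ᵥ v e ≤ μ) :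
    ∑ e, (traceExp t (A + vecMulVec (v e) (v e)) - traceExp t A) ≤
      (Real.exp (t * μ) - 1) / μ * traceExp t A := by
  have h1 := hasSum_sum (s := (Finset.univ : Finset ι)) fun e _ =>
    (hasSum_traceExp (hA.add (posSemidef_vecMulVec_self (v e))) t).sub (hasSum_traceExp hA t)
  have h2 := ((traceExp_add_smul_one hA t μ).sub (hasSum_traceExp hA t)).mul_left μ⁻¹
  have h3 := hasSum_le (fun p => ?_) h1 h2
  · refine h3.trans (le_of_eq ?_)
    field_simp
  · have h4 : ∀ e, ((A + vecMulVec (v e) (v e)) ^ p).trace - (A ^ p).trace ≤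
        ∑ i ∈ Finset.range p,
          v e ⬝ᵥ (((A + μ • (1 : Matrix κ κ ℝ)) ^ (p - 1 - i) * A ^ i) *ᵥ v e) := by
      intro e
      rw [trace_rankOne_pow_sub]
      exact Finset.sum_le_sum fun i _ => (rankOne_moment_bounds hA (hvμ e) _ _).2
    have hcomm : Commute A (A + μ • (1 : Matrix κ κ ℝ)) :=
      (Commute.refl A).add_right ((Commute.one_right A).smul_right μ)
    have h5 : ∑ e, ∑ i ∈ Finset.range p,
          v e ⬝ᵥ (((A + μ • (1 : Matrix κ κ ℝ)) ^ (p - 1 - i) * A ^ i) *ᵥ v e) =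
        μ⁻¹ * (((A + μ • (1 : Matrix κ κ ℝ)) ^ p).trace - (A ^ p).trace) := by
      rw [Finset.sum_comm]
      simp only [sum_dotProduct_mulVec hv]
      rw [← Matrix.trace_sum, ← Matrix.trace_sub, pow_sub_pow_eq_sum, add_sub_cancel_left,
        ← smul_eq_mul, ← Matrix.trace_smul, Finset.smul_sum]
      congr 1
      refine Finset.sum_congr rfl fun i _ => ?_
      rw [mul_smul_comm, smul_mul_assoc, smul_smul, inv_mul_cancel₀ hμ.ne', one_smul, mul_one]
      exact ((hcomm.pow_pow i (p - 1 - i)).eq).symm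
    have h6 := (Finset.sum_le_sum fun e (_ : e ∈ Finset.univ) => h4 e).trans_eq h5
    have h7 := mul_le_mul_of_nonneg_left h6 (show 0 ≤ t ^ p / (p.factorial : ℝ) by positivity)
    rw [Finset.mul_sum] at h7
    calc _ = ∑ e, t ^ p / (p.factorial : ℝ) *
          (((A + vecMulVec (v e) (v e)) ^ p).trace - (A ^ p).trace) :=
          Finset.sum_congr rfl fun e _ => by ring
      _ ≤ _ := h7
      _ = _ := by ring

end MatrixChernoff

section SubsetAverages

theorem posSemidef_sum_rankOne {ι κ : Type*} [Fintype κ] [DecidableEq ι] (v : ι → κ → ℝ)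
    (S : Finset ι) :
    (∑ e ∈ S, vecMulVec (v e) (v e)).PosSemidef := by
  induction S using Finset.induction_on with
  | empty => simpa using Matrix.PosSemidef.zero
  | insert e S he ih =>
    rw [Finset.sum_insert he]
    exact (posSemidef_vecMulVec_self _).add ih

variable {ι : Type*} [Fintype ι] [DecidableEq ι]

theorem sum_powersetCard_succ (f : Finset ι → ℝ) (k : ℕ) :
    ((k : ℝ) + 1) * ∑ S ∈ Finset.powersetCard (k + 1) Finset.univ, f S =
      ∑ S ∈ Finset.powersetCard k Finset.univ, ∑ e ∈ Sᶜ, f (insert e S) := by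
  have h : ((k : ℝ) + 1) * ∑ S ∈ Finset.powersetCard (k + 1) (Finset.univ : Finset ι), f S =
      ∑ S ∈ Finset.powersetCard (k + 1) (Finset.univ : Finset ι), ∑ _e ∈ S, f S := by
    rw [Finset.mul_sum]
    refine Finset.sum_congr rfl fun S hS => ?_
    rw [Finset.sum_const, (Finset.mem_powersetCard.mp hS).2, nsmul_eq_mul]
    push_cast
    ring
  rw [h, Finset.sum_sigma', Finset.sum_sigma']
  refine Finset.sum_bij' (fun x _ => ⟨x.1.erase x.2, x.2⟩) (fun x _ => ⟨insert x.2 x.1, x.2⟩)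
    ?_ ?_ ?_ ?_ ?_
  · rintro ⟨S, e⟩ hx
    simp only [Finset.mem_sigma, Finset.mem_powersetCard, Finset.subset_univ, true_and,
      Finset.mem_compl, Finset.mem_erase, ne_eq, not_true_eq_false, false_and, not_false_eq_true,
      and_true] at hx ⊢
    rw [Finset.card_erase_of_mem hx.2, hx.1, Nat.add_sub_cancel]
  · rintro ⟨S, e⟩ hx
    simp only [Finset.mem_sigma, Finset.mem_powersetCard, Finset.subset_univ, true_and,
      Finset.mem_compl, Finset.mem_insert, true_or, and_true] at hx ⊢
    rw [Finset.card_insert_of_notMem hx.2, hx.1]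
  · rintro ⟨S, e⟩ hx
    simp only [Finset.mem_sigma] at hx
    simp [Finset.insert_erase hx.2]
  · rintro ⟨S, e⟩ hx
    simp only [Finset.mem_sigma, Finset.mem_compl] at hx
    simp [Finset.erase_insert hx.2]
  · rintro ⟨S, e⟩ hx
    simp only [Finset.mem_sigma] at hx
    simp [Finset.insert_erase hx.2]

theorem sum_powersetCard_le_of_insert {f : Finset ι → ℝ} {b C : ℝ} (hb : 0 ≤ b)
    (h0 : f ∅ ≤ C) (hf : ∀ S, 0 ≤ f S)
    (hstep : ∀ S, ∑ e ∈ Sᶜ, (f (insert e S) - f S) ≤ b * f S) (m : ℕ)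
    (hm : 2 * m ≤ Fintype.card ι) :
    ∑ S ∈ Finset.powersetCard m Finset.univ, f S ≤
      (Fintype.card ι).choose m * (C * (1 + 2 * b / Fintype.card ι) ^ m) := by
  induction m with
  | zero => simpa using h0
  | succ k ih =>
    have ih' := ih (by omega)
    set N := Fintype.card ι with hN
    have hNpos : (0 : ℝ) < N := by exact_mod_cast (by omega : 0 < N)
    have hkN : (k : ℝ) ≤ N := by exact_mod_cast (by omega : k ≤ N)
    have hNk : (N : ℝ) / 2 ≤ N - k := by
      have : (2 * (k + 1 : ℕ) : ℝ) ≤ N := by exact_mod_cast hm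
      push_cast at this
      linarith
    have h1 : ((k : ℝ) + 1) * ∑ S ∈ Finset.powersetCard (k + 1) Finset.univ, f S ≤
        ∑ S ∈ Finset.powersetCard k Finset.univ, (N - k) * (1 + 2 * b / N) * f S := by
      rw [sum_powersetCard_succ]
      refine Finset.sum_le_sum fun S hS => ?_
      have h2 := hstep S
      rw [Finset.sum_sub_distrib, Finset.sum_const, Finset.card_compl,
        (Finset.mem_powersetCard.mp hS).2, nsmul_eq_mul, Nat.cast_sub (by omega)] at h2
      have h3 : b ≤ (N - k) * (2 * b / N) := by
        calc b = (N : ℝ) / 2 * (2 * b / N) := by field_simp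
          _ ≤ _ := mul_le_mul_of_nonneg_right hNk (by positivity)
      nlinarith [mul_le_mul_of_nonneg_right h3 (hf S)]
    rw [← Finset.mul_sum] at h1
    have h4 : ((N.choose (k + 1) : ℕ) : ℝ) * (k + 1) = N.choose k * (N - k) := by
      have := Nat.choose_succ_right_eq N k
      have h5 : ((N.choose (k + 1) * (k + 1) : ℕ) : ℝ) = ((N.choose k * (N - k) : ℕ) : ℝ) := by
        rw [this]
      rw [Nat.cast_mul, Nat.cast_mul, Nat.cast_sub (by omega)] at h5
      exact_mod_cast h5
    have h6 := mul_le_mul_of_nonneg_left ih'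
      (show 0 ≤ ((N : ℝ) - k) * (1 + 2 * b / N) from
        mul_nonneg (by linarith) (by positivity))
    have h7 := h1.trans h6
    have hk : (0 : ℝ) < k + 1 := by positivity
    refine le_of_mul_le_mul_left (h7.trans (le_of_eq ?_)) hk
    rw [pow_succ]
    linear_combination (-(C * ((1 + 2 * b / N) ^ k * (1 + 2 * b / N)))) * h4

variable {κ : Type*} [Fintype κ] [DecidableEq κ]

/-- Matrix Chernoff bound for rank-one summands sampled without replacement. -/
theorem rankOne_chernoff {v : ι → κ → ℝ}
    (hv : ∑ e, vecMulVec (v e) (v e) = (1 : Matrix κ κ ℝ)) {μ τ : ℝ} (hμ : 0 < μ)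
    (hvμ : ∀ e, v e ⬝ᵥ v e ≤ μ) (m : ℕ) (hm : 2 * m ≤ Fintype.card ι) {ρ : ℝ} (hρ0 : 0 ≤ ρ)
    (hρ : (m : ℝ) ≤ ρ * Fintype.card ι) :
    unifProb (fun Ω : {Ω : Finset ι // Ω.card = m} =>
      ∃ x : κ → ℝ, τ * (x ⬝ᵥ x) < ∑ e ∈ Ω.1, (v e ⬝ᵥ x) ^ 2) ≤
      Fintype.card κ * Real.exp ((4 * ρ - τ) / μ) := by
  set G : Finset ι → Matrix κ κ ℝ := fun S => ∑ e ∈ S, vecMulVec (v e) (v e) with hG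
  have hGpsd : ∀ S, (G S).PosSemidef := posSemidef_sum_rankOne v
  have ht : 0 ≤ μ⁻¹ := by positivity
  have hquad : ∀ S x, x ⬝ᵥ (G S *ᵥ x) = ∑ e ∈ S, (v e ⬝ᵥ x) ^ 2 := by
    intro S x
    rw [hG, Matrix.sum_mulVec, dotProduct_sum]
    refine Finset.sum_congr rfl fun e _ => ?_
    rw [Matrix.vecMulVec_mulVec, op_smul_eq_smul, dotProduct_smul, smul_eq_mul,
      dotProduct_comm x, sq]
  have hexp2 : Real.exp 1 - 1 ≤ 2 := by linarith [Real.exp_one_lt_d9]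
  have hexp1 : 0 ≤ Real.exp 1 - 1 := by linarith [Real.add_one_le_exp (1 : ℝ)]
  have hsum := sum_powersetCard_le_of_insert (ι := ι) (f := fun S => traceExp μ⁻¹ (G S))
    (b := 2 / μ) (C := Fintype.card κ) (by positivity)
    (by simp [hG, traceExp_zero]) (fun S => traceExp_nonneg (hGpsd S) _) (by
      intro S
      have h1 : ∑ e ∈ Sᶜ, (traceExp μ⁻¹ (G (insert e S)) - traceExp μ⁻¹ (G S)) =
          ∑ e ∈ Sᶜ, (traceExp μ⁻¹ (G S + vecMulVec (v e) (v e)) - traceExp μ⁻¹ (G S)) := by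
        refine Finset.sum_congr rfl fun e he => ?_
        rw [hG]
        simp only
        rw [Finset.sum_insert (Finset.mem_compl.mp he), add_comm (vecMulVec _ _)]
      have h2 := Finset.sum_le_sum_of_subset_of_nonneg (Finset.subset_univ Sᶜ)
        (fun e _ _ => sub_nonneg.mpr (traceExp_le_add_rankOne (hGpsd S) (v e) ht))
      have h3 := sum_traceExp_rankOne_sub_le (hGpsd S) hv hμ ht hvμ
      rw [inv_mul_cancel₀ hμ.ne'] at h3
      rw [h1]
      refine h2.trans (h3.trans (mul_le_mul_of_nonneg_right ?_ (traceExp_nonneg (hGpsd S) _)))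
      gcongr) m hm
  have hprob : unifProb (fun Ω : {Ω : Finset ι // Ω.card = m} =>
      ∃ x : κ → ℝ, τ * (x ⬝ᵥ x) < ∑ e ∈ Ω.1, (v e ⬝ᵥ x) ^ 2) ≤
      unifExp (fun Ω : {Ω : Finset ι // Ω.card = m} =>
        Real.exp (-(μ⁻¹ * τ)) * traceExp μ⁻¹ (G Ω.1)) := by
    refine unifProb_le_unifExp (fun Ω => mul_nonneg (Real.exp_pos _).le
      (traceExp_nonneg (hGpsd _) _)) ?_
    rintro Ω ⟨x, hx⟩
    rw [← hquad] at hx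
    have h := exp_le_traceExp_of_lt (hGpsd Ω.1) ht hx
    calc (1 : ℝ) = Real.exp (-(μ⁻¹ * τ)) * Real.exp (μ⁻¹ * τ) := by
          rw [← Real.exp_add, neg_add_cancel, Real.exp_zero]
      _ ≤ _ := mul_le_mul_of_nonneg_left h (Real.exp_pos _).le
  refine hprob.trans ?_
  rw [unifExp_const_mul, unifExp, Fintype.card_finset_len]
  have hsub : ∑ Ω : {Ω : Finset ι // Ω.card = m}, traceExp μ⁻¹ (G Ω.1) =
      ∑ S ∈ Finset.powersetCard m Finset.univ, traceExp μ⁻¹ (G S) := by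
    symm
    refine Finset.sum_subtype _ (fun S => ?_) _
    simp [Finset.mem_powersetCard]
  rw [hsub]
  set N := Fintype.card ι
  have hch : (0 : ℝ) < N.choose m := by exact_mod_cast Nat.choose_pos (by omega)
  have h8 : (1 + 2 * (2 / μ) / (N : ℝ)) ^ m ≤ Real.exp (4 * ρ / μ) := by
    rcases Nat.eq_zero_or_pos m with rfl | hmpos
    · rw [pow_zero]
      exact Real.one_le_exp (by positivity)
    · have hNp : (0 : ℝ) < N := by exact_mod_cast (by omega : 0 < N)
      calc (1 + 2 * (2 / μ) / (N : ℝ)) ^ m ≤ Real.exp (2 * (2 / μ) / N) ^ m := by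
            refine pow_le_pow_left₀ (by positivity) ?_ m
            rw [add_comm]
            exact Real.add_one_le_exp _
        _ = Real.exp (m * (2 * (2 / μ) / N)) := by rw [← Real.exp_nat_mul]
        _ ≤ _ := by
            refine Real.exp_le_exp.mpr ?_
            calc (m : ℝ) * (2 * (2 / μ) / N) ≤ ρ * N * (2 * (2 / μ) / N) :=
                  mul_le_mul_of_nonneg_right hρ (by positivity)
              _ = _ := by field_simp; ring
  calc Real.exp (-(μ⁻¹ * τ)) *
        ((∑ S ∈ Finset.powersetCard m Finset.univ, traceExp μ⁻¹ (G S)) / N.choose m)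
      ≤ Real.exp (-(μ⁻¹ * τ)) * (Fintype.card κ * Real.exp (4 * ρ / μ)) := by
        refine mul_le_mul_of_nonneg_left ?_ (Real.exp_pos _).le
        rw [div_le_iff₀ hch, mul_comm _ ((N.choose m : ℕ) : ℝ)]
        refine hsum.trans ?_
        gcongr
    _ = _ := by
        rw [mul_left_comm, ← Real.exp_add]
        congr 2
        field_simp
        ring

end SubsetAverages

section SupportGeometry

variable {n1 n2 r : ℕ}

theorem sum_vecMulVec_rows {ι κ : Type*} [Fintype ι] [Fintype κ] [DecidableEq κ]
    {U : Matrix ι κ ℝ} (hU : Uᵀ * U = 1) : ∑ i, vecMulVec (U i) (U i) = 1 := by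
  rw [← hU]
  ext k l
  simp [Matrix.sum_apply, Matrix.vecMulVec_apply, Matrix.mul_apply]

/-- Column version: sampling the rows of `U` along a column of a random support. -/
theorem unifProb_column_le {U : Matrix (Fin n1) (Fin r) ℝ} (hU : Uᵀ * U = 1) {μ τ ρ : ℝ}
    (hμ : 0 < μ) (hUi : ∀ i, ∑ k, U i k ^ 2 ≤ μ) (m : ℕ) (hm : 2 * m ≤ n1 * n2) (hρ0 : 0 ≤ ρ)
    (hρ : (m : ℝ) ≤ ρ * (n1 * n2)) (j : Fin n2) :
    unifProb (fun Ω : {Ω : Finset (Fin n1 × Fin n2) // Ω.card = m} => ∃ x : Fin r → ℝ,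
      τ * ∑ k, x k ^ 2 < ∑ i, (if (i, j) ∈ Ω.1 then (∑ k, U i k * x k) ^ 2 else 0)) ≤
      r * Real.exp ((4 * ρ - τ) / μ) := by
  set v : Fin n1 × Fin n2 → Fin r → ℝ := fun e => if e.2 = j then U e.1 else 0 with hv
  have h := rankOne_chernoff (v := v) (μ := μ) (τ := τ) (ρ := ρ) ?_ hμ ?_ m ?_ hρ0 ?_
  · rw [Fintype.card_fin] at h
    refine le_trans (unifProb_mono fun Ω => ?_) h
    rintro ⟨x, hx⟩
    refine ⟨x, ?_⟩
    have e1 : x ⬝ᵥ x = ∑ k, x k ^ 2 := by simp [dotProduct, sq]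
    have e2 : ∑ e ∈ Ω.1, (v e ⬝ᵥ x) ^ 2 =
        ∑ i, (if (i, j) ∈ Ω.1 then (∑ k, U i k * x k) ^ 2 else 0) := by
      rw [← Finset.sum_ite_mem_eq, Fintype.sum_prod_type_right, Finset.sum_eq_single j]
      · refine Finset.sum_congr rfl fun b _ => ?_
        simp [hv, dotProduct]
      · intro b _ hb
        simp [hv, hb]
      · simp
    rw [e1, e2]
    exact hx
  · rw [Fintype.sum_prod_type, ← sum_vecMulVec_rows hU]
    refine Finset.sum_congr rfl fun i _ => ?_
    rw [Finset.sum_eq_single j]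
    · simp [hv]
    · intro b _ hb
      simp [hv, hb]
    · simp
  · intro e
    by_cases he : e.2 = j
    · have := hUi e.1
      simpa [hv, he, dotProduct, sq] using this
    · simpa [hv, he] using hμ.le
  · simpa using hm
  · simpa using hρ

/-- Row version: sampling the rows of `V` along a row of a random support. -/
theorem unifProb_row_le {V : Matrix (Fin n2) (Fin r) ℝ} (hV : Vᵀ * V = 1) {μ τ ρ : ℝ}
    (hμ : 0 < μ) (hVj : ∀ j, ∑ k, V j k ^ 2 ≤ μ) (m : ℕ) (hm : 2 * m ≤ n1 * n2) (hρ0 : 0 ≤ ρ)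
    (hρ : (m : ℝ) ≤ ρ * (n1 * n2)) (i : Fin n1) :
    unifProb (fun Ω : {Ω : Finset (Fin n1 × Fin n2) // Ω.card = m} => ∃ x : Fin r → ℝ,
      τ * ∑ k, x k ^ 2 < ∑ j, (if (i, j) ∈ Ω.1 then (∑ k, V j k * x k) ^ 2 else 0)) ≤
      r * Real.exp ((4 * ρ - τ) / μ) := by
  set v : Fin n1 × Fin n2 → Fin r → ℝ := fun e => if e.1 = i then V e.2 else 0 with hv
  have h := rankOne_chernoff (v := v) (μ := μ) (τ := τ) (ρ := ρ) ?_ hμ ?_ m ?_ hρ0 ?_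
  · rw [Fintype.card_fin] at h
    refine le_trans (unifProb_mono fun Ω => ?_) h
    rintro ⟨x, hx⟩
    refine ⟨x, ?_⟩
    have e1 : x ⬝ᵥ x = ∑ k, x k ^ 2 := by simp [dotProduct, sq]
    have e2 : ∑ e ∈ Ω.1, (v e ⬝ᵥ x) ^ 2 =
        ∑ j, (if (i, j) ∈ Ω.1 then (∑ k, V j k * x k) ^ 2 else 0) := by
      rw [← Finset.sum_ite_mem_eq, Fintype.sum_prod_type, Finset.sum_eq_single i]
      · refine Finset.sum_congr rfl fun b _ => ?_
        simp [hv, dotProduct]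
      · intro b _ hb
        simp [hv, hb]
      · simp
    rw [e1, e2]
    exact hx
  · rw [Fintype.sum_prod_type_right, ← sum_vecMulVec_rows hV]
    refine Finset.sum_congr rfl fun j _ => ?_
    rw [Finset.sum_eq_single i]
    · simp [hv]
    · intro b _ hb
      simp [hv, hb]
    · simp
  · intro e
    by_cases he : e.1 = i
    · have := hVj e.2
      simpa [hv, he, dotProduct, sq] using this
    · simpa [hv, he] using hμ.le
  · simpa using hm
  · simpa using hρ

/-- With high probability `P_Ω P_T` is a small operator. -/
theorem unifProb_not_small_projS_tangentProj_le {U : Matrix (Fin n1) (Fin r) ℝ}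
    {V : Matrix (Fin n2) (Fin r) ℝ} (hU : Uᵀ * U = 1) (hV : Vᵀ * V = 1) {μ τ ρ : ℝ}
    (hμ : 0 < μ) (hτ : 0 ≤ τ) (hUi : ∀ i, ∑ k, U i k ^ 2 ≤ μ) (hVj : ∀ j, ∑ k, V j k ^ 2 ≤ μ)
    (m : ℕ) (hm : 2 * m ≤ n1 * n2) (hρ0 : 0 ≤ ρ) (hρ : (m : ℝ) ≤ ρ * (n1 * n2)) :
    unifProb (fun Ω : {Ω : Finset (Fin n1 × Fin n2) // Ω.card = m} =>
      ¬ ∀ M, fsq (projS Ω.1 (tangentProj U V M)) ≤ 4 * τ * fsq M) ≤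
      (n1 + n2) * (r * Real.exp ((4 * ρ - τ) / μ)) := by
  have hc := unifProb_exists_le_card_mul (Finset.univ : Finset (Fin n2)) _ fun j _ =>
    unifProb_column_le (n2 := n2) (τ := τ) hU hμ hUi m hm hρ0 hρ j
  have hr := unifProb_exists_le_card_mul (Finset.univ : Finset (Fin n1)) _ fun i _ =>
    unifProb_row_le (n1 := n1) (τ := τ) hV hμ hVj m hm hρ0 hρ i
  rw [Finset.card_univ, Fintype.card_fin] at hc hr
  refine le_trans (unifProb_mono (F := fun Ω => _ ∨ _) fun Ω hΩ => ?_)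
    ((unifProb_or_le _ _).trans ((add_le_add hc hr).trans (le_of_eq (by ring))))
  by_contra hcon
  push Not at hcon
  exact hΩ (fsq_projS_tangentProj_le hU hV hτ Ω.1 (fun j x => hcon.1 j (Finset.mem_univ j) x)
    (fun i x => hcon.2 i (Finset.mem_univ i) x))

end SupportGeometry

section Golfing

variable {n1 n2 r : ℕ} {U : Matrix (Fin n1) (Fin r) ℝ} {V : Matrix (Fin n2) (Fin r) ℝ}

/-- Keep the entries selected by `γ` and rescale them by `Q`. -/
def resample {Q : ℕ} (γ : Fin n1 × Fin n2 → Fin Q) (Z : Matrix (Fin n1) (Fin n2) ℝ) :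
    Matrix (Fin n1) (Fin n2) ℝ :=
  Matrix.of fun i j => if (γ (i, j)).val = 0 then Q * Z i j else 0

theorem resample_sub_apply {Q : ℕ} (γ : Fin n1 × Fin n2 → Fin Q)
    (Z : Matrix (Fin n1) (Fin n2) ℝ) (i : Fin n1) (j : Fin n2) :
    (resample γ Z - Z) i j = selector Q (γ (i, j)) * Z i j := by
  simp only [resample, selector, Matrix.sub_apply, Matrix.of_apply]
  split_ifs <;> ring

theorem unifProb_resample_entry_le (hU : Uᵀ * U = 1) (hV : Vᵀ * V = 1) {μ : ℝ} (hμ : 0 < μ)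
    (hUi : ∀ i, ∑ k, U i k ^ 2 ≤ μ) (hVj : ∀ j, ∑ k, V j k ^ 2 ≤ μ) {Q : ℕ} (hQ : 0 < Q)
    {Z : Matrix (Fin n1) (Fin n2) ℝ} (hZT : tangentProj U V Z = Z) {β : ℝ} (hβ : 0 < β)
    (hZ : ∀ i j, |Z i j| ≤ β) (i : Fin n1) (j : Fin n2) :
    unifProb (fun γ : Fin n1 × Fin n2 → Fin Q =>
      β / 2 < |(Z - tangentProj U V (resample γ Z)) i j|) ≤
      2 * Real.exp (-(1 / (32 * (Q * μ)))) := by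
  set E := tangentProj U V (Matrix.single i j 1) with hE
  have hkey : ∀ γ : Fin n1 × Fin n2 → Fin Q, (Z - tangentProj U V (resample γ Z)) i j =
      -∑ p, selector Q (γ p) * (Z p.1 p.2 * E p.1 p.2) := by
    intro γ
    have h1 : Z - tangentProj U V (resample γ Z) = -tangentProj U V (resample γ Z - Z) := by
      rw [tangentProj_sub, hZT, neg_sub]
    rw [h1, Matrix.neg_apply, tangentProj_apply_eq_sum]
    congr 1
    refine Finset.sum_congr rfl fun p _ => ?_
    rw [resample_sub_apply]
    ring
  have htail : ∀ σ : ℝ, |σ| = 1 → unifProb (fun γ : Fin n1 × Fin n2 → Fin Q =>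
      1 / 2 ≤ ∑ p, selector Q (γ p) * (σ * (Z p.1 p.2 * E p.1 p.2) / β)) ≤
      Real.exp (-(1 / (32 * (Q * μ)))) := by
    intro σ hσ
    have hσ2 : σ ^ 2 = 1 := by rw [← sq_abs, hσ, one_pow]
    have hle : ∀ p : Fin n1 × Fin n2, |Z p.1 p.2 / β| ≤ 1 := fun p => by
      rw [abs_div, abs_of_pos hβ, div_le_one hβ]
      exact hZ _ _
    refine (selector_tail_of_small hQ _ (b := 2 * μ) (by positivity) (by norm_num) (by norm_num)
      ?_ ?_).trans (le_of_eq ?_)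
    · refine le_trans ?_ (fsq_tangentProj_single_le hU hV hUi hVj i j)
      rw [fsq, ← Fintype.sum_prod_type']
      refine Finset.sum_le_sum fun p _ => ?_
      have e : (σ * (Z p.1 p.2 * E p.1 p.2) / β) ^ 2 = (Z p.1 p.2 / β) ^ 2 * E p.1 p.2 ^ 2 := by
        have : σ * (Z p.1 p.2 * E p.1 p.2) / β = σ * (Z p.1 p.2 / β * E p.1 p.2) := by ring
        rw [this, mul_pow, hσ2, one_mul, mul_pow]
      rw [e]
      refine mul_le_of_le_one_left (sq_nonneg _) ?_
      rw [← sq_abs]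
      exact pow_le_one₀ (abs_nonneg _) (hle p)
    · intro p
      have : σ * (Z p.1 p.2 * E p.1 p.2) / β = σ * (Z p.1 p.2 / β * E p.1 p.2) := by ring
      rw [this, abs_mul, hσ, one_mul, abs_mul]
      exact (mul_le_of_le_one_left (abs_nonneg _) (hle p)).trans
        (abs_tangentProj_single_le hU hV hμ.le hUi hVj i p.1 j p.2)
    · congr 2
      have : (Q : ℝ) ≠ 0 := by exact_mod_cast hQ.ne'
      field_simp
      norm_num
  refine le_trans (unifProb_mono (F := fun γ =>
      (1 / 2 ≤ ∑ p, selector Q (γ p) * (1 * (Z p.1 p.2 * E p.1 p.2) / β)) ∨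
      (1 / 2 ≤ ∑ p, selector Q (γ p) * (-1 * (Z p.1 p.2 * E p.1 p.2) / β))) ?_)
    ((unifProb_or_le _ _).trans
      ((add_le_add (htail 1 (by simp)) (htail (-1) (by simp))).trans (le_of_eq (by ring))))
  intro γ hγ
  rw [hkey, abs_neg] at hγ
  have e : ∀ σ : ℝ, ∑ p, selector Q (γ p) * (σ * (Z p.1 p.2 * E p.1 p.2) / β) =
      σ * (∑ p, selector Q (γ p) * (Z p.1 p.2 * E p.1 p.2)) / β := by
    intro σ
    rw [Finset.mul_sum, Finset.sum_div]
    exact Finset.sum_congr rfl fun p _ => by ring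
  rw [e, e, le_div_iff₀ hβ, le_div_iff₀ hβ]
  rcases lt_abs.mp hγ with h | h
  · left
    linarith
  · right
    linarith

theorem unifProb_resample_spec_le (hn : n2 ≤ n1) {Q : ℕ} (hQ : 0 < Q)
    {Z : Matrix (Fin n1) (Fin n2) ℝ} {β : ℝ} (hβ : 0 < β) (hZ : ∀ i j, |Z i j| ≤ β) :
    unifProb (fun γ : Fin n1 × Fin n2 → Fin Q =>
      20 * Q * Real.sqrt n1 * β < spec (resample γ Z - Z)) ≤ Real.exp (-n1) := by
  have h := unifProb_lt_spec_le (fun γ : Fin n1 × Fin n2 → Fin Q => resample γ Z - Z)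
    (s := 20 * Q * Real.sqrt n1 * β) (δ := Real.exp (-(12 * n1))) hn (Real.exp_pos _).le ?_
  · refine h.trans (le_of_eq ?_)
    rw [← Real.exp_add]
    ring_nf
  · intro w hw z hz
    have hQ' : (0 : ℝ) < Q := by exact_mod_cast hQ
    have e : ∀ γ : Fin n1 × Fin n2 → Fin Q,
        ∑ p, (resample γ Z - Z) p.1 p.2 * netCoeff w z p =
          ∑ p, selector Q (γ p) * (Z p.1 p.2 * netCoeff w z p) := fun γ =>
      Finset.sum_congr rfl fun p _ => by rw [resample_sub_apply]; ring
    simp only [e]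
    refine (selector_tail hQ _ (v := 16 * β ^ 2) (by positivity) (by positivity) ?_).trans
      (Real.exp_le_exp.mpr ?_)
    · calc ∑ p : Fin n1 × Fin n2, (Z p.1 p.2 * netCoeff w z p) ^ 2
          ≤ ∑ p : Fin n1 × Fin n2, β ^ 2 * netCoeff w z p ^ 2 := by
            refine Finset.sum_le_sum fun p _ => ?_
            rw [mul_pow]
            refine mul_le_mul_of_nonneg_right ?_ (sq_nonneg _)
            rw [← sq_abs]
            exact pow_le_pow_left₀ (abs_nonneg _) (hZ _ _) 2
        _ ≤ _ := by
            rw [← Finset.mul_sum, mul_comm]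
            exact mul_le_mul_of_nonneg_right (sum_netCoeff_sq_le hw hz) (sq_nonneg _)
    · have e2 : (20 * Q * Real.sqrt n1 * β) ^ 2 / (2 * (Q ^ 2 * (16 * β ^ 2))) =
          25 / 2 * n1 := by
        rw [mul_pow, mul_pow, mul_pow, Real.sq_sqrt (Nat.cast_nonneg n1)]
        field_simp
        ring
      rw [e2]
      have : (0 : ℝ) ≤ n1 := Nat.cast_nonneg n1
      linarith

/-- Failure probability of a single golfing step. -/
noncomputable def golfError (n1 n2 Q : ℕ) (μ : ℝ) : ℝ :=
  n1 * n2 * (2 * Real.exp (-(1 / (32 * (Q * μ))))) + Real.exp (-n1)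

theorem golfError_nonneg (n1 n2 Q : ℕ) (μ : ℝ) : 0 ≤ golfError n1 n2 Q μ := by
  unfold golfError
  positivity

theorem unifProb_golf_step_le (hU : Uᵀ * U = 1) (hV : Vᵀ * V = 1) {μ : ℝ} (hμ : 0 < μ)
    (hUi : ∀ i, ∑ k, U i k ^ 2 ≤ μ) (hVj : ∀ j, ∑ k, V j k ^ 2 ≤ μ) (hn : n2 ≤ n1) {Q : ℕ}
    (hQ : 0 < Q) {Z : Matrix (Fin n1) (Fin n2) ℝ} (hZT : tangentProj U V Z = Z) {β : ℝ}
    (hβ : 0 < β) (hZ : ∀ i j, |Z i j| ≤ β) :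
    unifProb (fun γ : Fin n1 × Fin n2 → Fin Q =>
      ¬ ((∀ i j, |(Z - tangentProj U V (resample γ Z)) i j| ≤ β / 2) ∧
        spec (resample γ Z - Z) ≤ 20 * Q * Real.sqrt n1 * β)) ≤ golfError n1 n2 Q μ := by
  have h1 := unifProb_exists_le_card_mul (Finset.univ : Finset (Fin n1 × Fin n2)) _
    fun p _ => unifProb_resample_entry_le hU hV hμ hUi hVj hQ hZT hβ hZ p.1 p.2
  have h2 := unifProb_resample_spec_le hn hQ hβ hZ
  rw [Finset.card_univ, Fintype.card_prod, Fintype.card_fin, Fintype.card_fin, Nat.cast_mul] at h1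
  refine le_trans (unifProb_mono (F := fun γ => _ ∨ _) fun γ hγ => ?_)
    ((unifProb_or_le _ _).trans (add_le_add h1 h2))
  by_contra hcon
  push Not at hcon
  exact hγ ⟨fun i j => hcon.1 (i, j) (Finset.mem_univ _), hcon.2⟩

/-- The output of the golfing scheme: `Y` is supported on the sampled entries and `P_T Y`
approximates `Z`. -/
def GolfSuccess (U : Matrix (Fin n1) (Fin r) ℝ) (V : Matrix (Fin n2) (Fin r) ℝ) {K Q : ℕ}
    (g : Fin K → Fin n1 × Fin n2 → Fin Q) (Z : Matrix (Fin n1) (Fin n2) ℝ) (β : ℝ) : Prop :=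
  ∃ Y : Matrix (Fin n1) (Fin n2) ℝ,
    (∀ i j, (∀ k, (g k (i, j)).val ≠ 0) → Y i j = 0) ∧
    (∀ i j, |Y i j| ≤ 2 * Q * β) ∧
    (∀ i j, |(Z - tangentProj U V Y) i j| ≤ β / 2 ^ K) ∧
    spec (Y - tangentProj U V Y) ≤ 40 * Q * Real.sqrt n1 * β

theorem golfSuccess_cons (hU : Uᵀ * U = 1) (hV : Vᵀ * V = 1) {K Q : ℕ}
    {γ : Fin n1 × Fin n2 → Fin Q} {g : Fin K → Fin n1 × Fin n2 → Fin Q}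
    {Z : Matrix (Fin n1) (Fin n2) ℝ} (hZT : tangentProj U V Z = Z) {β : ℝ}
    (hβ : 0 < β) (hZ : ∀ i j, |Z i j| ≤ β)
    (hspec : spec (resample γ Z - Z) ≤ 20 * Q * Real.sqrt n1 * β)
    (hg : GolfSuccess U V g (Z - tangentProj U V (resample γ Z)) (β / 2)) :
    GolfSuccess U V (Fin.cons γ g : Fin (K + 1) → Fin n1 × Fin n2 → Fin Q) Z β := by
  obtain ⟨Y, hsupp, hY, hres, hsp⟩ := hg
  refine ⟨resample γ Z + Y, ?_, ?_, ?_, ?_⟩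
  · intro i j hk
    have h0 := hk 0
    rw [Fin.cons_zero] at h0
    rw [Matrix.add_apply, hsupp i j fun k => by simpa using hk k.succ, resample, Matrix.of_apply,
      if_neg h0, add_zero]
  · intro i j
    have h1 : |resample γ Z i j| ≤ Q * β := by
      rw [resample, Matrix.of_apply]
      split_ifs
      · rw [abs_mul, Nat.abs_cast]
        exact mul_le_mul_of_nonneg_left (hZ i j) (Nat.cast_nonneg _)
      · rw [abs_zero]
        positivity
    rw [Matrix.add_apply]
    have h2 := hY i j
    have h3 := abs_add_le (resample γ Z i j) (Y i j)
    linarith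
  · intro i j
    rw [tangentProj_add, ← sub_sub]
    refine (hres i j).trans (le_of_eq ?_)
    rw [pow_succ']
    field_simp
  · have e : resample γ Z + Y - tangentProj U V (resample γ Z + Y) =
        ((resample γ Z - Z) - tangentProj U V (resample γ Z - Z)) + (Y - tangentProj U V Y) := by
      rw [tangentProj_add, tangentProj_sub, hZT]
      abel
    rw [e]
    have h1 := spec_sub_tangentProj_le hU hV (resample γ Z - Z)
    have h2 := spec_add_le ((resample γ Z - Z) - tangentProj U V (resample γ Z - Z))
      (Y - tangentProj U V Y)
    linarith

theorem unifProb_not_golfSuccess_le (hU : Uᵀ * U = 1) (hV : Vᵀ * V = 1) {μ : ℝ} (hμ : 0 < μ)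
    (hUi : ∀ i, ∑ k, U i k ^ 2 ≤ μ) (hVj : ∀ j, ∑ k, V j k ^ 2 ≤ μ) (hn : n2 ≤ n1) {Q : ℕ}
    (hQ : 0 < Q) (K : ℕ) {Z : Matrix (Fin n1) (Fin n2) ℝ} (hZT : tangentProj U V Z = Z) {β : ℝ}
    (hβ : 0 < β) (hZ : ∀ i j, |Z i j| ≤ β) :
    unifProb (fun g : Fin K → Fin n1 × Fin n2 → Fin Q => ¬ GolfSuccess U V g Z β) ≤
      K * golfError n1 n2 Q μ := by
  induction K generalizing Z β with
  | zero =>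
    have h : ∀ g : Fin 0 → Fin n1 × Fin n2 → Fin Q, GolfSuccess U V g Z β := by
      intro g
      refine ⟨0, fun _ _ _ => rfl, fun i j => ?_, fun i j => ?_, ?_⟩
      · rw [Matrix.zero_apply, abs_zero]
        positivity
      · simpa [tangentProj] using hZ i j
      · have e : (0 : Matrix (Fin n1) (Fin n2) ℝ) - tangentProj U V 0 = 0 := by simp [tangentProj]
        rw [e]
        exact spec_zero_le.trans (by positivity)
    simp [unifProb, h]
  | succ K ih =>
    rw [← unifProb_equiv (Fin.consEquiv fun _ : Fin (K + 1) => Fin n1 × Fin n2 → Fin Q)]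
    have hstep := unifProb_golf_step_le hU hV hμ hUi hVj hn hQ hZT hβ hZ
    refine (unifProb_prod_le (δ := K * golfError n1 n2 Q μ)
      (mul_nonneg (Nat.cast_nonneg _) (golfError_nonneg _ _ _ _)) fun γ hγ => ?_).trans
      ((add_le_add_left hstep _).trans (le_of_eq ?_))
    · rw [not_not] at hγ
      refine le_trans (unifProb_mono fun g hg hs => ?_)
        (ih (Z := Z - tangentProj U V (resample γ Z)) (β := β / 2) ?_ (by positivity) hγ.1)
      · exact hg (golfSuccess_cons hU hV hZT hβ hZ hγ.2 hs)
      · rw [tangentProj_sub, hZT, tangentProj_idem hU hV]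
    · push_cast
      ring

end Golfing

section Transfer

theorem unifExp_marginal {ι α : Type*} [Fintype ι] [DecidableEq ι] [Fintype α] [Nonempty α]
    (f : α → ℝ) (i₀ : ι) : unifExp (fun x : ι → α => f (x i₀)) = unifExp f := by
  have h := unifExp_pi (α := α) (fun i a => if i = i₀ then f a else 1)
  have e1 : (fun x : ι → α => ∏ i, (if i = i₀ then f (x i) else 1)) = fun x => f (x i₀) := by
    ext x
    rw [Finset.prod_ite_eq' Finset.univ i₀ fun i => f (x i), if_pos (Finset.mem_univ _)]
  have e2 : ∀ i, unifExp (fun a : α => if i = i₀ then f a else 1) =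
      if i = i₀ then unifExp f else 1 := by
    intro i
    split_ifs
    · rfl
    · exact unifExp_const 1
  rw [e1] at h
  rw [h]
  simp only [e2]
  rw [Finset.prod_ite_eq' Finset.univ i₀ fun _ => unifExp f, if_pos (Finset.mem_univ _)]

variable {ι : Type*} [Fintype ι]

theorem exists_perm_mem_iff [DecidableEq ι] {S T : Finset ι} (h : S.card = T.card) :
    ∃ σ : Equiv.Perm ι, ∀ p, σ p ∈ T ↔ p ∈ S := by
  refine ⟨(Finset.equivOfCardEq h).extendSubtype, fun p => ?_⟩
  by_cases hp : p ∈ S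
  · exact iff_of_true (Equiv.extendSubtype_mem (Finset.equivOfCardEq h) p hp) hp
  · exact iff_of_false (Equiv.extendSubtype_not_mem (Finset.equivOfCardEq h) p hp) hp

theorem card_disjoint_of_card [DecidableEq ι] (D : Finset ι) (m : ℕ) :
    (Finset.univ.filter fun Ω : {Ω : Finset ι // Ω.card = m} => Disjoint D Ω.1).card =
      (Fintype.card ι - D.card).choose m := by
  rw [← Finset.card_compl, ← Finset.card_powersetCard]
  refine Finset.card_bij (fun Ω _ => Ω.1) ?_ ?_ ?_
  · intro Ω hΩ
    rw [Finset.mem_powersetCard]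
    refine ⟨fun p hp => ?_, Ω.2⟩
    rw [Finset.mem_compl]
    exact fun hD => Finset.disjoint_left.mp (Finset.mem_filter.mp hΩ).2 hD hp
  · intro Ω _ Ω' _ h
    exact Subtype.ext h
  · intro S hS
    rw [Finset.mem_powersetCard] at hS
    refine ⟨⟨S, hS.2⟩, ?_, rfl⟩
    rw [Finset.mem_filter]
    refine ⟨Finset.mem_univ _, Finset.disjoint_left.mpr fun p hp hpS => ?_⟩
    exact Finset.mem_compl.mp (hS.1 hpS) hp

/-- If the law of the random set `D` is invariant under permutations, then a random set `Ω` of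
fixed cardinality is, up to a factor, at most as likely to have no good disjoint `D` as `D` is
to be bad. -/
theorem unifProb_not_exists_disjoint_le {G : Type*} [Fintype G] (D : G → Finset ι)
    (hsymm : ∀ σ : Equiv.Perm ι, ∃ e : G ≃ G, ∀ g p, σ p ∈ D (e g) ↔ p ∈ D g)
    (m : ℕ) (good : G → Prop)
    (hsize : 1 / 2 ≤ unifProb fun g => (D g).card + m ≤ Fintype.card ι) :
    unifProb (fun Ω : {Ω : Finset ι // Ω.card = m} => ¬ ∃ g, good g ∧ Disjoint (D g) Ω.1) ≤
      2 * unifProb (fun g => ¬ good g) := by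
  classical
  set N := Fintype.card ι with hN
  set w : G → ℝ := fun g => (((N - (D g).card).choose m : ℕ) : ℝ)⁻¹ with hw
  have hw0 : ∀ g, 0 ≤ w g := fun g => by positivity
  set s : {Ω : Finset ι // Ω.card = m} → ℝ := fun Ω =>
    ∑ g, if Disjoint (D g) Ω.1 then w g else 0 with hs
  have hconst : ∀ Ω Ω', s Ω = s Ω' := by
    intro Ω Ω'
    obtain ⟨σ, hσ⟩ := exists_perm_mem_iff (Ω.2.trans Ω'.2.symm)
    obtain ⟨e, he⟩ := hsymm σ
    rw [hs]
    simp only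
    rw [← Equiv.sum_comp e fun g => if Disjoint (D g) Ω'.1 then w g else 0]
    refine Finset.sum_congr rfl fun g _ => ?_
    have h1 : (D (e g)) = (D g).map σ.toEmbedding := by
      ext p
      rw [Finset.mem_map_equiv, ← he g, Equiv.apply_symm_apply]
    have h2 : Ω'.1 = Ω.1.map σ.toEmbedding := by
      ext p
      rw [Finset.mem_map_equiv, ← hσ, Equiv.apply_symm_apply]
    have h3 : w (e g) = w g := by
      simp only [hw]
      rw [h1, Finset.card_map]
    simp only [h1, h2, Finset.disjoint_map, h3]
  have hdouble : ∀ P : G → Prop, ∑ Ω : {Ω : Finset ι // Ω.card = m},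
      (∑ g, if P g ∧ Disjoint (D g) Ω.1 then w g else 0) =
        ((Finset.univ.filter fun g => P g ∧ (D g).card + m ≤ N).card : ℝ) := by
    intro P
    rw [Finset.sum_comm, Finset.card_filter, Nat.cast_sum]
    refine Finset.sum_congr rfl fun g _ => ?_
    by_cases hP : P g
    · simp only [hP, true_and]
      rw [← Finset.sum_filter, Finset.sum_const, card_disjoint_of_card, nsmul_eq_mul]
      split_ifs with h
      · rw [Nat.cast_one]
        refine mul_inv_cancel₀ ?_
        exact_mod_cast (Nat.choose_pos (by omega)).ne'
      · have hDN : (D g).card ≤ N := Finset.card_le_univ _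
        rcases Nat.eq_zero_or_pos m with hm | hm
        · omega
        · rw [Nat.choose_eq_zero_of_lt (by omega)]
          simp
    · simp [hP]
  set M : ℝ := ((Finset.univ.filter fun g => (D g).card + m ≤ N).card : ℝ) with hM
  set B : ℝ := ((Finset.univ.filter fun g => ¬ good g).card : ℝ) with hB
  set C : ℝ := (Fintype.card {Ω : Finset ι // Ω.card = m} : ℝ) with hC
  set bad := Finset.univ.filter fun Ω : {Ω : Finset ι // Ω.card = m} =>
    ¬ ∃ g, good g ∧ Disjoint (D g) Ω.1 with hbad
  have htot : ∀ Ω, C * s Ω = M := by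
    intro Ω
    have h := hdouble fun _ => True
    simp only [true_and] at h
    rw [hM, ← h, hC]
    rw [Finset.sum_congr rfl fun Ω' _ => hconst Ω' Ω, Finset.sum_const, nsmul_eq_mul,
      Finset.card_univ]
  have hbadsum : ∑ Ω ∈ bad, s Ω ≤ B := by
    have h := hdouble fun g => ¬ good g
    calc ∑ Ω ∈ bad, s Ω ≤ ∑ Ω ∈ bad, ∑ g, if ¬ good g ∧ Disjoint (D g) Ω.1 then w g else 0 := by
          refine Finset.sum_le_sum fun Ω hΩ => Finset.sum_le_sum fun g _ => ?_
          have hΩ' := (Finset.mem_filter.mp hΩ).2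
          by_cases hd : Disjoint (D g) Ω.1
          · have : ¬ good g := fun hg => hΩ' ⟨g, hg, hd⟩
            simp [hd, this]
          · simp [hd]
      _ ≤ ∑ Ω : {Ω : Finset ι // Ω.card = m}, ∑ g,
            if ¬ good g ∧ Disjoint (D g) Ω.1 then w g else 0 := by
          refine Finset.sum_le_sum_of_subset_of_nonneg (Finset.subset_univ _) fun Ω _ _ =>
            Finset.sum_nonneg fun g _ => ?_
          split_ifs
          exacts [hw0 g, le_rfl]
      _ ≤ B := by
          have hle : ((Finset.univ.filter fun g => ¬ good g ∧ (D g).card + m ≤ N).card : ℝ) ≤ B := by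
            rw [hB]
            refine Nat.cast_le.mpr (Finset.card_le_card fun g hg => ?_)
            rw [Finset.mem_filter] at hg ⊢
            exact ⟨hg.1, hg.2.1⟩
          refine le_trans (le_of_eq ?_) hle
          convert h
  have hcardG : (0 : ℝ) < Fintype.card G := by
    rcases Nat.eq_zero_or_pos (Fintype.card G) with h | h
    · exfalso
      unfold unifProb at hsize
      rw [h] at hsize
      norm_num at hsize
    · exact_mod_cast h
  have hMG : (Fintype.card G : ℝ) / 2 ≤ M := by
    have h : unifProb (fun g => (D g).card + m ≤ N) = M / Fintype.card G := by
      unfold unifProb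
      congr!
    rw [h, le_div_iff₀ hcardG] at hsize
    linarith
  have hMpos : 0 < M := lt_of_lt_of_le (by positivity) hMG
  have h1 : unifProb (fun Ω : {Ω : Finset ι // Ω.card = m} =>
      ¬ ∃ g, good g ∧ Disjoint (D g) Ω.1) = bad.card / C := by
    unfold unifProb
    congr!
  have h2 : unifProb (fun g => ¬ good g) = B / Fintype.card G := by
    unfold unifProb
    congr!
  rw [h1, h2]
  have hC0 : 0 ≤ C := Nat.cast_nonneg _
  have h3 : bad.card * M ≤ B * C := by
    have h4 := mul_le_mul_of_nonneg_left hbadsum hC0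
    rw [Finset.mul_sum, Finset.sum_congr rfl fun Ω _ => htot Ω, Finset.sum_const,
      nsmul_eq_mul] at h4
    linarith
  have hB0 : 0 ≤ B := Nat.cast_nonneg _
  rcases hC0.eq_or_lt with hC' | hC'
  · rw [← hC', div_zero]
    positivity
  · rw [div_le_iff₀ hC', mul_comm 2, div_mul_eq_mul_div, div_mul_eq_mul_div, le_div_iff₀ hcardG]
    have hb0 : (0 : ℝ) ≤ bad.card := Nat.cast_nonneg _
    have h5 := mul_le_mul_of_nonneg_left hMG hb0
    linarith

/-- The set of indices sampled in at least one of the rounds. -/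
def sampled {K Q : ℕ} (g : Fin K → ι → Fin Q) : Finset ι :=
  Finset.univ.filter fun p => ∃ k, (g k p).val = 0

theorem mem_sampled {K Q : ℕ} {g : Fin K → ι → Fin Q} {p : ι} :
    p ∈ sampled g ↔ ∃ k, (g k p).val = 0 := by
  simp [sampled]

theorem exists_equiv_mem_sampled (K Q : ℕ) (σ : Equiv.Perm ι) :
    ∃ e : (Fin K → ι → Fin Q) ≃ (Fin K → ι → Fin Q),
      ∀ g p, σ p ∈ sampled (e g) ↔ p ∈ sampled g := by
  refine ⟨Equiv.piCongrRight fun _ => Equiv.arrowCongr σ (Equiv.refl _), fun g p => ?_⟩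
  simp [mem_sampled]

variable [DecidableEq ι]

theorem unifExp_card_sampled_le {K Q : ℕ} (hQ : 0 < Q) :
    unifExp (fun g : Fin K → ι → Fin Q => ((sampled g).card : ℝ)) ≤
      Fintype.card ι * (K * (Q : ℝ)⁻¹) := by
  have : Nonempty (Fin Q) := ⟨⟨0, hQ⟩⟩
  have h1 : ∀ g : Fin K → ι → Fin Q, ((sampled g).card : ℝ) ≤
      ∑ p, ∑ k, if (g k p).val = 0 then (1 : ℝ) else 0 := by
    intro g
    rw [sampled, Finset.card_filter, Nat.cast_sum]
    refine Finset.sum_le_sum fun p _ => ?_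
    split_ifs with h
    · obtain ⟨k, hk⟩ := h
      rw [Nat.cast_one]
      refine le_trans (by rw [if_pos hk]) (Finset.single_le_sum
        (f := fun k => if (g k p).val = 0 then (1 : ℝ) else 0) (fun k _ => by positivity)
        (Finset.mem_univ k))
    · rw [Nat.cast_zero]
      exact Finset.sum_nonneg fun k _ => by positivity
  refine (unifExp_mono h1).trans (le_of_eq ?_)
  rw [unifExp_sum]
  have h2 : ∀ p : ι, unifExp (fun g : Fin K → ι → Fin Q =>
      ∑ k, if (g k p).val = 0 then (1 : ℝ) else 0) = K * (Q : ℝ)⁻¹ := by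
    intro p
    rw [unifExp_sum]
    have h3 : ∀ k : Fin K, unifExp (fun g : Fin K → ι → Fin Q =>
        if (g k p).val = 0 then (1 : ℝ) else 0) = (Q : ℝ)⁻¹ := by
      intro k
      rw [unifExp_marginal (fun γ : ι → Fin Q => if (γ p).val = 0 then (1 : ℝ) else 0) k,
        unifExp_marginal (fun x : Fin Q => if x.val = 0 then (1 : ℝ) else 0) p, unifExp,
        sum_ite_val_eq_zero hQ, Fintype.card_fin, one_div]
    rw [Finset.sum_congr rfl fun k _ => h3 k, Finset.sum_const, Finset.card_univ,
      Fintype.card_fin, nsmul_eq_mul]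
  rw [Finset.sum_congr rfl fun p _ => h2 p, Finset.sum_const, Finset.card_univ, nsmul_eq_mul]

theorem half_le_unifProb_card_sampled {K : ℕ} (hK : 0 < K) {m : ℕ}
    (hm : 2 * m ≤ Fintype.card ι) :
    1 / 2 ≤ unifProb fun g : Fin K → ι → Fin (8 * K) =>
      (sampled g).card + m ≤ Fintype.card ι := by
  have hQ : 0 < 8 * K := by omega
  have : Nonempty (Fin (8 * K)) := ⟨⟨0, hQ⟩⟩
  rw [unifProb_not]
  rcases Nat.eq_zero_or_pos (Fintype.card ι) with h0 | h0
  · have h : ∀ g : Fin K → ι → Fin (8 * K), (sampled g).card + m ≤ Fintype.card ι := by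
      intro g
      have := Finset.card_le_univ (sampled g)
      omega
    simp only [unifProb, h, not_true_eq_false, Finset.filter_false, Finset.card_empty]
    norm_num
  · set N := Fintype.card ι
    have hN : (0 : ℝ) < N := by exact_mod_cast h0
    have h1 : unifProb (fun g : Fin K → ι → Fin (8 * K) => ¬ (sampled g).card + m ≤ N) ≤
        unifExp fun g : Fin K → ι → Fin (8 * K) => 2 / (N : ℝ) * ((sampled g).card : ℝ) := by
      refine unifProb_le_unifExp (fun g => by positivity) fun g hg => ?_
      have h2 : (N : ℝ) ≤ 2 * (sampled g).card := by
        exact_mod_cast (by omega : N ≤ 2 * (sampled g).card)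
      rw [div_mul_eq_mul_div, le_div_iff₀ hN]
      linarith
    rw [unifExp_const_mul] at h1
    have h3 := mul_le_mul_of_nonneg_left (unifExp_card_sampled_le (ι := ι) (K := K) hQ)
      (show 0 ≤ 2 / (N : ℝ) by positivity)
    have h4 : 2 / (N : ℝ) * (N * (K * ((8 * K : ℕ) : ℝ)⁻¹)) = 1 / 4 := by
      have : (K : ℝ) ≠ 0 := by exact_mod_cast hK.ne'
      push_cast
      field_simp
      norm_num
    have h5 := h1.trans (h3.trans_eq h4)
    linarith

end Transfer

section SignPart

variable {n1 n2 r : ℕ}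

theorem projS_add (Ω : Finset (Fin n1 × Fin n2)) (M N : Matrix (Fin n1) (Fin n2) ℝ) :
    projS Ω (M + N) = projS Ω M + projS Ω N := by
  ext i j
  simp only [projS, Matrix.of_apply, Matrix.add_apply]
  split_ifs <;> simp

theorem projS_smul (Ω : Finset (Fin n1 × Fin n2)) (c : ℝ) (M : Matrix (Fin n1) (Fin n2) ℝ) :
    projS Ω (c • M) = c • projS Ω M := by
  ext i j
  simp [projS]

theorem projS_projS (Ω : Finset (Fin n1 × Fin n2)) (M : Matrix (Fin n1) (Fin n2) ℝ) :
    projS Ω (projS Ω M) = projS Ω M := by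
  ext i j
  simp only [projS, Matrix.of_apply]
  split_ifs <;> rfl

theorem minner_projS_left (Ω : Finset (Fin n1 × Fin n2)) (M N : Matrix (Fin n1) (Fin n2) ℝ) :
    minner (projS Ω M) N = minner M (projS Ω N) := by
  simp [minner, projS]

theorem fsq_projS_le (Ω : Finset (Fin n1 × Fin n2)) (M : Matrix (Fin n1) (Fin n2) ℝ) :
    fsq (projS Ω M) ≤ fsq M := by
  refine Finset.sum_le_sum fun i _ => Finset.sum_le_sum fun j _ => ?_
  simp only [projS, Matrix.of_apply]
  split_ifs
  · exact le_rfl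
  · rw [zero_pow two_ne_zero]
    positivity

theorem eq_zero_of_fsq_le_zero {M : Matrix (Fin n1) (Fin n2) ℝ} (h : fsq M ≤ 0) : M = 0 := by
  have h0 := le_antisymm h (fsq_nonneg M)
  ext i j
  have h1 := (Finset.sum_eq_zero_iff_of_nonneg fun i _ =>
    Finset.sum_nonneg fun j _ => sq_nonneg (M i j)).mp h0 i (Finset.mem_univ i)
  have h2 := (Finset.sum_eq_zero_iff_of_nonneg fun j _ => sq_nonneg (M i j)).mp h1 j
    (Finset.mem_univ j)
  simpa using h2

theorem minner_eq_sum_prod (A B : Matrix (Fin n1) (Fin n2) ℝ) :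
    minner A B = ∑ p : Fin n1 × Fin n2, A p.1 p.2 * B p.1 p.2 := by
  rw [Fintype.sum_prod_type]
  rfl

theorem fsq_eq_sum_prod (A : Matrix (Fin n1) (Fin n2) ℝ) :
    fsq A = ∑ p : Fin n1 × Fin n2, A p.1 p.2 ^ 2 := by
  rw [Fintype.sum_prod_type]
  rfl

/-- The compression of the tangent projection to matrices supported on `Ω`. -/
noncomputable def compress (U : Matrix (Fin n1) (Fin r) ℝ) (V : Matrix (Fin n2) (Fin r) ℝ)
    (Ω : Finset (Fin n1 × Fin n2)) :
    Matrix (Fin n1) (Fin n2) ℝ →ₗ[ℝ] Matrix (Fin n1) (Fin n2) ℝ where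
  toFun M := projS Ω (tangentProj U V (projS Ω M))
  map_add' M N := by rw [projS_add, tangentProj_add, projS_add]
  map_smul' c M := by rw [projS_smul, tangentProj_smul, projS_smul, RingHom.id_apply]

theorem compress_apply (U : Matrix (Fin n1) (Fin r) ℝ) (V : Matrix (Fin n2) (Fin r) ℝ)
    (Ω : Finset (Fin n1 × Fin n2)) (M : Matrix (Fin n1) (Fin n2) ℝ) :
    compress U V Ω M = projS Ω (tangentProj U V (projS Ω M)) := rfl

variable {U : Matrix (Fin n1) (Fin r) ℝ} {V : Matrix (Fin n2) (Fin r) ℝ}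
  {Ω : Finset (Fin n1 × Fin n2)}

theorem minner_compress_left (M N : Matrix (Fin n1) (Fin n2) ℝ) :
    minner (compress U V Ω M) N = minner M (compress U V Ω N) := by
  simp only [compress_apply, minner_projS_left, minner_tangentProj_left]

theorem fsq_compress_le {α : ℝ} (hα : 0 ≤ α)
    (h : ∀ M, fsq (projS Ω (tangentProj U V M)) ≤ α * fsq M)
    (M : Matrix (Fin n1) (Fin n2) ℝ) : fsq (compress U V Ω M) ≤ α * fsq M :=
  (h _).trans (mul_le_mul_of_nonneg_left (fsq_projS_le Ω M) hα)

/-- If the compression is a strict contraction, then `1 - compress` has a symmetric inverse. -/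
theorem exists_resolvent {α : ℝ} (hα : 0 ≤ α) (hα' : α ≤ 1 / 4)
    (h : ∀ M, fsq (projS Ω (tangentProj U V M)) ≤ α * fsq M) :
    ∃ G : Matrix (Fin n1) (Fin n2) ℝ → Matrix (Fin n1) (Fin n2) ℝ,
      (∀ M, G M = M + compress U V Ω (G M)) ∧ (∀ M N, minner (G M) N = minner M (G N)) ∧
        ∀ M, fsq (G M) ≤ 4 * fsq M := by
  set A := compress U V Ω with hA
  have hAle := fsq_compress_le hα h
  have hinj : Function.Injective (LinearMap.id - A :
      Matrix (Fin n1) (Fin n2) ℝ →ₗ[ℝ] Matrix (Fin n1) (Fin n2) ℝ) := by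
    rw [← LinearMap.ker_eq_bot, LinearMap.ker_eq_bot']
    intro M hM
    have h1 : M = A M := by
      rw [LinearMap.sub_apply, LinearMap.id_apply, sub_eq_zero] at hM
      exact hM
    have h2 := hAle M
    rw [← hA, ← h1] at h2
    have h3 := fsq_nonneg M
    exact eq_zero_of_fsq_le_zero (by nlinarith)
  have hsurj := LinearMap.injective_iff_surjective.mp hinj
  choose G hG using hsurj
  have hG' : ∀ M, G M = M + A (G M) := by
    intro M
    have h1 := hG M
    rw [LinearMap.sub_apply, LinearMap.id_apply] at h1
    exact sub_eq_iff_eq_add.mp h1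
  refine ⟨G, hG', fun M N => ?_, fun M => ?_⟩
  · have h1 : minner (G M) (G N) = minner (G M) N + minner (G M) (A (G N)) := by
      conv_lhs => rw [hG' N]
      exact minner_add_right _ _ _
    have h2 : minner (G M) (G N) = minner M (G N) + minner (A (G M)) (G N) := by
      conv_lhs => rw [hG' M]
      exact minner_add_left _ _ _
    have h3 : minner (A (G M)) (G N) = minner (G M) (A (G N)) := minner_compress_left _ _
    linarith
  · have h1 : fsq (G M) ≤ 2 * (fsq M + fsq (A (G M))) := by
      conv_lhs => rw [hG' M]
      exact fsq_add_le _ _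
    have h2 := hAle (G M)
    have h3 := fsq_nonneg (G M)
    nlinarith

/-- The matrix with signs `ε` on `Ω` and zeros elsewhere. -/
noncomputable def signOn (Ω : Finset (Fin n1 × Fin n2)) (ε : Fin n1 × Fin n2 → Bool) :
    Matrix (Fin n1) (Fin n2) ℝ :=
  projS Ω (Matrix.of fun i j => boolSign (ε (i, j)))

theorem minner_signOn (ε : Fin n1 × Fin n2 → Bool) (M : Matrix (Fin n1) (Fin n2) ℝ) :
    minner (signOn Ω ε) M = ∑ p : Fin n1 × Fin n2, boolSign (ε p) * projS Ω M p.1 p.2 := by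
  rw [signOn, minner_projS_left, minner_eq_sum_prod]
  simp

theorem signOn_tail (M : Matrix (Fin n1) (Fin n2) ℝ) {s v : ℝ} (hv : 0 < v) (hs : 0 ≤ s)
    (hM : fsq M ≤ v) :
    unifProb (fun ε : Fin n1 × Fin n2 → Bool => s ≤ minner (signOn Ω ε) M) ≤
      Real.exp (-(s ^ 2 / (2 * v))) := by
  simp only [minner_signOn]
  refine rademacher_tail (fun p : Fin n1 × Fin n2 => projS Ω M p.1 p.2) hv hs ?_
  rw [← fsq_eq_sum_prod]
  exact (fsq_projS_le Ω M).trans hM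

theorem signOn_tail_abs (M : Matrix (Fin n1) (Fin n2) ℝ) {s v : ℝ} (hv : 0 < v) (hs : 0 ≤ s)
    (hM : fsq M ≤ v) :
    unifProb (fun ε : Fin n1 × Fin n2 → Bool => s ≤ |minner (signOn Ω ε) M|) ≤
      2 * Real.exp (-(s ^ 2 / (2 * v))) := by
  have hneg : fsq (-M) ≤ v := by
    simpa [fsq] using hM
  refine le_trans (unifProb_mono (F := fun ε => s ≤ minner (signOn Ω ε) M ∨
    s ≤ minner (signOn Ω ε) (-M)) fun ε hε => ?_) ((unifProb_or_le _ _).trans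
    ((add_le_add (signOn_tail M hv hs hM) (signOn_tail (-M) hv hs hneg)).trans_eq (by ring)))
  rcases le_abs.mp hε with h | h
  · exact Or.inl h
  · refine Or.inr (h.trans_eq ?_)
    simp [minner]

/-- The preimage `X` witnesses that a sign pattern extends to a small element of `T⊥`. -/
def SignSuccess (U : Matrix (Fin n1) (Fin r) ℝ) (V : Matrix (Fin n2) (Fin r) ℝ)
    (Ω : Finset (Fin n1 × Fin n2)) (ε : Fin n1 × Fin n2 → Bool) : Prop :=
  ∃ X : Matrix (Fin n1) (Fin n2) ℝ,
    (∀ i j, (i, j) ∈ Ω → (X - tangentProj U V X) i j = boolSign (ε (i, j))) ∧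
    (∀ i j, (i, j) ∉ Ω → |(X - tangentProj U V X) i j| ≤ 1 / 4) ∧
    spec (X - tangentProj U V X) ≤ Real.sqrt n1 / 8

theorem unifProb_not_signSuccess_fixed_le (hU : Uᵀ * U = 1) (hV : Vᵀ * V = 1) {μ : ℝ} (hμ : 0 < μ)
    (hUi : ∀ i, ∑ k, U i k ^ 2 ≤ μ) (hVj : ∀ j, ∑ k, V j k ^ 2 ≤ μ) (hn : n2 ≤ n1)
    (h : ∀ M, fsq (projS Ω (tangentProj U V M)) ≤ 1 / 1000000 * fsq M) :
    unifProb (fun ε : Fin n1 × Fin n2 → Bool =>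
      ¬ SignSuccess U V Ω ε ∧ spec (signOn Ω ε) ≤ Real.sqrt n1 / 16) ≤
      n1 * n2 * (2 * Real.exp (-(1 / (256 * μ)))) + Real.exp (-(n1 : ℝ)) := by
  obtain ⟨G, hG, hGsymm, hGle⟩ := exists_resolvent (by norm_num) (by norm_num) h
  have hAle := fsq_compress_le (U := U) (V := V) (Ω := Ω) (by norm_num) h
  have hsupp : ∀ ε, projS Ω (G (signOn Ω ε)) = G (signOn Ω ε) := by
    intro ε
    rw [hG (signOn Ω ε), projS_add, compress_apply, projS_projS, signOn, projS_projS]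
  have hentry : unifProb (fun ε : Fin n1 × Fin n2 → Bool =>
      ∃ p ∈ (Finset.univ : Finset (Fin n1 × Fin n2)),
        1 / 4 ≤ |minner (signOn Ω ε) (G (tangentProj U V (Matrix.single p.1 p.2 1)))|) ≤
      n1 * n2 * (2 * Real.exp (-(1 / (256 * μ)))) := by
    refine (unifProb_exists_le_card_mul (δ := 2 * Real.exp (-(1 / (256 * μ)))) _ _
      fun p _ => ?_).trans_eq ?_
    · refine (signOn_tail_abs _ (v := 8 * μ) (by positivity) (by norm_num) ?_).trans_eq ?_
      · have h1 := fsq_tangentProj_single_le hU hV hUi hVj p.1 p.2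
        have h2 := hGle (tangentProj U V (Matrix.single p.1 p.2 1))
        linarith
      · congr 3
        field_simp
        norm_num
    · simp
  have hspec : unifProb (fun ε : Fin n1 × Fin n2 → Bool =>
      Real.sqrt n1 / 16 < spec (compress U V Ω (G (signOn Ω ε)))) ≤ Real.exp (-(n1 : ℝ)) := by
    refine (unifProb_lt_spec_le (δ := Real.exp (-(30 * n1))) _ hn (Real.exp_nonneg _)
      fun w hw z hz => ?_).trans ?_
    · set C : Matrix (Fin n1) (Fin n2) ℝ := Matrix.of fun i j => netCoeff w z (i, j) with hC
      have hCsq : fsq C ≤ 16 := by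
        rw [fsq_eq_sum_prod]
        exact sum_netCoeff_sq_le hw hz
      have h1 : ∀ ε, ∑ p : Fin n1 × Fin n2,
          compress U V Ω (G (signOn Ω ε)) p.1 p.2 * netCoeff w z p =
            minner (signOn Ω ε) (G (compress U V Ω C)) := by
        intro ε
        rw [← hGsymm, ← minner_compress_left, minner_eq_sum_prod]
        rfl
      simp only [h1]
      refine (signOn_tail _ (v := 64 / 1000000) (by norm_num) (by positivity) ?_).trans ?_
      · have h2 := hAle C
        have h3 := hGle (compress U V Ω C)
        linarith
      · refine Real.exp_le_exp.mpr ?_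
        rw [div_pow, Real.sq_sqrt (Nat.cast_nonneg n1)]
        have h2 : (0 : ℝ) ≤ n1 := Nat.cast_nonneg n1
        have h3 : (n1 : ℝ) / 16 ^ 2 / (2 * (64 / 1000000)) = 15625 / 512 * n1 := by ring
        rw [h3]
        linarith
    · rw [← Real.exp_add]
      refine Real.exp_le_exp.mpr ?_
      have : (0 : ℝ) ≤ n1 := Nat.cast_nonneg n1
      linarith
  refine le_trans (unifProb_mono (F := fun ε => _ ∨ _) fun ε hε => ?_)
    ((unifProb_or_le _ _).trans (add_le_add hentry hspec))
  by_contra hcon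
  push Not at hcon
  refine hε.1 ⟨G (signOn Ω ε), fun i j hij => ?_, fun i j hij => ?_, ?_⟩
  · have h1 := congrFun (congrFun (hG (signOn Ω ε)) i) j
    rw [compress_apply, hsupp ε, Matrix.add_apply] at h1
    rw [Matrix.sub_apply, h1]
    simp [projS, signOn, hij]
  · have h1 : G (signOn Ω ε) i j = 0 := by
      rw [← hsupp ε]
      simp [projS, hij]
    rw [Matrix.sub_apply, h1, zero_sub, abs_neg, ← minner_single (tangentProj U V _),
      minner_tangentProj_left, hGsymm]
    exact (hcon.1 (i, j) (Finset.mem_univ _)).le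
  · refine (spec_sub_tangentProj_le hU hV _).trans ?_
    rw [hG (signOn Ω ε)]
    refine (spec_add_le _ _).trans ?_
    have h1 := hε.2
    have h2 := hcon.2
    linarith

/-- The logarithmic moment parameter making random sparse signs have small spectral norm. -/
noncomputable def sparseRate : ℝ := 1 / (16 * 208 ^ 2)

theorem unifProb_lt_spec_signOn_le {m : ℕ} {ρ : ℝ} (hn : n2 ≤ n1) (hρ0 : 0 ≤ ρ) (hρ1 : ρ ≤ 1)
    (hρ : ρ ≤ sparseRate * Real.exp (-(1 / (2 * sparseRate ^ 2)))) (hN : m ≤ n1 * n2)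
    (hm : (m : ℝ) ≤ ρ * (n1 * n2)) :
    unifProb (fun ω : SampleSpace n1 n2 m => Real.sqrt n1 / 16 < spec (signOn ω.1.1 ω.2)) ≤
      Real.exp (-(n1 : ℝ)) := by
  have hκ : 0 < sparseRate := by
    unfold sparseRate
    norm_num
  have hn0 : (0 : ℝ) ≤ n1 := Nat.cast_nonneg n1
  refine (unifProb_lt_spec_le (δ := Real.exp (-(12 * n1))) _ hn (Real.exp_nonneg _)
    fun w hw z hz => ?_).trans ?_
  · set θ : ℝ := 208 * Real.sqrt n1 with hθ
    have hθ0 : 0 ≤ θ := by positivity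
    refine (unifProb_ge_le_exp (θ := θ) (b := n1) _ hθ0 ?_).trans ?_
    · refine le_trans (le_of_eq ?_) ((unifExp_exp_sparse_rademacher_le (m := m)
        (fun p : Fin n1 × Fin n2 => θ * netCoeff w z p) hκ hρ0 hρ1 hρ (by simpa using hN)
        (by simpa using hm)).trans (Real.exp_le_exp.mpr ?_))
      · refine congrArg unifExp (funext fun ω => congrArg Real.exp ?_)
        rw [Finset.mul_sum]
        refine Finset.sum_congr rfl fun p _ => ?_
        simp only [signOn, projS, Matrix.of_apply]
        split_ifs <;> ring
      · have h1 := sum_netCoeff_sq_le hw hz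
        simp only [mul_pow]
        rw [← Finset.mul_sum, hθ, mul_pow, Real.sq_sqrt hn0]
        have h2 := mul_le_mul_of_nonneg_left h1 hn0
        have h3 : sparseRate * (208 ^ 2 * n1 * ∑ p, netCoeff w z p ^ 2) =
            (n1 * ∑ p, netCoeff w z p ^ 2) / 16 := by
          unfold sparseRate
          ring
        rw [h3]
        linarith
    · refine Real.exp_le_exp.mpr ?_
      have h1 : θ * (Real.sqrt n1 / 16) = 13 * n1 := by
        rw [hθ]
        have := Real.mul_self_sqrt hn0
        linear_combination 13 * this
      rw [h1]
      linarith
  · rw [← Real.exp_add]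
    refine Real.exp_le_exp.mpr ?_
    linarith

theorem unifProb_not_signSuccess_le (hU : Uᵀ * U = 1) (hV : Vᵀ * V = 1) {μ : ℝ} (hμ : 0 < μ)
    (hUi : ∀ i, ∑ k, U i k ^ 2 ≤ μ) (hVj : ∀ j, ∑ k, V j k ^ 2 ≤ μ) (hn : n2 ≤ n1)
    {m : ℕ} {ρ : ℝ} (hρ0 : 0 ≤ ρ) (hρ1 : ρ ≤ 1 / 2)
    (hρ : ρ ≤ sparseRate * Real.exp (-(1 / (2 * sparseRate ^ 2))))
    (hρτ : ρ ≤ 1 / 32000000) (hm : (m : ℝ) ≤ ρ * (n1 * n2)) :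
    unifProb (fun ω : SampleSpace n1 n2 m => ¬ SignSuccess U V ω.1.1 ω.2) ≤
      (n1 + n2) * (r * Real.exp (-(1 / (8000000 * μ)))) +
        (n1 * n2 * (2 * Real.exp (-(1 / (256 * μ)))) + Real.exp (-(n1 : ℝ))) +
          Real.exp (-(n1 : ℝ)) := by
  have hN0 : (0 : ℝ) ≤ (n1 : ℝ) * n2 := by positivity
  have hm2 : 2 * m ≤ n1 * n2 := by
    have : (2 : ℝ) * m ≤ n1 * n2 := by nlinarith
    exact_mod_cast this
  have hΩ := unifProb_not_small_projS_tangentProj_le hU hV hμ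
    (show (0 : ℝ) ≤ 1 / 4000000 by norm_num) hUi hVj m hm2 hρ0 hm
  have h4 : (4 : ℝ) * (1 / 4000000) = 1 / 1000000 := by norm_num
  rw [h4] at hΩ
  have hexp : Real.exp ((4 * ρ - 1 / 4000000) / μ) ≤ Real.exp (-(1 / (8000000 * μ))) := by
    refine Real.exp_le_exp.mpr ?_
    rw [div_le_iff₀ hμ]
    have : -(1 / (8000000 * μ)) * μ = -(1 / 8000000) := by
      field_simp
    rw [this]
    linarith
  have h1 : unifProb (fun ω : SampleSpace n1 n2 m => ¬ SignSuccess U V ω.1.1 ω.2 ∧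
      spec (signOn ω.1.1 ω.2) ≤ Real.sqrt n1 / 16) ≤
      unifProb (fun Ω : {Ω : Finset (Fin n1 × Fin n2) // Ω.card = m} =>
        ¬ ∀ M, fsq (projS Ω.1 (tangentProj U V M)) ≤ 1 / 1000000 * fsq M) +
        (n1 * n2 * (2 * Real.exp (-(1 / (256 * μ)))) + Real.exp (-(n1 : ℝ))) := by
    refine unifProb_prod_le (by positivity) fun Ω hB => ?_
    have hB' : ∀ M, fsq (projS Ω.1 (tangentProj U V M)) ≤ 1 / 1000000 * fsq M :=
      Classical.byContradiction hB
    exact unifProb_not_signSuccess_fixed_le (Ω := Ω.1) hU hV hμ hUi hVj hn hB'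
  have h2 := h1.trans (add_le_add (hΩ.trans (mul_le_mul_of_nonneg_left
    (mul_le_mul_of_nonneg_left hexp (Nat.cast_nonneg r)) (by positivity))) le_rfl)
  have h3 := unifProb_lt_spec_signOn_le (m := m) hn hρ0 (by linarith) hρ (by omega) hm
  refine le_trans (unifProb_mono fun ω hω => ?_)
    ((unifProb_or_le _ _).trans (add_le_add h2 h3))
  rcases le_or_gt (spec (signOn ω.1.1 ω.2)) (Real.sqrt n1 / 16) with h | h
  · exact Or.inl ⟨hω, h⟩
  · exact Or.inr h

end SignPart

section Assembly

variable {n1 n2 r : ℕ}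

theorem signM_sparseOf {m : ℕ} {a : Fin n1 × Fin n2 → ℝ} (ha : ∀ p, 0 < a p)
    (ω : SampleSpace n1 n2 m) : signM (sparseOf a ω) = signOn ω.1.1 ω.2 := by
  ext i j
  simp only [signM, sparseOf, signOn, projS, Matrix.of_apply, boolSign]
  split_ifs
  · exact Real.sign_of_pos (ha _)
  · exact Real.sign_of_neg (neg_neg_of_pos (ha _))
  · exact Real.sign_zero

variable {U : Matrix (Fin n1) (Fin r) ℝ} {V : Matrix (Fin n2) (Fin r) ℝ}

/-- The golfing scheme and the sign extension combine to a dual certificate. -/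
theorem exists_certificate (hU : Uᵀ * U = 1) (hV : Vᵀ * V = 1) {μ : ℝ} (hμ : 0 < μ)
    (hn1 : 0 < n1) (hn : n2 ≤ n1) {K Q : ℕ} (hK : n1 ≤ 2 ^ K) (hQ : 0 < Q)
    (hQμ : Q * Real.sqrt μ ≤ 1 / 1000) {g : Fin K → Fin n1 × Fin n2 → Fin Q}
    {Ω : Finset (Fin n1 × Fin n2)} {ε : Fin n1 × Fin n2 → Bool}
    (hg : GolfSuccess U V g (U * Vᵀ) (Real.sqrt (μ / n1))) (hdisj : Disjoint (sampled g) Ω)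
    (hsign : SignSuccess U V Ω ε) :
    ∃ W F H : Matrix (Fin n1) (Fin n2) ℝ,
      U * Vᵀ + W = (Real.sqrt n1)⁻¹ • (signOn Ω ε + F + projS Ω H) ∧
      memTperp U V W ∧ spec W ≤ 1 / 2 ∧ projS Ω F = 0 ∧ (∀ i j, |F i j| ≤ 1 / 2) ∧
      frob (projS Ω H) ≤ 1 / (260 * Real.sqrt 2) := by
  obtain ⟨Y, hY0, hYle, hres, hYspec⟩ := hg
  obtain ⟨X, hXon, hXoff, hXspec⟩ := hsign
  set s := Real.sqrt n1 with hs
  have hs0 : 0 < s := Real.sqrt_pos.mpr (by exact_mod_cast hn1)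
  set t := Real.sqrt μ with ht
  have ht0 : 0 < t := Real.sqrt_pos.mpr hμ
  set β := Real.sqrt (μ / n1) with hβ
  have hβs : s * β = t := by
    rw [hβ, Real.sqrt_div hμ.le, mul_div_cancel₀ _ hs0.ne']
  have hβ0 : 0 ≤ β := Real.sqrt_nonneg _
  have hQ1 : (1 : ℝ) ≤ Q := by exact_mod_cast hQ
  have htle : t ≤ 1 / 1000 := (le_mul_of_one_le_left ht0.le hQ1).trans hQμ
  have hK' : (n1 : ℝ) ≤ 2 ^ K := by exact_mod_cast hK
  have hn1' : (1 : ℝ) ≤ n1 := by exact_mod_cast hn1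
  have hKpos : (0 : ℝ) < 2 ^ K := by positivity
  have hYΩ : ∀ i j, (i, j) ∈ Ω → Y i j = 0 := by
    intro i j hij
    refine hY0 i j fun k hk => ?_
    exact Finset.disjoint_left.mp hdisj (mem_sampled.mpr ⟨k, hk⟩) hij
  set W := (Y - tangentProj U V Y) + s⁻¹ • (X - tangentProj U V X) with hW
  set Z := U * Vᵀ - tangentProj U V Y with hZ
  have hentry : ∀ i j, s * (U * Vᵀ + W) i j =
      s * Y i j + s * Z i j + (X - tangentProj U V X) i j := by
    intro i j
    have h1 : (U * Vᵀ + W) i j = Y i j + Z i j + s⁻¹ * (X - tangentProj U V X) i j := by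
      rw [hW, hZ]
      simp only [Matrix.add_apply, Matrix.sub_apply, Matrix.smul_apply, smul_eq_mul]
      ring
    rw [h1]
    field_simp
  refine ⟨W, Matrix.of fun i j => if (i, j) ∈ Ω then 0 else s * (U * Vᵀ + W) i j, s • Z,
    ?_, ?_, ?_, ?_, ?_, ?_⟩
  · ext i j
    have h1 : (U * Vᵀ + W) i j = s⁻¹ * (s * (U * Vᵀ + W) i j) := by
      field_simp
    by_cases hij : (i, j) ∈ Ω
    · rw [h1, hentry, hYΩ i j hij, hXon i j hij]
      simp only [Matrix.smul_apply, Matrix.add_apply, signOn, projS, Matrix.of_apply, hij, if_true,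
        smul_eq_mul]
      ring
    · simp only [Matrix.smul_apply, Matrix.add_apply, signOn, projS, Matrix.of_apply, hij, if_false,
        smul_eq_mul, zero_add, add_zero]
      simpa using h1
  · have h1 : W = (Y + s⁻¹ • X) - tangentProj U V (Y + s⁻¹ • X) := by
      rw [hW, tangentProj_add, tangentProj_smul, smul_sub]
      abel
    rw [h1]
    exact memTperp_sub_tangentProj hU hV _
  · have h1 := spec_smul_le s⁻¹ (X - tangentProj U V X)
    rw [abs_of_pos (inv_pos.mpr hs0)] at h1
    have h2 := mul_le_mul_of_nonneg_left hXspec (inv_pos.mpr hs0).le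
    have h3 : s⁻¹ * (s / 8) = 1 / 8 := by
      field_simp
    have h4 : 40 * Q * s * β = 40 * (Q * t) := by
      rw [← hβs]
      ring
    have h5 := spec_add_le (Y - tangentProj U V Y) (s⁻¹ • (X - tangentProj U V X))
    linarith
  · ext i j
    by_cases hij : (i, j) ∈ Ω <;> simp [projS, hij]
  · intro i j
    simp only [Matrix.of_apply]
    split_ifs with hij
    · simp
    · rw [hentry]
      have h1 := mul_le_mul_of_nonneg_left (hYle i j) hs0.le
      have h2 := mul_le_mul_of_nonneg_left (hres i j) hs0.le
      have h3 : s * (2 * Q * β) = 2 * (Q * t) := by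
        rw [← hβs]
        ring
      have h4 : s * (β / 2 ^ K) ≤ t := by
        rw [← mul_div_assoc, hβs]
        exact div_le_self ht0.le (hn1'.trans hK')
      have h5 := hXoff i j hij
      have h6 := abs_add_three (s * Y i j) (s * Z i j) ((X - tangentProj U V X) i j)
      rw [abs_mul, abs_mul, abs_of_pos hs0] at h6
      linarith
  · have h1 : frob (projS Ω (s • Z)) ≤ t := by
      refine Real.sqrt_le_iff.mpr ⟨ht0.le, ?_⟩
      have h2 : ∀ i j, projS Ω (s • Z) i j ^ 2 ≤ (t / 2 ^ K) ^ 2 := by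
        intro i j
        refine sq_le_sq' ?_ ?_ <;>
        · have h3 : |projS Ω (s • Z) i j| ≤ t / 2 ^ K := by
            simp only [projS, Matrix.of_apply, Matrix.smul_apply, smul_eq_mul]
            split_ifs
            · rw [abs_mul, abs_of_pos hs0, ← hβs, mul_div_assoc]
              exact mul_le_mul_of_nonneg_left (hres i j) hs0.le
            · rw [abs_zero]
              positivity
          first | exact (abs_le.mp h3).1 | exact (abs_le.mp h3).2
      calc ∑ i, ∑ j, projS Ω (s • Z) i j ^ 2
          ≤ ∑ _i : Fin n1, ∑ _j : Fin n2, (t / 2 ^ K) ^ 2 :=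
            Finset.sum_le_sum fun i _ => Finset.sum_le_sum fun j _ => h2 i j
        _ = n1 * n2 * (t / 2 ^ K) ^ 2 := by
            simp [mul_assoc]
        _ ≤ 2 ^ K * 2 ^ K * (t / 2 ^ K) ^ 2 := by
            refine mul_le_mul_of_nonneg_right ?_ (sq_nonneg _)
            refine mul_le_mul hK' (le_trans ?_ hK') (Nat.cast_nonneg _) hKpos.le
            exact_mod_cast hn
        _ = t ^ 2 := by
            field_simp
    refine h1.trans (htle.trans ?_)
    refine one_div_le_one_div_of_le (by positivity) ?_
    have : Real.sqrt 2 ≤ 2 := Real.sqrt_le_iff.mpr ⟨by norm_num, by norm_num⟩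
    linarith

theorem card_le_mul_of_orthonormal (hU : Uᵀ * U = 1) {μ : ℝ} (hUi : ∀ i, ∑ k, U i k ^ 2 ≤ μ) :
    (r : ℝ) ≤ n1 * μ := by
  have h1 : (r : ℝ) = ∑ i, ∑ k, U i k ^ 2 := by
    have h2 : (Uᵀ * U).trace = r := by
      rw [hU, Matrix.trace_one, Fintype.card_fin]
    rw [← h2, Finset.sum_comm]
    simp [Matrix.trace, Matrix.mul_apply, sq]
  rw [h1]
  refine (Finset.sum_le_sum fun i _ => hUi i).trans_eq ?_
  simp

theorem clog_le_three_mul_log {n : ℕ} (hn : 1 < n) (hL : 1 ≤ Real.log n) :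
    (Nat.clog 2 n : ℝ) ≤ 3 * Real.log n := by
  have h1 := Nat.pow_pred_clog_lt_self one_lt_two hn
  have h2 : Real.log ((2 : ℝ) ^ (Nat.clog 2 n).pred) ≤ Real.log n := by
    refine Real.log_le_log (by positivity) ?_
    exact_mod_cast h1.le
  rw [Real.log_pow] at h2
  have h3 : (Nat.clog 2 n : ℝ) ≤ (Nat.clog 2 n).pred + 1 := by
    exact_mod_cast (by rw [Nat.pred_eq_sub_one]; omega :
      Nat.clog 2 n ≤ (Nat.clog 2 n).pred + 1)
  have h4 := Real.log_two_gt_d9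
  have h5 : (0 : ℝ) ≤ ((Nat.clog 2 n).pred : ℝ) := Nat.cast_nonneg _
  nlinarith

/-- Failure to find a dual certificate in terms of the two failure events. -/
theorem unifProb_not_golf_or_sign_le (hU : Uᵀ * U = 1) (hV : Vᵀ * V = 1) {μ : ℝ} (hμ : 0 < μ)
    (hUi : ∀ i, ∑ k, U i k ^ 2 ≤ μ) (hVj : ∀ j, ∑ k, V j k ^ 2 ≤ μ) (hn : n2 ≤ n1)
    {m : ℕ} (hm : 2 * m ≤ n1 * n2) {K : ℕ} (hK : 0 < K) {β : ℝ} (hβ : 0 < β)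
    (hβle : ∀ i j, |(U * Vᵀ) i j| ≤ β) :
    unifProb (fun ω : SampleSpace n1 n2 m =>
      ¬ ((∃ g : Fin K → Fin n1 × Fin n2 → Fin (8 * K),
          GolfSuccess U V g (U * Vᵀ) β ∧ Disjoint (sampled g) ω.1.1) ∧
        SignSuccess U V ω.1.1 ω.2)) ≤
      2 * (K * golfError n1 n2 (8 * K) μ) +
        unifProb (fun ω : SampleSpace n1 n2 m => ¬ SignSuccess U V ω.1.1 ω.2) := by
  have hZT : tangentProj U V (U * Vᵀ) = U * Vᵀ :=
    tangentProj_of_memT hU hV ⟨V, 0, by simp⟩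
  have hgolf := unifProb_not_golfSuccess_le hU hV hμ hUi hVj hn (show 0 < 8 * K by omega) K hZT hβ
    hβle
  have h1 := unifProb_not_exists_disjoint_le
    (fun g : Fin K → Fin n1 × Fin n2 → Fin (8 * K) => sampled g)
    (exists_equiv_mem_sampled K (8 * K)) m (fun g => GolfSuccess U V g (U * Vᵀ) β)
    (half_le_unifProb_card_sampled hK (by simpa using hm))
  have h2 : unifProb (fun ω : SampleSpace n1 n2 m =>
      ¬ ∃ g : Fin K → Fin n1 × Fin n2 → Fin (8 * K),
          GolfSuccess U V g (U * Vᵀ) β ∧ Disjoint (sampled g) ω.1.1) ≤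
      2 * (K * golfError n1 n2 (8 * K) μ) := by
    refine (unifProb_prod_le (B := fun Ω : {Ω : Finset (Fin n1 × Fin n2) // Ω.card = m} =>
      ¬ ∃ g : Fin K → Fin n1 × Fin n2 → Fin (8 * K),
          GolfSuccess U V g (U * Vᵀ) β ∧ Disjoint (sampled g) Ω.1) le_rfl
        fun Ω hΩ => ?_).trans ?_
    · simp [unifProb, hΩ]
    · rw [add_zero]
      exact h1.trans (mul_le_mul_of_nonneg_left hgolf (by norm_num))
  refine le_trans (unifProb_mono fun ω hω => ?_)
    ((unifProb_or_le _ _).trans (add_le_add h2 le_rfl))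
  exact not_and_or.mp hω

theorem exp_neg_le_inv_pow {n : ℕ} (hn : 0 < n) {x : ℝ} (hx : 20 * Real.log n ≤ x) :
    Real.exp (-x) ≤ ((n : ℝ) ^ 20)⁻¹ := by
  have hn' : (0 : ℝ) < n := by exact_mod_cast hn
  rw [Real.exp_neg]
  refine inv_anti₀ (by positivity) ?_
  calc (n : ℝ) ^ 20 = Real.exp (20 * Real.log n) := by
        rw [mul_comm, Real.exp_mul, Real.exp_log hn']
        norm_cast
    _ ≤ Real.exp x := Real.exp_le_exp.mpr hx

theorem exp_neg_natCast_le {n : ℕ} (hn : 0 < n) :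
    Real.exp (-(n : ℝ)) ≤ 479001600 * ((n : ℝ) ^ 12)⁻¹ := by
  have hn' : (0 : ℝ) < n := by exact_mod_cast hn
  have h := Real.pow_div_factorial_le_exp (n : ℝ) hn'.le 12
  have hf : ((Nat.factorial 12 : ℕ) : ℝ) = 479001600 := by
    norm_num [Nat.factorial]
  rw [hf] at h
  rw [Real.exp_neg, inv_le_comm₀ (Real.exp_pos _) (by positivity), mul_inv, inv_inv]
  linarith

theorem pow_mul_inv_pow_le {x : ℝ} (hx : 1 ≤ x) {k l : ℕ} (h : k + 10 ≤ l) :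
    x ^ k * (x ^ l)⁻¹ ≤ (x ^ 10)⁻¹ := by
  have hx0 : 0 < x := by linarith
  rw [← div_eq_mul_inv, div_le_iff₀ (by positivity), inv_mul_eq_div, le_div_iff₀ (by positivity),
    ← pow_add]
  exact pow_le_pow_right₀ hx h

/-- The sum of all failure probabilities is of order `n1 ^ (-10)`. -/
theorem failure_sum_le (hn1 : 0 < n1) (hn : n2 ≤ n1) {K : ℕ} {μ : ℝ} (hμ : 0 < μ)
    (hL : 1 ≤ Real.log n1) (hK : (K : ℝ) ≤ 3 * Real.log n1) (hK0 : 0 < K) (hr : (r : ℝ) ≤ n1)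
    (hμL : μ * Real.log n1 ^ 2 ≤ 1 / 10000000000) :
    2 * (K * golfError n1 n2 (8 * K) μ) +
      ((n1 + n2) * (r * Real.exp (-(1 / (8000000 * μ)))) +
        (n1 * n2 * (2 * Real.exp (-(1 / (256 * μ)))) + Real.exp (-(n1 : ℝ))) +
          Real.exp (-(n1 : ℝ))) ≤ 3832012816 * ((n1 : ℝ) ^ 10)⁻¹ := by
  set L := Real.log n1 with hLdef
  have hN : (1 : ℝ) ≤ n1 := by exact_mod_cast hn1
  have hN0 : (0 : ℝ) ≤ n1 := by linarith
  have hn' : (n2 : ℝ) ≤ n1 := by exact_mod_cast hn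
  have hn20 : (0 : ℝ) ≤ n2 := Nat.cast_nonneg _
  have hKpos : (0 : ℝ) < K := by exact_mod_cast hK0
  have hLn : L ≤ n1 := (Real.log_le_sub_one_of_pos (by linarith)).trans (by linarith)
  have hμL1 : μ * L ≤ 1 / 10000000000 := by nlinarith [mul_pos hμ (by linarith : 0 < L)]
  have e1 := exp_neg_le_inv_pow hn1 (x := 1 / (32 * (((8 * K : ℕ) : ℝ) * μ))) (by
    rw [le_div_iff₀ (by push_cast; positivity)]
    push_cast
    have h1 : (K : ℝ) * (L * μ) ≤ 3 * L * (L * μ) :=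
      mul_le_mul_of_nonneg_right hK (by positivity)
    nlinarith)
  have e2 := exp_neg_le_inv_pow hn1 (x := 1 / (8000000 * μ)) (by
    rw [le_div_iff₀ (by positivity)]
    nlinarith)
  have e3 := exp_neg_le_inv_pow hn1 (x := 1 / (256 * μ)) (by
    rw [le_div_iff₀ (by positivity)]
    nlinarith)
  have e4 := exp_neg_natCast_le hn1
  set δ := ((n1 : ℝ) ^ 10)⁻¹ with hδ
  set e20 := ((n1 : ℝ) ^ 20)⁻¹ with he20
  set e12 := ((n1 : ℝ) ^ 12)⁻¹ with he12
  have he20' : 0 ≤ e20 := by positivity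
  have he12' : 0 ≤ e12 := by positivity
  have p3 : (n1 : ℝ) ^ 3 * e20 ≤ δ := pow_mul_inv_pow_le hN (by norm_num)
  have p2 : (n1 : ℝ) ^ 2 * e20 ≤ δ := pow_mul_inv_pow_le hN (by norm_num)
  have p1 : (n1 : ℝ) ^ 1 * e12 ≤ δ := pow_mul_inv_pow_le hN (by norm_num)
  have p0 : (n1 : ℝ) ^ 0 * e12 ≤ δ := pow_mul_inv_pow_le hN (by norm_num)
  have hNN : (n1 : ℝ) * n2 ≤ n1 ^ 2 := by nlinarith
  have q1 : (n1 : ℝ) * n2 * (2 * Real.exp (-(1 / (32 * (((8 * K : ℕ) : ℝ) * μ))))) ≤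
      n1 ^ 2 * (2 * e20) :=
    mul_le_mul hNN (by linarith) (by positivity) (by positivity)
  have q2 : (n1 : ℝ) * n2 * (2 * Real.exp (-(1 / (256 * μ)))) ≤ n1 ^ 2 * (2 * e20) :=
    mul_le_mul hNN (by linarith) (by positivity) (by positivity)
  have q3 : ((n1 : ℝ) + n2) * (r * Real.exp (-(1 / (8000000 * μ)))) ≤ 2 * n1 * (n1 * e20) :=
    mul_le_mul (by linarith) (mul_le_mul hr e2 (by positivity) hN0) (by positivity) (by positivity)
  have q4 : (K : ℝ) * golfError n1 n2 (8 * K) μ ≤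
      3 * n1 * (n1 ^ 2 * (2 * e20) + 479001600 * e12) := by
    refine mul_le_mul (by linarith) (add_le_add q1 e4) (golfError_nonneg _ _ _ _) (by positivity)
  nlinarith

end Assembly

/-- existence of a dual certificate (W, F, H) with
UVᵀ + W = λ(sign(S0) + F + P_Ω H), W ∈ T⊥, ‖W‖ ≤ 1/2, P_Ω F = 0, ‖F‖_∞ ≤ 1/2,
‖P_Ω H‖_F ≤ 1/(260√2), with probability ≥ 1 − c·n1⁻¹⁰. -/
theorem dual_certificate_existence :
    ∃ ρr ρs c : ℝ, 0 < ρr ∧ ρr ≤ 1 / 10 ∧ 0 < ρs ∧ 0 < c ∧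
      ∀ (n1 n2 r m : ℕ) (ν : ℝ), 0 < n2 → n2 ≤ n1 → 0 < ν →
        ∀ (U : Matrix (Fin n1) (Fin r) ℝ) (V : Matrix (Fin n2) (Fin r) ℝ)
          (σ : Fin r → ℝ) (a : Fin n1 × Fin n2 → ℝ),
          Uᵀ * U = 1 → Vᵀ * V = 1 → (∀ k, 0 < σ k) → (∀ p, 0 < a p) →
          (∀ i : Fin n1, (∑ k, U i k ^ 2) ≤ ν * r / n1) →
          (∀ j : Fin n2, (∑ k, V j k ^ 2) ≤ ν * r / n2) →
          (∀ i j, |∑ k, U i k * V j k| ≤ Real.sqrt (ν * r / (n1 * n2))) →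
          (r : ℝ) ≤ ρr * n2 * ν⁻¹ * ((Real.log n1) ^ 2)⁻¹ →
          (m : ℝ) ≤ ρs * n1 * n2 →
          1 - c * ((n1 : ℝ) ^ 10)⁻¹ ≤
            unifProb (fun ω : SampleSpace n1 n2 m =>
              ∃ W F H : Matrix (Fin n1) (Fin n2) ℝ,
                U * Vᵀ + W =
                    (Real.sqrt n1)⁻¹ • (signM (sparseOf a ω) + F + projS ω.1.1 H) ∧
                memTperp U V W ∧ spec W ≤ 1 / 2 ∧
                projS ω.1.1 F = 0 ∧ (∀ i j, |F i j| ≤ 1 / 2) ∧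
                frob (projS ω.1.1 H) ≤ 1 / (260 * Real.sqrt 2)) := by
  have hsr : 0 < sparseRate := by
    unfold sparseRate
    norm_num
  set ρ : ℝ := min (sparseRate * Real.exp (-(1 / (2 * sparseRate ^ 2)))) (1 / 32000000) with hρdef
  have hρ0 : 0 < ρ := lt_min (by positivity) (by norm_num)
  have hρτ : ρ ≤ 1 / 32000000 := min_le_right _ _
  refine ⟨1 / 10000000000, ρ, 3832012816, by norm_num, by norm_num, hρ0, by norm_num, ?_⟩
  intro n1 n2 r m ν hn2 hn hν U V _ a hU hV _ ha hUν hVν hUV hr hm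
  have hn1 : 0 < n1 := by omega
  have hn1R : (0 : ℝ) < n1 := by exact_mod_cast hn1
  have hn2R : (0 : ℝ) < n2 := by exact_mod_cast hn2
  rcases Nat.lt_or_ge n1 3 with hsmall | hlarge
  · refine le_trans ?_ (unifProb_nonneg _)
    have h1 : (n1 : ℝ) ^ 10 ≤ 2 ^ 10 :=
      pow_le_pow_left₀ hn1R.le (by exact_mod_cast (by omega : n1 ≤ 2)) 10
    rw [sub_nonpos, ← div_eq_mul_inv, le_div_iff₀ (by positivity)]
    linarith
  set L := Real.log n1 with hLdef
  have hL : 1 ≤ L := by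
    rw [hLdef, Real.le_log_iff_exp_le hn1R]
    have : (3 : ℝ) ≤ n1 := by exact_mod_cast hlarge
    linarith [Real.exp_one_lt_three]
  set μ : ℝ := 1 / 10000000000 / L ^ 2 with hμdef
  have hμ : 0 < μ := by positivity
  have hμL : μ * L ^ 2 = 1 / 10000000000 := by
    rw [hμdef]
    field_simp
  have hVμ : ν * r / n2 ≤ μ := by
    rw [div_le_iff₀ hn2R]
    have h1 := mul_le_mul_of_nonneg_left hr hν.le
    refine h1.trans_eq ?_
    rw [hμdef]
    field_simp
  have hUμ : ν * r / n1 ≤ μ :=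
    (div_le_div_of_nonneg_left (by positivity) hn2R (by exact_mod_cast hn)).trans hVμ
  have hUi : ∀ i, ∑ k, U i k ^ 2 ≤ μ := fun i => (hUν i).trans hUμ
  have hVj : ∀ j, ∑ k, V j k ^ 2 ≤ μ := fun j => (hVν j).trans hVμ
  have hβle : ∀ i j, |(U * Vᵀ) i j| ≤ Real.sqrt (μ / n1) := by
    intro i j
    rw [Matrix.mul_apply]
    refine (hUV i j).trans (Real.sqrt_le_sqrt ?_)
    rw [mul_comm (n1 : ℝ), ← div_div]
    exact div_le_div_of_nonneg_right hVμ hn1R.le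
  have hμ1 : μ ≤ 1 := by nlinarith
  have hrn : (r : ℝ) ≤ n1 := by
    have h1 := card_le_mul_of_orthonormal hU hUi
    nlinarith
  have hm' : (m : ℝ) ≤ ρ * (n1 * n2) := by linarith
  have hm2 : 2 * m ≤ n1 * n2 := by
    have h1 : (0 : ℝ) < n1 * n2 := by positivity
    have h2 : (2 : ℝ) * m ≤ n1 * n2 := by nlinarith
    exact_mod_cast h2
  set K := Nat.clog 2 n1 with hKdef
  have hK0 : 0 < K := Nat.clog_pos one_lt_two (by omega)
  have hK2 : n1 ≤ 2 ^ K := Nat.le_pow_clog one_lt_two n1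
  have hKL : (K : ℝ) ≤ 3 * L := clog_le_three_mul_log (by omega) hL
  have hQμ : ((8 * K : ℕ) : ℝ) * Real.sqrt μ ≤ 1 / 1000 := by
    have h1 : Real.sqrt μ ≤ 1 / 100000 / L := by
      refine Real.sqrt_le_iff.mpr ⟨by positivity, le_of_eq ?_⟩
      rw [hμdef]
      field_simp
      norm_num
    have h2 : ((8 * K : ℕ) : ℝ) ≤ 24 * L := by
      push_cast
      linarith
    calc ((8 * K : ℕ) : ℝ) * Real.sqrt μ ≤ 24 * L * (1 / 100000 / L) :=
          mul_le_mul h2 h1 (Real.sqrt_nonneg _) (by positivity)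
      _ = 24 / 100000 := by
          field_simp
      _ ≤ 1 / 1000 := by norm_num
  have hne : Nonempty (SampleSpace n1 n2 m) := by
    obtain ⟨S, -, hS⟩ := Finset.exists_subset_card_eq
      (s := (Finset.univ : Finset (Fin n1 × Fin n2))) (n := m) (by simp; omega)
    exact ⟨⟨⟨S, hS⟩, fun _ => true⟩⟩
  have hβ0 : 0 < Real.sqrt (μ / n1) := Real.sqrt_pos.mpr (by positivity)
  have hfail := (unifProb_not_golf_or_sign_le hU hV hμ hUi hVj hn hm2 hK0 hβ0 hβle).trans
    ((add_le_add le_rfl (unifProb_not_signSuccess_le hU hV hμ hUi hVj hn hρ0.le (by linarith)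
      (min_le_left _ _) hρτ hm')).trans
      (failure_sum_le hn1 hn hμ hL hKL hK0 hrn hμL.le))
  rw [unifProb_not]
  refine sub_le_sub_left (le_trans (unifProb_mono fun ω hω hgood => hω ?_) hfail) 1
  obtain ⟨⟨g, hg, hdisj⟩, hsign⟩ := hgood
  rw [signM_sparseOf ha ω]
  exact exists_certificate hU hV hμ hn1 hn hK2 (by omega) hQμ hg hdisj hsign
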